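/- Fix an integer r ≥ 4 and a constant ε > 0. Let 𝒢_r(n) be the set of simple r-regular graphs on vertex set {1,…,n} (rn even), and let 𝒢′_r(n) ⊆ 𝒢_r(n) be the subset of graphs G satisfying both: (P1) G is connected and the second-largest eigenvalue of the adjacency matrix of G is at most 2√(r−1)+ε; and (P2) for every s ≤ log n, no set of s vertices of G induces more than s + ⌈2s·log(re)/log n⌉ edges. Then |𝒢′_r(n)|/|𝒢_r(n)| → 1 as n → ∞. -/

import Mathlib

open scoped Classical

-- Property (P1): `G` is connected and the second-largest eigenvalue of its adjacency
-- matrix (i.e. the largest eigenvalue other than `r`, which for a connected `r`-regular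
-- graph is the simple top eigenvalue) is at most `2√(r−1) + ε`.
noncomputable def PropP1 {n : ℕ} (r : ℕ) (ε : ℝ) (G : SimpleGraph (Fin n)) : Prop :=
  G.Connected ∧
    sSup {μ : ℝ | μ ∈ spectrum ℝ (G.adjMatrix ℝ) ∧ μ ≠ (r : ℝ)} ≤
      2 * Real.sqrt ((r : ℝ) - 1) + ε

-- Property (P2): for every `s ≤ log n`, no set of `s` vertices induces more than
-- `s + ⌈2s·log(re)/log n⌉` edges.
def PropP2 {n : ℕ} (r : ℕ) (G : SimpleGraph (Fin n)) : Prop :=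
  ∀ s : ℕ, (s : ℝ) ≤ Real.log n →
    ∀ U : Finset (Fin n), U.card = s →
      Set.ncard {e : Sym2 (Fin n) | e ∈ G.edgeSet ∧ ∀ x ∈ e, x ∈ U} ≤
        s + ⌈2 * (s : ℝ) * Real.log ((r : ℝ) * Real.exp 1) / Real.log n⌉₊

/-!
Simple `r`-regular graphs are sampled through the configuration model, a uniformly random perfect
matching of the half-edges `Fin n × Fin r`. Every simple `r`-regular graph comes from exactly
`(r!) ^ n` matchings, and repeatedly switching away loops and multiple edges shows that the matching
yields a simple graph with probability bounded below. It therefore suffices that (P1) and (P2) fail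
with probability tending to `0` for the random multigraph.

For (P2) this is a first moment count over small vertex sets. For (P1) it is the polynomial method
of Chen, Garza-Vargas, Tropp and van Handel. For a polynomial `p` of degree at most `q`, the
Ihara–Bass formula expresses the trace of `p` of the adjacency matrix `A` through closed
non-backtracking walks, so that `𝔼 tr p(A) = n μ + P(1 / n) / g(1 / n)`, where `μ` is the mean of
`p` under the spectral density of the `r`-regular tree, supported on `[-2√(r - 1), 2√(r - 1)]`, and
`P`, `g` are polynomials of degree at most `q` with `g(0) = 1`. As `A` has spectrum in `[-r, r]`,
the trace is trivially of size at most `n`; by Markov's inequality for polynomials this already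
makes `P` Lipschitz near `0` up to powers of `q`. In `P(0)` only the walks around a single cycle
survive, and it differs from `p(r)` by little more than the size of `p` on the spectrum of the tree.
Choosing for `p` a polynomial step function of degree of order `log n` that is tiny below
`2√(r - 1)` and close to `1` above `2√(r - 1) + ε`, the expected trace exceeds the contribution
`p(r)` of the constant eigenvector by only `o(1)`, which bounds the probability of a further large
eigenvalue.
-/

namespace RandomRegular

section ChebyshevExpansion

open Polynomial Polynomial.Chebyshev MeasureTheory

variable {q : ℕ} {p : ℝ[X]} {K : ℝ}

lemma exists_eq_sum_C_mul_T (hp : p.natDegree ≤ q) :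
    ∃ c : ℕ → ℝ, p = ∑ k ∈ Finset.range (q + 1), Polynomial.C (c k) * T ℝ (k : ℤ) := by
  have hmem : p ∈ degreeLT ℝ (q + 1) := by
    rw [mem_degreeLT]
    exact degree_le_natDegree.trans_lt (by exact_mod_cast Nat.lt_succ_of_le hp)
  rw [← Sequence.span_degreeLT (chebyshevTsequence ℝ) (by simp),
    show Set.Iio (q + 1) = Finset.range (q + 1) by simp,
    Submodule.mem_span_image_finset_iff_exists_fun'] at hmem
  obtain ⟨c, hc⟩ := hmem
  refine ⟨c, hc.symm.trans (Finset.sum_congr rfl fun i _ => ?_)⟩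
  rw [smul_eq_C_mul]
  rfl

lemma integral_eval_sum_C_mul_T_mul_eval_T (c : ℕ → ℝ) {k : ℕ} (hk : k ≤ q) :
    ∫ x, (∑ i ∈ Finset.range (q + 1), Polynomial.C (c i) * T ℝ (i : ℤ)).eval x *
        (T ℝ (k : ℤ)).eval x ∂measureT =
      c k * ∫ x, (T ℝ (k : ℤ)).eval x * (T ℝ (k : ℤ)).eval x ∂measureT := by
  simp_rw [eval_finsetSum, Finset.sum_mul, eval_mul, eval_C, mul_assoc]
  rw [integral_finsetSum _ fun i _ => integrable_measureT (by fun_prop)]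
  simp_rw [integral_const_mul]
  refine Finset.sum_eq_single_of_mem k (Finset.mem_range.mpr (Nat.lt_succ_of_le hk)) ?_
  intro i _ hik
  rw [integral_eval_T_real_mul_eval_T_real_measureT_of_ne hik, mul_zero]

lemma abs_integral_eval_mul_eval_T_le (hK : ∀ x : ℝ, |x| ≤ 1 → |p.eval x| ≤ K) (k : ℤ) :
    |∫ x, p.eval x * (T ℝ k).eval x ∂measureT| ≤ K * Real.pi := by
  have hcos : ∀ θ ∈ Set.uIoc 0 Real.pi,
      ‖p.eval (Real.cos θ) * (T ℝ k).eval (Real.cos θ)‖ ≤ K := by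
    intro θ _
    have hpθ := hK _ (Real.abs_cos_le_one θ)
    have hTθ := abs_eval_T_real_le_one k (Real.abs_cos_le_one θ)
    rw [Real.norm_eq_abs, abs_mul]
    exact (mul_le_of_le_one_right (abs_nonneg _) hTθ).trans hpθ
  rw [integral_measureT_eq_integral_cos]
  simpa [abs_of_pos Real.pi_pos] using intervalIntegral.norm_integral_le_of_norm_le_const hcos

lemma exists_eq_sum_C_mul_T_abs_le (hp : p.natDegree ≤ q)
    (hK : ∀ x : ℝ, |x| ≤ 1 → |p.eval x| ≤ K) :
    ∃ c : ℕ → ℝ, p = ∑ k ∈ Finset.range (q + 1), Polynomial.C (c k) * T ℝ (k : ℤ) ∧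
      ∀ k ≤ q, |c k| ≤ 2 * K := by
  obtain ⟨c, hc⟩ := exists_eq_sum_C_mul_T hp
  refine ⟨c, hc, fun k hk => ?_⟩
  have hK0 : 0 ≤ K := (abs_nonneg _).trans (hK 0 (by simp))
  have hcoeff := abs_integral_eval_mul_eval_T_le hK k
  rw [hc, integral_eval_sum_C_mul_T_mul_eval_T c hk, abs_mul] at hcoeff
  obtain rfl | hk0 := eq_or_ne k 0
  · rw [Nat.cast_zero, integral_eval_T_real_mul_self_measureT_zero,
      abs_of_pos Real.pi_pos] at hcoeff
    linarith [le_of_mul_le_mul_right hcoeff Real.pi_pos]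
  · rw [integral_T_real_mul_self_measureT_of_ne_zero hk0, abs_of_pos (half_pos Real.pi_pos)]
      at hcoeff
    exact le_of_mul_le_mul_right (by linarith) (half_pos Real.pi_pos)

end ChebyshevExpansion

section Markov

open Polynomial Polynomial.Chebyshev

variable {q : ℕ} {p : ℝ[X]} {K : ℝ}

lemma abs_eval_derivative_T_le (k : ℕ) {x : ℝ} (hx : |x| ≤ 1) :
    |(derivative (T ℝ (k : ℤ))).eval x| ≤ (k : ℝ) ^ 2 := by
  simpa [derivative_T_eval_one] using abs_iterate_derivative_T_real_le (k : ℤ) 1 hx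

-- Markov's inequality holds with the sharp constant `q ^ 2`; any polynomial factor suffices here.
lemma abs_eval_derivative_le_of_abs_le_one (hp : p.natDegree ≤ q)
    (hK : ∀ x : ℝ, |x| ≤ 1 → |p.eval x| ≤ K) {x : ℝ} (hx : |x| ≤ 1) :
    |(derivative p).eval x| ≤ 2 * K * (q + 1 : ℝ) ^ 3 := by
  obtain ⟨c, hc, hcK⟩ := exists_eq_sum_C_mul_T_abs_le hp hK
  have hterm : ∀ k ∈ Finset.range (q + 1),
      |(derivative (Polynomial.C (c k) * T ℝ (k : ℤ))).eval x| ≤ 2 * K * (q + 1 : ℝ) ^ 2 := by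
    intro k hk
    have hkq : k ≤ q := Finset.mem_range_succ_iff.mp hk
    have hkq' : (k : ℝ) ≤ q + 1 := by exact_mod_cast hkq.trans q.le_succ
    rw [derivative_C_mul, eval_mul, eval_C, abs_mul]
    exact mul_le_mul (hcK k hkq)
      ((abs_eval_derivative_T_le k hx).trans (pow_le_pow_left₀ k.cast_nonneg hkq' 2))
      (abs_nonneg _) ((abs_nonneg _).trans (hcK k hkq))
  calc |(derivative p).eval x|
      ≤ ∑ k ∈ Finset.range (q + 1),
          |(derivative (Polynomial.C (c k) * T ℝ (k : ℤ))).eval x| := by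
        rw [hc, derivative_sum, eval_finsetSum]
        exact Finset.abs_sum_le_sum_abs _ _
    _ ≤ ∑ _k ∈ Finset.range (q + 1), 2 * K * (q + 1 : ℝ) ^ 2 := Finset.sum_le_sum hterm
    _ = 2 * K * (q + 1 : ℝ) ^ 3 := by
        rw [Finset.sum_const, Finset.card_range, nsmul_eq_mul]
        push_cast
        ring

lemma abs_eval_derivative_le_of_mem_Icc {a b : ℝ} (hab : a < b) (hp : p.natDegree ≤ q)
    (hK : ∀ x ∈ Set.Icc a b, |p.eval x| ≤ K) {x : ℝ} (hx : x ∈ Set.Icc a b) :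
    |(derivative p).eval x| ≤ 4 / (b - a) * K * (q + 1 : ℝ) ^ 3 := by
  have hlen : 0 < b - a := sub_pos.mpr hab
  set l : ℝ[X] := Polynomial.C ((b - a) / 2) * X + Polynomial.C ((a + b) / 2) with hl
  have hl_eval (y : ℝ) : l.eval y = (b - a) / 2 * y + (a + b) / 2 := by simp [hl]
  have hdeg : (p.comp l).natDegree ≤ q := by
    rw [natDegree_comp]
    exact (Nat.mul_le_mul hp natDegree_linear_le).trans_eq (mul_one q)
  have hbound : ∀ y : ℝ, |y| ≤ 1 → |(p.comp l).eval y| ≤ K := by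
    intro y hy
    rw [abs_le] at hy
    rw [eval_comp, hl_eval]
    exact hK _ ⟨by nlinarith, by nlinarith⟩
  set y := (2 * x - a - b) / (b - a) with hy
  have hy1 : |y| ≤ 1 := by
    rw [hy, abs_div, abs_of_pos hlen, div_le_one hlen, abs_le]
    constructor <;> linarith [hx.1, hx.2]
  have hly : l.eval y = x := by
    rw [hl_eval, hy]
    field_simp
    ring
  have hmarkov := abs_eval_derivative_le_of_abs_le_one hdeg hbound hy1
  rw [derivative_comp, eval_mul, eval_comp, hly, show (derivative l).eval y = (b - a) / 2 by
    simp [hl], abs_mul, abs_of_pos (half_pos hlen)] at hmarkov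
  calc |(derivative p).eval x| = 2 / (b - a) * ((b - a) / 2 * |(derivative p).eval x|) := by
        field_simp
    _ ≤ 2 / (b - a) * (2 * K * (q + 1 : ℝ) ^ 3) := by gcongr
    _ = 4 / (b - a) * K * (q + 1 : ℝ) ^ 3 := by ring

lemma abs_eval_sub_eval_le {a b D : ℝ} (hD : ∀ x ∈ Set.Icc a b, |(derivative p).eval x| ≤ D)
    {x y : ℝ} (hx : x ∈ Set.Icc a b) (hy : y ∈ Set.Icc a b) :
    |p.eval x - p.eval y| ≤ D * |x - y| := by
  simpa using Convex.norm_image_sub_le_of_norm_deriv_le (f := fun x => p.eval x)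
    (fun z _ => p.differentiableAt) (fun z hz => by simpa using hD z hz) (convex_Icc a b) hy hx

end Markov

section ReciprocalNodes

open Polynomial

lemma exists_abs_sub_one_div_two_mul_le {L : ℕ} (hL : 1 ≤ L) {x : ℝ}
    (hx : x ∈ Set.Icc (0 : ℝ) (1 / (2 * L))) :
    ∃ j : ℕ, L ≤ j ∧ j ≤ L ^ 2 ∧ |x - 1 / (2 * j)| ≤ 1 / (2 * (L : ℝ) ^ 2) := by
  obtain ⟨hx0, hxL⟩ := hx
  have hL0 : (0 : ℝ) < L := by exact_mod_cast hL
  rcases le_or_gt x (1 / (2 * (L : ℝ) ^ 2)) with hsmall | hlarge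
  · refine ⟨L ^ 2, by nlinarith, le_rfl, ?_⟩
    push_cast
    rw [abs_le]
    constructor <;> linarith
  · have hxpos : 0 < x := lt_trans (by positivity) hlarge
    set j := ⌊1 / (2 * x)⌋₊
    have hjle : (j : ℝ) ≤ 1 / (2 * x) := Nat.floor_le (by positivity)
    have hltj : 1 / (2 * x) < j + 1 := Nat.lt_floor_add_one _
    have hLj : L ≤ j := Nat.le_floor <| by
      rw [le_div_iff₀ (by positivity)] at hxL ⊢
      linarith
    have hLj' : (L : ℝ) ≤ j := by exact_mod_cast hLj
    have hjpos : (0 : ℝ) < j := hL0.trans_le hLj'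
    refine ⟨j, hLj, ?_, ?_⟩
    · have : (j : ℝ) ≤ (L : ℝ) ^ 2 := hjle.trans <| by
        rw [div_lt_iff₀ (by positivity)] at hlarge
        rw [div_le_iff₀ (by positivity)]
        linarith
      exact_mod_cast this
    · have hxj : x ≤ 1 / (2 * j) := by
        rw [le_div_iff₀ (by positivity)] at hjle ⊢
        linarith
      have hjx : 1 / (2 * ((j : ℝ) + 1)) ≤ x := by
        rw [div_lt_iff₀ (by positivity)] at hltj
        rw [div_le_iff₀ (by positivity)]
        linarith
      have hgap : 1 / (2 * (j : ℝ)) - 1 / (2 * ((j : ℝ) + 1)) ≤ 1 / (2 * (L : ℝ) ^ 2) := by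
        rw [show 1 / (2 * (j : ℝ)) - 1 / (2 * ((j : ℝ) + 1)) = 1 / (2 * (j * (j + 1))) by
          field_simp; ring]
        exact one_div_le_one_div_of_le (by positivity) (by nlinarith)
      rw [abs_of_nonpos (by linarith)]
      linarith

variable {q L : ℕ} {p : ℝ[X]} {B : ℝ}

-- The nodes are dense enough that, by Markov, the maximum of `|p|` is at most doubled off them.
lemma abs_eval_le_of_abs_eval_one_div_two_mul_le (hp : p.natDegree ≤ q)
    (hL : 8 * (q + 1) ^ 3 ≤ L)
    (hB : ∀ j : ℕ, L ≤ j → j ≤ L ^ 2 → |p.eval (1 / (2 * (j : ℝ)))| ≤ B) :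
    ∀ x ∈ Set.Icc (0 : ℝ) (1 / (2 * L)), |p.eval x| ≤ 2 * B := by
  have hL' : 8 * (q + 1 : ℝ) ^ 3 ≤ L := by exact_mod_cast hL
  have hL0 : (0 : ℝ) < L := lt_of_lt_of_le (by positivity) hL'
  have hb : (0 : ℝ) < 1 / (2 * L) := by positivity
  obtain ⟨x₀, hx₀, hmax⟩ := (isCompact_Icc (a := (0 : ℝ)) (b := 1 / (2 * L))).exists_isMaxOn
    ⟨0, Set.left_mem_Icc.mpr hb.le⟩ (f := fun x => |p.eval x|) (by fun_prop)
  set K := |p.eval x₀|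
  suffices hKB : K ≤ 2 * B from fun x hx => (hmax hx).trans hKB
  obtain ⟨j, hLj, hjL, hjx₀⟩ :=
    exists_abs_sub_one_div_two_mul_le (by exact_mod_cast hL0) hx₀
  have hLj' : (L : ℝ) ≤ j := by exact_mod_cast hLj
  have hjmem : 1 / (2 * (j : ℝ)) ∈ Set.Icc (0 : ℝ) (1 / (2 * L)) :=
    ⟨by positivity, one_div_le_one_div_of_le (by positivity) (by linarith)⟩
  have hlip := abs_eval_sub_eval_le
    (fun x hx => abs_eval_derivative_le_of_mem_Icc hb hp hmax hx) hx₀ hjmem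
  have hhalf : |p.eval x₀ - p.eval (1 / (2 * (j : ℝ)))| ≤ K / 2 := by
    calc _ ≤ 4 / (1 / (2 * L) - 0) * K * (q + 1 : ℝ) ^ 3 * (1 / (2 * (L : ℝ) ^ 2)) := by
          refine hlip.trans ?_
          rw [sub_zero]
          gcongr
      _ = K * (4 * (q + 1 : ℝ) ^ 3) / L := by field_simp; ring
      _ ≤ K * (L / 2) / L := by gcongr; linarith
      _ = K / 2 := by field_simp
  have htriangle := abs_sub_abs_le_abs_sub (p.eval x₀) (p.eval (1 / (2 * (j : ℝ))))
  linarith [hB j hLj hjL]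

lemma abs_eval_sub_eval_zero_le_of_abs_eval_one_div_two_mul_le (hp : p.natDegree ≤ q)
    (hL : 8 * (q + 1) ^ 3 ≤ L)
    (hB : ∀ j : ℕ, L ≤ j → j ≤ L ^ 2 → |p.eval (1 / (2 * (j : ℝ)))| ≤ B) :
    ∀ x ∈ Set.Icc (0 : ℝ) (1 / (2 * L)),
      |p.eval x - p.eval 0| ≤ 16 * L * B * (q + 1 : ℝ) ^ 3 * x := by
  intro x hx
  have hL0 : (0 : ℝ) < L := by
    exact_mod_cast lt_of_lt_of_le (by positivity : 0 < 8 * (q + 1) ^ 3) hL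
  have hb : (0 : ℝ) < 1 / (2 * L) := by positivity
  have hlip := abs_eval_sub_eval_le
    (fun x hx => abs_eval_derivative_le_of_mem_Icc hb hp
      (abs_eval_le_of_abs_eval_one_div_two_mul_le hp hL hB) hx)
    hx (Set.left_mem_Icc.mpr hb.le)
  rw [sub_zero, sub_zero, abs_of_nonneg hx.1] at hlip
  refine hlip.trans_eq ?_
  field_simp
  ring

end ReciprocalNodes

section BernsteinStep

open Polynomial Finset

/-- The upper tail `P(Bin(N, x) ≥ t N)` of the binomial distribution, as a polynomial in `x`: a
smooth approximation of the step function jumping from `0` to `1` at `t`. -/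
noncomputable def bernsteinStep (N : ℕ) (t : ℝ) : ℝ[X] :=
  ∑ k ∈ range (N + 1) with t * N ≤ (k : ℕ), bernsteinPolynomial ℝ N k

lemma natDegree_bernsteinStep_le (N : ℕ) (t : ℝ) : (bernsteinStep N t).natDegree ≤ N := by
  refine natDegree_sum_le_of_forall_le _ _ fun k hk => ?_
  have hkN : k ≤ N := mem_range_succ_iff.mp (mem_filter.mp hk).1
  unfold bernsteinPolynomial
  compute_degree
  omega

lemma eval_bernsteinPolynomial (N k : ℕ) (s : ℝ) :
    (bernsteinPolynomial ℝ N k).eval s = N.choose k * s ^ k * (1 - s) ^ (N - k) := by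
  simp [bernsteinPolynomial]

lemma eval_bernsteinPolynomial_nonneg (N k : ℕ) {s : ℝ} (hs : s ∈ Set.Icc (0 : ℝ) 1) :
    0 ≤ (bernsteinPolynomial ℝ N k).eval s := by
  have h0 := hs.1
  have h1 : 0 ≤ 1 - s := sub_nonneg.mpr hs.2
  rw [eval_bernsteinPolynomial]
  positivity

lemma eval_bernsteinStep (N : ℕ) (t s : ℝ) :
    (bernsteinStep N t).eval s =
      ∑ k ∈ range (N + 1) with t * N ≤ (k : ℕ), (bernsteinPolynomial ℝ N k).eval s :=
  eval_finsetSum _ _ _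

lemma eval_bernsteinStep_add_sum (N : ℕ) (t s : ℝ) :
    (bernsteinStep N t).eval s +
      ∑ k ∈ range (N + 1) with ¬ t * N ≤ (k : ℕ), (bernsteinPolynomial ℝ N k).eval s = 1 := by
  rw [eval_bernsteinStep, sum_filter_add_sum_filter_not, ← eval_finsetSum,
    bernsteinPolynomial.sum, eval_one]

lemma eval_bernsteinStep_mem_Icc (N : ℕ) (t : ℝ) {s : ℝ} (hs : s ∈ Set.Icc (0 : ℝ) 1) :
    (bernsteinStep N t).eval s ∈ Set.Icc (0 : ℝ) 1 := by
  have hnonneg (k : ℕ) := eval_bernsteinPolynomial_nonneg N k hs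
  refine ⟨(eval_bernsteinStep N t s).symm ▸ sum_nonneg fun k _ => hnonneg k, ?_⟩
  linarith [eval_bernsteinStep_add_sum N t s,
    sum_nonneg fun k (_ : k ∈ {k ∈ range (N + 1) | ¬ t * N ≤ (k : ℕ)}) => hnonneg k]

lemma exp_le_one_add_add_sq {u : ℝ} (h0 : 0 ≤ u) (h1 : u ≤ 1) : Real.exp u ≤ 1 + u + u ^ 2 := by
  linarith [(abs_le.mp (Real.abs_exp_sub_one_sub_id_le (by rwa [abs_of_nonneg h0]))).2]

-- The exponential moment bound behind Chernoff's inequality.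
lemma eval_bernsteinStep_le_exp_mul (N : ℕ) {s : ℝ} (hs : s ∈ Set.Icc (0 : ℝ) 1) (t : ℝ) {u : ℝ}
    (hu : 0 ≤ u) :
    (bernsteinStep N t).eval s ≤ Real.exp (-(u * (t * N))) * (Real.exp u * s + (1 - s)) ^ N := by
  rw [eval_bernsteinStep, sum_filter, add_pow, mul_sum]
  refine sum_le_sum fun k _ => ?_
  have hweight : Real.exp (-(u * (t * N))) *
      ((Real.exp u * s) ^ k * (1 - s) ^ (N - k) * (N.choose k : ℝ)) =
        Real.exp (u * (k - t * N)) * (bernsteinPolynomial ℝ N k).eval s := by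
    rw [eval_bernsteinPolynomial, mul_pow, ← Real.exp_nat_mul,
      show u * (k - t * N) = -(u * (t * N)) + k * u by ring, Real.exp_add]
    ring
  have hnonneg := eval_bernsteinPolynomial_nonneg N k hs
  rw [hweight]
  split_ifs with hk
  · exact le_mul_of_one_le_left hnonneg
      (Real.one_le_exp (mul_nonneg hu (sub_nonneg.mpr hk)))
  · positivity

lemma eval_bernsteinStep_le (N : ℕ) {s t d : ℝ} (hs : 0 ≤ s) (hd : 0 ≤ d) (hst : s ≤ t - d)
    (ht : t ≤ 1) :
    (bernsteinStep N t).eval s ≤ Real.exp (-(d / 2) ^ 2) ^ N := by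
  have hu0 : 0 ≤ d / 2 := by linarith
  have hmgf : Real.exp (d / 2) * s + (1 - s) ≤ Real.exp ((d / 2 + (d / 2) ^ 2) * (t - d)) := by
    have hexp := exp_le_one_add_add_sq hu0 (by linarith)
    calc Real.exp (d / 2) * s + (1 - s) = (Real.exp (d / 2) - 1) * s + 1 := by ring
      _ ≤ (d / 2 + (d / 2) ^ 2) * (t - d) + 1 := by
          gcongr
          linarith
      _ ≤ _ := Real.add_one_le_exp _
  have hbase : 0 ≤ Real.exp (d / 2) * s + (1 - s) := by
    have : 0 ≤ 1 - s := by linarith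
    positivity
  calc (bernsteinStep N t).eval s
      ≤ Real.exp (-(d / 2 * (t * N))) * (Real.exp (d / 2) * s + (1 - s)) ^ N :=
        eval_bernsteinStep_le_exp_mul N ⟨hs, by linarith⟩ t hu0
    _ ≤ Real.exp (-(d / 2 * (t * N))) * Real.exp ((d / 2 + (d / 2) ^ 2) * (t - d)) ^ N := by
        gcongr
    _ = Real.exp (-(d / 2 * t) + (d / 2 + (d / 2) ^ 2) * (t - d)) ^ N := by
        rw [← Real.exp_nat_mul, ← Real.exp_nat_mul, ← Real.exp_add]
        congr 1
        ring
    _ ≤ Real.exp (-(d / 2) ^ 2) ^ N := by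
        gcongr
        nlinarith

lemma one_sub_eval_bernsteinStep_le_eval_one_sub (N : ℕ) (t : ℝ) {s : ℝ}
    (hs : s ∈ Set.Icc (0 : ℝ) 1) :
    1 - (bernsteinStep N t).eval s ≤ (bernsteinStep N (1 - t)).eval (1 - s) := by
  have hs' : 1 - s ∈ Set.Icc (0 : ℝ) 1 := ⟨by linarith [hs.2], by linarith [hs.1]⟩
  rw [sub_eq_of_eq_add' (eval_bernsteinStep_add_sum N t s).symm, eval_bernsteinStep, sum_filter,
    sum_filter, ← sum_range_reflect]
  refine sum_le_sum fun k hk => ?_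
  have hkN : k ≤ N := mem_range_succ_iff.mp hk
  have hflip : (bernsteinPolynomial ℝ N (N - k)).eval s =
      (bernsteinPolynomial ℝ N k).eval (1 - s) := by
    rw [← bernsteinPolynomial.flip ℝ N k hkN]
    simp
  rw [Nat.add_sub_cancel, Nat.cast_sub hkN, hflip]
  have hnonneg := eval_bernsteinPolynomial_nonneg N k hs'
  split_ifs with hlow hhigh hhigh
  · exact hnonneg
  · exact le_rfl
  · exact le_rfl
  · exact absurd (by linarith) hhigh

lemma one_sub_le_eval_bernsteinStep (N : ℕ) {s t d : ℝ} (hs : s ≤ 1) (hd : 0 ≤ d)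
    (hst : t + d ≤ s) (ht : 0 ≤ t) :
    1 - Real.exp (-(d / 2) ^ 2) ^ N ≤ (bernsteinStep N t).eval s := by
  have htail := eval_bernsteinStep_le N (s := 1 - s) (t := 1 - t) (by linarith) hd
    (by linarith) (by linarith)
  linarith [one_sub_eval_bernsteinStep_le_eval_one_sub N t (s := s) ⟨by linarith, hs⟩]

lemma exists_polynomial_approx_step_unitInterval {a b : ℝ} (ha : 0 ≤ a) (hab : a < b)
    (hb : b ≤ 1) :
    ∃ θ ∈ Set.Ioo (0 : ℝ) 1, ∀ N : ℕ, ∃ p : ℝ[X], p.natDegree ≤ N ∧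
      (∀ x ∈ Set.Icc (0 : ℝ) 1, p.eval x ∈ Set.Icc (0 : ℝ) 1) ∧
      (∀ x ∈ Set.Icc b 1, 1 - θ ^ N ≤ p.eval x) ∧
      (∀ x ∈ Set.Icc 0 a, p.eval x ≤ θ ^ N) := by
  have hd : 0 < (b - a) / 2 := by linarith
  refine ⟨Real.exp (-((b - a) / 2 / 2) ^ 2),
    ⟨Real.exp_pos _, Real.exp_lt_one_iff.mpr (neg_neg_of_pos (by positivity))⟩,
    fun N => ⟨bernsteinStep N ((a + b) / 2), natDegree_bernsteinStep_le N _,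
      fun x hx => eval_bernsteinStep_mem_Icc N _ hx, fun x hx => ?_, fun x hx => ?_⟩⟩
  · exact one_sub_le_eval_bernsteinStep N hx.2 hd.le (by linarith [hx.1]) (by linarith)
  · exact eval_bernsteinStep_le N hx.1 hd.le (by linarith [hx.2]) (by linarith)

lemma exists_polynomial_approx_step {l a b u : ℝ} (hla : l ≤ a) (hab : a < b) (hbu : b ≤ u) :
    ∃ θ ∈ Set.Ioo (0 : ℝ) 1, ∀ N : ℕ, ∃ p : ℝ[X], p.natDegree ≤ N ∧
      (∀ x ∈ Set.Icc l u, p.eval x ∈ Set.Icc (0 : ℝ) 1) ∧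
      (∀ x ∈ Set.Icc b u, 1 - θ ^ N ≤ p.eval x) ∧
      (∀ x ∈ Set.Icc l a, p.eval x ≤ θ ^ N) := by
  have hlu : 0 < u - l := by linarith
  let rescale : ℝ[X] := C (1 / (u - l)) * X + C (-l / (u - l))
  have heval (x : ℝ) : rescale.eval x = (x - l) / (u - l) := by
    simp only [rescale, eval_add, eval_mul, eval_C, eval_X]
    ring
  have hmono {x y : ℝ} (hxy : x ≤ y) : (x - l) / (u - l) ≤ (y - l) / (u - l) := by gcongr
  have hmem {x y z : ℝ} (hx : x ∈ Set.Icc y z) :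
      rescale.eval x ∈ Set.Icc ((y - l) / (u - l)) ((z - l) / (u - l)) := by
    rw [heval]
    exact ⟨hmono hx.1, hmono hx.2⟩
  have hl : (l - l) / (u - l) = 0 := by simp
  have hu : (u - l) / (u - l) = 1 := div_self hlu.ne'
  obtain ⟨θ, hθ, hstep⟩ := exists_polynomial_approx_step_unitInterval
    (hl ▸ hmono hla) (div_lt_div_of_pos_right (sub_lt_sub_right hab l) hlu) (hu ▸ hmono hbu)
  refine ⟨θ, hθ, fun N => ?_⟩
  obtain ⟨p, hdeg, h01, hhigh, hlow⟩ := hstep N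
  refine ⟨p.comp rescale, ?_, fun x hx => ?_, fun x hx => ?_, fun x hx => ?_⟩
  · rw [natDegree_comp]
    exact (Nat.mul_le_mul hdeg natDegree_linear_le).trans_eq (mul_one N)
  · exact eval_comp (p := p) ▸ h01 _ (hl ▸ hu ▸ hmem hx)
  · exact eval_comp (p := p) ▸ hhigh _ (hu ▸ hmem hx)
  · exact eval_comp (p := p) ▸ hlow _ (hl ▸ hmem hx)

end BernsteinStep

section PerfectMatchings

open Finset

variable {H : Type*}

/-- A perfect matching of the set `H`, encoded as the fixed-point-free involution exchanging the
two ends of each pair. With `H = V × Fin r`, these are the pairings of half-edges of the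
configuration model. -/
structure IsPerfectMatching (σ : Equiv.Perm H) : Prop where
  apply_ne : ∀ x, σ x ≠ x
  apply_apply : ∀ x, σ (σ x) = x

lemma IsPerfectMatching.apply_eq_iff {σ : Equiv.Perm H} (hσ : IsPerfectMatching σ) {x y : H} :
    σ x = y ↔ x = σ y :=
  ⟨fun h => by rw [← h, hσ.apply_apply], fun h => by rw [h, hσ.apply_apply]⟩

lemma IsPerfectMatching.conj {σ : Equiv.Perm H} (hσ : IsPerfectMatching σ) (τ : Equiv.Perm H) :
    IsPerfectMatching (τ * σ * τ⁻¹) where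
  apply_ne x h := hσ.apply_ne (τ⁻¹ x) (by simpa [← Equiv.Perm.eq_inv_iff_eq] using h)
  apply_apply x := by simp [hσ.apply_apply]

/-- Rematch the pairs `{h, σ h}` and `{c, σ c}` as `{h, c}` and `{σ h, σ c}`. -/
noncomputable def switch (σ : Equiv.Perm H) (h c : H) : Equiv.Perm H :=
  Equiv.swap (σ h) c * σ * Equiv.swap (σ h) c

lemma switch_apply (σ : Equiv.Perm H) (h c x : H) :
    switch σ h c x = Equiv.swap (σ h) c (σ (Equiv.swap (σ h) c x)) := rfl

lemma IsPerfectMatching.switch {σ : Equiv.Perm H} (hσ : IsPerfectMatching σ) (h c : H) :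
    IsPerfectMatching (switch σ h c) := by
  simpa [RandomRegular.switch] using hσ.conj (Equiv.swap (σ h) c)

lemma IsPerfectMatching.switch_apply_left {σ : Equiv.Perm H} (hσ : IsPerfectMatching σ) {h c : H}
    (hc : c ≠ h) : RandomRegular.switch σ h c h = c := by
  rw [switch_apply, Equiv.swap_apply_of_ne_of_ne (hσ.apply_ne h).symm hc.symm,
    Equiv.swap_apply_left]

lemma switch_switch {σ : Equiv.Perm H} {h c : H} (hc : switch σ h c h = c) :
    switch (switch σ h c) h (σ h) = σ := by
  ext x
  simp only [switch_apply, hc, Equiv.swap_comm c (σ h), Equiv.swap_apply_self]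

variable [Fintype H]

/-- The sample space of the configuration model. -/
noncomputable def perfectMatchings (H : Type*) [Fintype H] : Finset (Equiv.Perm H) :=
  {σ | IsPerfectMatching σ}

@[simp] lemma mem_perfectMatchings {σ : Equiv.Perm H} :
    σ ∈ perfectMatchings H ↔ IsPerfectMatching σ := by
  simp [perfectMatchings]

lemma perfectMatchings_nonempty (h : Even (Fintype.card H)) : (perfectMatchings H).Nonempty := by
  obtain ⟨t, ht⟩ := h
  have e : H ≃ Fin t × Bool := Fintype.equivOfCardEq (by simp [ht]; ring)
  let flip : Equiv.Perm (Fin t × Bool) := (Equiv.refl (Fin t)).prodCongr Equiv.boolNot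
  refine ⟨(e.trans flip).trans e.symm, mem_perfectMatchings.mpr ⟨fun x hx => ?_, fun x => ?_⟩⟩
  · have hflip : flip (e x) = e x := by simpa [Equiv.symm_apply_eq] using hx
    simpa [flip] using congrArg Prod.snd hflip
  · simp [flip, Prod.map]

end PerfectMatchings

section PartialMatchings

open Finset

variable {H : Type*}

/-- `τ` restricts to a fixed-point-free involution of `S`, that is, to a matching of `S`. -/
structure IsMatchingOn (S : Finset H) (τ : H → H) : Prop where
  apply_mem : ∀ x ∈ S, τ x ∈ S
  apply_ne : ∀ x ∈ S, τ x ≠ x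
  apply_apply : ∀ x ∈ S, τ (τ x) = x

lemma IsMatchingOn.erase_erase {S : Finset H} {τ : H → H} (hS : IsMatchingOn S τ) {x : H}
    (hx : x ∈ S) : IsMatchingOn ((S.erase x).erase (τ x)) τ := by
  have hsub : (S.erase x).erase (τ x) ⊆ S := (erase_subset _ _).trans (erase_subset _ _)
  refine ⟨fun z hz => ?_, fun z hz => hS.apply_ne z (hsub hz),
    fun z hz => hS.apply_apply z (hsub hz)⟩
  obtain ⟨hzτ, hzx, hzS⟩ : z ≠ τ x ∧ z ≠ x ∧ z ∈ S := by simpa only [mem_erase] using hz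
  refine mem_erase.mpr ⟨fun h => hzx ?_, mem_erase.mpr ⟨fun h => hzτ ?_, hS.apply_mem z hzS⟩⟩
  · rw [← hS.apply_apply z hzS, h, hS.apply_apply x hx]
  · rw [← hS.apply_apply z hzS, h]

lemma IsMatchingOn.card_erase_erase {S : Finset H} {τ : H → H} (hS : IsMatchingOn S τ) {x : H}
    (hx : x ∈ S) : #((S.erase x).erase (τ x)) + 2 = #S := by
  have hτx : τ x ∈ S.erase x := mem_erase.mpr ⟨hS.apply_ne x hx, hS.apply_mem x hx⟩
  rw [← card_erase_add_one hx, ← card_erase_add_one hτx]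

lemma IsMatchingOn.even_card {S : Finset H} {τ : H → H} (hS : IsMatchingOn S τ) : Even #S := by
  rw [← ZMod.natCast_eq_zero_iff_even, card_eq_sum_ones, Nat.cast_sum]
  exact sum_involution (fun x _ => τ x) (fun _ _ => by decide) (fun x hx _ => hS.apply_ne x hx)
    (fun x hx => hS.apply_mem x hx) fun x hx => hS.apply_apply x hx

variable [Fintype H]

/-- The perfect matchings of `H` that agree with `τ` on `S`. -/
noncomputable def matchingsExtending (S : Finset H) (τ : H → H) : Finset (Equiv.Perm H) :=
  {σ ∈ perfectMatchings H | ∀ x ∈ S, σ x = τ x}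

lemma mem_matchingsExtending {S : Finset H} {τ : H → H} {σ : Equiv.Perm H} :
    σ ∈ matchingsExtending S τ ↔ IsPerfectMatching σ ∧ ∀ x ∈ S, σ x = τ x := by
  simp [matchingsExtending]

lemma switch_mem_matchingsExtending {S : Finset H} {τ : H → H} (hS : IsMatchingOn S τ) {x y : H}
    {σ : Equiv.Perm H} (hσ : σ ∈ matchingsExtending S τ) (hσx : σ x ∉ S) (hy : y ∉ S) :
    switch σ x y ∈ matchingsExtending S τ := by
  rw [mem_matchingsExtending] at hσ ⊢
  refine ⟨hσ.1.switch x y, fun z hz => ?_⟩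
  have hfix : ∀ w ∈ S, Equiv.swap (σ x) y w = w := fun w hw =>
    Equiv.swap_apply_of_ne_of_ne (ne_of_mem_of_not_mem hw hσx) (ne_of_mem_of_not_mem hw hy)
  rw [switch_apply, hfix z hz, hσ.2 z hz, hfix _ (hS.apply_mem z hz)]

-- Switching makes all partners of a free point `x` equally likely.
lemma card_matchingsExtending_filter_le {S : Finset H} {τ : H → H} (hS : IsMatchingOn S τ)
    {x y y' : H} (hy : y ∉ S) (hy' : y' ∉ S) (hyx' : y' ≠ x) :
    #{σ ∈ matchingsExtending S τ | σ x = y} ≤ #{σ ∈ matchingsExtending S τ | σ x = y'} := by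
  refine card_le_card_of_injOn (fun σ => switch σ x y') (fun σ hσ => ?_) ?_
  · obtain ⟨hσS, hσx⟩ := mem_filter.mp hσ
    exact mem_filter.mpr ⟨switch_mem_matchingsExtending hS hσS (hσx ▸ hy) hy',
      (mem_matchingsExtending.mp hσS).1.switch_apply_left hyx'⟩
  · intro σ hσ ρ hρ h
    obtain ⟨hσS, hσx⟩ := mem_filter.mp hσ
    obtain ⟨hρS, hρx⟩ := mem_filter.mp hρ
    rw [← switch_switch ((mem_matchingsExtending.mp hσS).1.switch_apply_left hyx'),
      ← switch_switch ((mem_matchingsExtending.mp hρS).1.switch_apply_left hyx'), hσx, hρx]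
    exact congrArg (fun π => switch π x y) h

lemma apply_notMem_of_mem_matchingsExtending {S : Finset H} {τ : H → H} (hS : IsMatchingOn S τ)
    {x : H} (hx : x ∉ S) {σ : Equiv.Perm H} (hσ : σ ∈ matchingsExtending S τ) : σ x ∉ S := by
  rw [mem_matchingsExtending] at hσ
  intro h
  have hmem := hS.apply_mem _ h
  rw [← hσ.2 _ h, hσ.1.apply_apply] at hmem
  exact hx hmem

lemma card_matchingsExtending_eq_mul {S : Finset H} {τ : H → H} (hS : IsMatchingOn S τ) {x y : H}
    (hx : x ∉ S) (hy : y ∉ S) (hyx : y ≠ x) :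
    (#(matchingsExtending S τ) : ℝ) =
      ((Fintype.card H : ℝ) - 1 - #S) * #{σ ∈ matchingsExtending S τ | σ x = y} := by
  have hmaps : ∀ σ ∈ matchingsExtending S τ, σ x ∈ (insert x S)ᶜ := fun σ hσ => by
    simp only [mem_compl, mem_insert, not_or]
    exact ⟨(mem_matchingsExtending.mp hσ).1.apply_ne x,
      apply_notMem_of_mem_matchingsExtending hS hx hσ⟩
  have hfiber : ∀ z ∈ (insert x S)ᶜ, #{σ ∈ matchingsExtending S τ | σ x = z} =
      #{σ ∈ matchingsExtending S τ | σ x = y} := fun z hz => by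
    simp only [mem_compl, mem_insert, not_or] at hz
    exact le_antisymm (card_matchingsExtending_filter_le hS hz.2 hy hyx)
      (card_matchingsExtending_filter_le hS hy hz.2 hz.1)
  have hcard : (#(insert x S)ᶜ : ℝ) = (Fintype.card H : ℝ) - 1 - #S := by
    rw [card_compl, Nat.cast_sub (card_le_univ _), card_insert_of_notMem hx]
    push_cast
    ring
  rw [card_eq_sum_card_fiberwise hmaps, sum_congr rfl hfiber, sum_const, smul_eq_mul,
    Nat.cast_mul, hcard]

lemma matchingsExtending_erase_erase_filter {S : Finset H} {τ : H → H} (hS : IsMatchingOn S τ)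
    {x : H} (hx : x ∈ S) :
    {σ ∈ matchingsExtending ((S.erase x).erase (τ x)) τ | σ x = τ x} = matchingsExtending S τ := by
  ext σ
  simp only [mem_filter, mem_matchingsExtending, mem_erase, and_imp, and_assoc]
  refine and_congr_right fun hσ => ⟨fun ⟨hrest, hσx⟩ z hz => ?_,
    fun h => ⟨fun z _ _ hz => h z hz, h x hx⟩⟩
  by_cases hzx : z = x
  · rw [hzx, hσx]
  by_cases hzτ : z = τ x
  · rw [hzτ, hS.apply_apply x hx, ← hσx, hσ.apply_apply]
  · exact hrest z hzτ hzx hz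

theorem card_matchingsExtending_mul_prod {S : Finset H} {τ : H → H} (hS : IsMatchingOn S τ) :
    (#(matchingsExtending S τ) : ℝ) *
      ∏ j ∈ range (#S / 2), ((Fintype.card H : ℝ) - 1 - 2 * j) = #(perfectMatchings H) := by
  induction S using Finset.strongInduction with
  | H S ih =>
    obtain rfl | ⟨x, hx⟩ := S.eq_empty_or_nonempty
    · simp [matchingsExtending]
    have hS' := hS.erase_erase hx
    have hhalf : (2 : ℝ) * ((#((S.erase x).erase (τ x)) / 2 : ℕ) : ℝ) =
        #((S.erase x).erase (τ x)) := by
      exact_mod_cast Nat.two_mul_div_two_of_even hS'.even_card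
    rw [← ih _ ((erase_subset _ _).trans_ssubset (erase_ssubset hx)) hS',
      card_matchingsExtending_eq_mul hS' (x := x) (y := τ x) (by simp) (by simp)
        (hS.apply_ne x hx), matchingsExtending_erase_erase_filter hS hx, ← hS.card_erase_erase hx,
      Nat.add_div_right _ two_pos, prod_range_succ, hhalf]
    ring

end PartialMatchings

section PairFamilies

open Finset

variable {I H : Type*}

/-- The pairs `{f i, g i}` are the (possibly repeated) edges of a partial matching. -/
structure IsPartialMatching (f g : I → H) : Prop where
  left_eq_iff : ∀ i j, f i = f j ↔ g i = g j
  right_eq_of_left_eq : ∀ i j, f i = g j → g i = f j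
  ne : ∀ i, f i ≠ g i

/-- The points covered by the pairs `{f i, g i}`. -/
noncomputable def endpoints [Fintype I] (f g : I → H) : Finset H :=
  univ.image f ∪ univ.image g

lemma mem_endpoints [Fintype I] {f g : I → H} {x : H} :
    x ∈ endpoints f g ↔ (∃ i, f i = x) ∨ ∃ i, g i = x := by
  simp [endpoints]

lemma card_endpoints_le [Fintype I] (f g : I → H) : #(endpoints f g) ≤ 2 * Fintype.card I := by
  have := card_union_le (univ.image f) (univ.image g)
  have := card_image_le (s := univ) (f := f)
  have := card_image_le (s := univ) (f := g)
  rw [card_univ] at *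
  unfold endpoints
  omega

lemma card_endpoints_of_injective [Fintype I] {f g : I → H} (hf : Function.Injective f)
    (hg : Function.Injective g) (hfg : ∀ i j, f i ≠ g j) :
    #(endpoints f g) = 2 * Fintype.card I := by
  have hdisj : Disjoint (univ.image f) (univ.image g) := by
    simp only [disjoint_left, mem_image, mem_univ, true_and]
    rintro x ⟨i, rfl⟩ ⟨j, hj⟩
    exact hfg i j hj.symm
  rw [endpoints, card_union_of_disjoint hdisj, card_image_of_injective _ hf,
    card_image_of_injective _ hg, card_univ, two_mul]

lemma IsPartialMatching.exists_isMatchingOn [Fintype I] {f g : I → H}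
    (h : IsPartialMatching f g) :
    ∃ τ : H → H, IsMatchingOn (endpoints f g) τ ∧ (∀ i, τ (f i) = g i) ∧ ∀ i, τ (g i) = f i := by
  let τ : H → H := fun x => if hf : ∃ i, f i = x then g hf.choose else
    if hg : ∃ i, g i = x then f hg.choose else x
  have hf (i : I) : τ (f i) = g i := by
    have hex : ∃ j, f j = f i := ⟨i, rfl⟩
    simp only [τ, dif_pos hex]
    exact (h.left_eq_iff _ _).mp hex.choose_spec
  have hg (i : I) : τ (g i) = f i := by
    simp only [τ]
    split_ifs with hleft hright
    · exact h.right_eq_of_left_eq _ _ hleft.choose_spec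
    · exact (h.left_eq_iff _ _).mpr hright.choose_spec
    · exact absurd ⟨i, rfl⟩ hright
  refine ⟨τ, ⟨fun x hx => ?_, fun x hx => ?_, fun x hx => ?_⟩, hf, hg⟩ <;>
    rcases mem_endpoints.mp hx with ⟨i, rfl⟩ | ⟨i, rfl⟩
  · rw [hf]; exact mem_endpoints.mpr (.inr ⟨i, rfl⟩)
  · rw [hg]; exact mem_endpoints.mpr (.inl ⟨i, rfl⟩)
  · rw [hf]; exact (h.ne i).symm
  · rw [hg]; exact h.ne i
  · rw [hf, hg]
  · rw [hg, hf]

lemma IsPerfectMatching.isPartialMatching {σ : Equiv.Perm H} (hσ : IsPerfectMatching σ)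
    {f g : I → H} (h : ∀ i, σ (f i) = g i) : IsPartialMatching f g where
  left_eq_iff i j := by rw [← h, ← h, σ.injective.eq_iff]
  right_eq_of_left_eq i j e := by rw [← h i, e, ← h, hσ.apply_apply]
  ne i e := hσ.apply_ne (f i) (by rw [h, e])

lemma IsPartialMatching.even_card_endpoints [Fintype I] {f g : I → H}
    (h : IsPartialMatching f g) : Even #(endpoints f g) := by
  obtain ⟨τ, hτ, -⟩ := h.exists_isMatchingOn
  exact hτ.even_card

variable [Fintype I] [Fintype H] {f g : I → H}

theorem IsPartialMatching.card_filter_mul_prod (h : IsPartialMatching f g) :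
    (#{σ ∈ perfectMatchings H | ∀ i, σ (f i) = g i} : ℝ) *
      ∏ j ∈ range (#(endpoints f g) / 2), ((Fintype.card H : ℝ) - 1 - 2 * j) =
        #(perfectMatchings H) := by
  obtain ⟨τ, hτ, hf, hg⟩ := h.exists_isMatchingOn
  have heq : {σ ∈ perfectMatchings H | ∀ i, σ (f i) = g i} =
      matchingsExtending (endpoints f g) τ := by
    ext σ
    simp only [mem_filter, mem_matchingsExtending, mem_perfectMatchings]
    refine and_congr_right fun hσ => ⟨fun hσf x hx => ?_, fun hσS i => ?_⟩
    · rcases mem_endpoints.mp hx with ⟨i, rfl⟩ | ⟨i, rfl⟩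
      · rw [hf, hσf]
      · rw [hg, ← hσf, hσ.apply_apply]
    · rw [hσS _ (mem_endpoints.mpr (.inl ⟨i, rfl⟩)), hf]
  rw [heq, card_matchingsExtending_mul_prod hτ]

lemma card_filter_apply_eq_mul_pow_le (hf : Function.Injective f) (hg : Function.Injective g)
    (hfg : ∀ i j, f i ≠ g j) (hcard : 2 * Fintype.card I ≤ Fintype.card H) :
    (#{σ ∈ perfectMatchings H | ∀ i, σ (f i) = g i} : ℝ) *
      ((Fintype.card H : ℝ) - 2 * Fintype.card I) ^ Fintype.card I ≤ #(perfectMatchings H) := by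
  have hpartial : IsPartialMatching f g :=
    ⟨fun i j => by rw [hf.eq_iff, hg.eq_iff], fun i j e => absurd e (hfg i j), fun i => hfg i i⟩
  have hcard' : (2 : ℝ) * Fintype.card I ≤ Fintype.card H := by exact_mod_cast hcard
  rw [← hpartial.card_filter_mul_prod, card_endpoints_of_injective hf hg hfg,
    Nat.mul_div_cancel_left _ two_pos]
  refine mul_le_mul_of_nonneg_left ?_ (Nat.cast_nonneg _)
  rw [← card_range (Fintype.card I), ← prod_const, card_range]
  refine prod_le_prod (fun _ _ => by linarith) fun j hj => ?_
  have : (j : ℝ) + 1 ≤ Fintype.card I := by exact_mod_cast mem_range.mp hj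
  linarith

end PairFamilies

section IharaBass

open Finset Matrix Polynomial

variable {V : Type*} [DecidableEq V] {r : ℕ}

/-- The incidence matrix between the half-edges `V × Fin r` and the vertices. -/
def incidence (V : Type*) [DecidableEq V] (r : ℕ) : Matrix (V × Fin r) V ℝ :=
  Matrix.of fun h v => if h.1 = v then 1 else 0

@[simp] lemma incidence_apply (h : V × Fin r) (v : V) :
    incidence V r h v = if h.1 = v then 1 else 0 := rfl

lemma IsPerfectMatching.mul_self {H : Type*} {σ : Equiv.Perm H} (hσ : IsPerfectMatching σ) :
    σ * σ = 1 :=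
  Equiv.ext hσ.apply_apply

lemma IsPerfectMatching.inv_eq {H : Type*} {σ : Equiv.Perm H} (hσ : IsPerfectMatching σ) :
    σ⁻¹ = σ :=
  inv_eq_of_mul_eq_one_left hσ.mul_self

variable [Fintype V]

lemma transpose_incidence_mul_incidence :
    (incidence V r)ᵀ * incidence V r = (r : ℝ) • (1 : Matrix V V ℝ) := by
  ext u v
  obtain rfl | huv := eq_or_ne u v
  · simp [Matrix.mul_apply, Fintype.sum_prod_type]
  · simp [Matrix.mul_apply, Fintype.sum_prod_type, huv, huv.symm]

lemma trace_incidence_mul_transpose :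
    (incidence V r * (incidence V r)ᵀ).trace = (r : ℝ) * Fintype.card V := by
  rw [trace_mul_comm, transpose_incidence_mul_incidence, trace_smul, trace_one, smul_eq_mul]

lemma IsPerfectMatching.permMatrix_mul_self {H : Type*} [Fintype H] [DecidableEq H]
    {σ : Equiv.Perm H} (hσ : IsPerfectMatching σ) : σ.permMatrix ℝ * σ.permMatrix ℝ = 1 := by
  rw [← permMatrix_mul, hσ.mul_self, permMatrix_one]

lemma IsPerfectMatching.trace_permMatrix {H : Type*} [Fintype H] [DecidableEq H]
    {σ : Equiv.Perm H} (hσ : IsPerfectMatching σ) : (σ.permMatrix ℝ).trace = 0 := by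
  have hfix : Function.fixedPoints σ = ∅ := Set.eq_empty_of_forall_notMem hσ.apply_ne
  rw [trace_permutation, hfix, Set.ncard_empty, Nat.cast_zero]

/-- The adjacency matrix of the multigraph obtained from the matching `σ` of the half-edges. -/
noncomputable def adjacency (σ : Equiv.Perm (V × Fin r)) : Matrix V V ℝ :=
  (incidence V r)ᵀ * σ.permMatrix ℝ * incidence V r

/-- The non-backtracking (Hashimoto) matrix: traverse the edge of a half-edge, then leave the
vertex reached through another half-edge. -/
noncomputable def nonBacktracking (σ : Equiv.Perm (V × Fin r)) :
    Matrix (V × Fin r) (V × Fin r) ℝ :=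
  σ.permMatrix ℝ * (incidence V r * (incidence V r)ᵀ - 1)

/-- The matrix counting non-backtracking walks with `k + 1` edges between vertices. -/
noncomputable def nonBacktrackingWalks (σ : Equiv.Perm (V × Fin r)) (k : ℕ) : Matrix V V ℝ :=
  (incidence V r)ᵀ * nonBacktracking σ ^ k * (σ.permMatrix ℝ * incidence V r)

variable {σ : Equiv.Perm (V × Fin r)}

lemma adjacency_apply (σ : Equiv.Perm (V × Fin r)) (u v : V) :
    adjacency σ u v = #{i : Fin r | (σ (u, i)).1 = v} := by
  rw [adjacency, Matrix.mul_assoc, PEquiv.toMatrix_toPEquiv_mul, Matrix.mul_apply,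
    Fintype.sum_prod_type, sum_eq_single u (by simp +contextual) (by simp)]
  simp

lemma adjacency_nonneg (σ : Equiv.Perm (V × Fin r)) (u v : V) : 0 ≤ adjacency σ u v := by
  rw [adjacency_apply]
  positivity

lemma sum_adjacency (σ : Equiv.Perm (V × Fin r)) (u : V) : ∑ v, adjacency σ u v = r := by
  simp only [adjacency_apply]
  rw [← Nat.cast_sum, ← card_eq_sum_card_fiberwise (fun _ _ => mem_coe.mpr (mem_univ _)),
    card_univ, Fintype.card_fin]

lemma IsPerfectMatching.isHermitian_adjacency (hσ : IsPerfectMatching σ) :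
    (adjacency σ).IsHermitian := by
  rw [Matrix.IsHermitian, conjTranspose_eq_transpose_of_trivial, adjacency, transpose_mul,
    transpose_mul, transpose_permMatrix, hσ.inv_eq, transpose_transpose, Matrix.mul_assoc]

lemma nonBacktracking_mul_incidence (σ : Equiv.Perm (V × Fin r)) :
    nonBacktracking σ * incidence V r = ((r : ℝ) - 1) • (σ.permMatrix ℝ * incidence V r) := by
  rw [nonBacktracking, Matrix.mul_assoc, Matrix.sub_mul, Matrix.mul_assoc,
    transpose_incidence_mul_incidence, Matrix.one_mul, Matrix.mul_smul, Matrix.mul_one,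
    Matrix.mul_sub, Matrix.mul_smul, sub_smul, one_smul]

lemma IsPerfectMatching.nonBacktracking_mul_permMatrix_mul_incidence
    (hσ : IsPerfectMatching σ) :
    nonBacktracking σ * (σ.permMatrix ℝ * incidence V r) =
      σ.permMatrix ℝ * incidence V r * adjacency σ - incidence V r := by
  rw [nonBacktracking, adjacency, Matrix.mul_sub, Matrix.mul_one, Matrix.sub_mul,
    ← Matrix.mul_assoc (σ.permMatrix ℝ) (σ.permMatrix ℝ), hσ.permMatrix_mul_self, Matrix.one_mul]
  simp only [Matrix.mul_assoc]

lemma nonBacktrackingWalks_zero (σ : Equiv.Perm (V × Fin r)) :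
    nonBacktrackingWalks σ 0 = adjacency σ := by
  rw [nonBacktrackingWalks, pow_zero, Matrix.mul_one, adjacency, Matrix.mul_assoc]

lemma IsPerfectMatching.nonBacktrackingWalks_one (hσ : IsPerfectMatching σ) :
    nonBacktrackingWalks σ 1 = adjacency σ * adjacency σ - (r : ℝ) • 1 := by
  rw [nonBacktrackingWalks, pow_one, Matrix.mul_assoc,
    hσ.nonBacktracking_mul_permMatrix_mul_incidence, Matrix.mul_sub,
    transpose_incidence_mul_incidence, ← Matrix.mul_assoc, ← Matrix.mul_assoc, ← adjacency]

lemma IsPerfectMatching.nonBacktrackingWalks_add_two (hσ : IsPerfectMatching σ) (k : ℕ) :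
    nonBacktrackingWalks σ (k + 2) = nonBacktrackingWalks σ (k + 1) * adjacency σ -
      ((r : ℝ) - 1) • nonBacktrackingWalks σ k := by
  have hstep : nonBacktrackingWalks σ (k + 2) = nonBacktrackingWalks σ (k + 1) * adjacency σ -
      (incidence V r)ᵀ * nonBacktracking σ ^ (k + 1) * incidence V r := by
    rw [nonBacktrackingWalks, pow_succ, ← Matrix.mul_assoc _ _ (nonBacktracking σ),
      Matrix.mul_assoc _ (nonBacktracking σ), hσ.nonBacktracking_mul_permMatrix_mul_incidence,
      Matrix.mul_sub, ← Matrix.mul_assoc, nonBacktrackingWalks]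
  rw [hstep, pow_succ, ← Matrix.mul_assoc _ _ (nonBacktracking σ),
    Matrix.mul_assoc _ (nonBacktracking σ), nonBacktracking_mul_incidence, Matrix.mul_smul,
    ← nonBacktrackingWalks]

lemma trace_nonBacktrackingWalks (σ : Equiv.Perm (V × Fin r)) (k : ℕ) :
    (nonBacktrackingWalks σ k).trace =
      (nonBacktracking σ ^ (k + 1)).trace + (nonBacktracking σ ^ k * σ.permMatrix ℝ).trace := by
  have hsplit : σ.permMatrix ℝ * (incidence V r * (incidence V r)ᵀ) =
      nonBacktracking σ + σ.permMatrix ℝ := by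
    rw [nonBacktracking, Matrix.mul_sub, Matrix.mul_one, sub_add_cancel]
  rw [nonBacktrackingWalks, Matrix.mul_assoc, trace_mul_comm, Matrix.mul_assoc, Matrix.mul_assoc,
    hsplit, Matrix.mul_add, trace_add, ← pow_succ]

lemma IsPerfectMatching.trace_nonBacktracking_mul_permMatrix (hσ : IsPerfectMatching σ) :
    (nonBacktracking σ * σ.permMatrix ℝ).trace = 0 := by
  rw [trace_mul_comm, nonBacktracking, ← Matrix.mul_assoc, hσ.permMatrix_mul_self, Matrix.one_mul,
    trace_sub, trace_incidence_mul_transpose, trace_one, Fintype.card_prod, Fintype.card_fin,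
    Nat.cast_mul, mul_comm, sub_self]

lemma IsPerfectMatching.permMatrix_mul_nonBacktracking (hσ : IsPerfectMatching σ) :
    σ.permMatrix ℝ * nonBacktracking σ = incidence V r * (incidence V r)ᵀ - 1 := by
  rw [nonBacktracking, ← Matrix.mul_assoc, hσ.permMatrix_mul_self, Matrix.one_mul]

lemma IsPerfectMatching.trace_nonBacktracking_pow_add_two_mul_permMatrix
    (hσ : IsPerfectMatching σ) (k : ℕ) :
    (nonBacktracking σ ^ (k + 2) * σ.permMatrix ℝ).trace =
      ((r : ℝ) - 1) * (nonBacktrackingWalks σ k).trace - (nonBacktracking σ ^ (k + 1)).trace := by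
  have htail : (incidence V r)ᵀ * (nonBacktracking σ ^ (k + 1) * incidence V r) =
      ((r : ℝ) - 1) • nonBacktrackingWalks σ k := by
    rw [pow_succ, Matrix.mul_assoc, nonBacktracking_mul_incidence, Matrix.mul_smul,
      Matrix.mul_smul, nonBacktrackingWalks, Matrix.mul_assoc]
  rw [pow_succ', Matrix.mul_assoc, trace_mul_comm, Matrix.mul_assoc,
    hσ.permMatrix_mul_nonBacktracking, Matrix.mul_sub, Matrix.mul_one, trace_sub, trace_mul_comm,
    Matrix.mul_assoc, trace_mul_comm, Matrix.mul_assoc, htail, trace_smul, smul_eq_mul]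

lemma aeval_dickson_zero (M : Matrix V V ℝ) (c : ℝ) :
    aeval M (dickson 1 c 0) = (2 : ℝ) • (1 : Matrix V V ℝ) := by
  rw [dickson_zero, two_smul, map_sub, Nat.cast_one, map_one, map_ofNat]
  norm_num

lemma aeval_dickson_add_two (M : Matrix V V ℝ) (c : ℝ) (k : ℕ) :
    aeval M (dickson 1 c (k + 2)) =
      aeval M (dickson 1 c (k + 1)) * M - c • aeval M (dickson 1 c k) := by
  rw [dickson_add_two, mul_comm X]
  simp [Algebra.smul_def]

/- Both sides satisfy `X (k + 2) = X (k + 1) * A - (r - 1) • X k`, so it suffices to compare two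
initial terms. -/
lemma IsPerfectMatching.nonBacktrackingWalks_sub_eq_dickson_sub (hσ : IsPerfectMatching σ)
    (k : ℕ) :
    nonBacktrackingWalks σ (k + 2) - ((r : ℝ) - 1) • nonBacktrackingWalks σ k =
      aeval (adjacency σ) (dickson 1 ((r : ℝ) - 1) (k + 3)) -
        aeval (adjacency σ) (dickson 1 ((r : ℝ) - 1) (k + 1)) := by
  have hW := hσ.nonBacktrackingWalks_add_two
  have hD := aeval_dickson_add_two (adjacency σ) ((r : ℝ) - 1)
  have hD1 : aeval (adjacency σ) (dickson 1 ((r : ℝ) - 1) 1) = adjacency σ := by simp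
  induction k using Nat.twoStepInduction with
  | zero =>
    rw [hW, hσ.nonBacktrackingWalks_one, nonBacktrackingWalks_zero, hD 1, hD 0, hD1,
      aeval_dickson_zero]
    simp only [Matrix.sub_mul, Matrix.smul_mul, Matrix.one_mul]
    module
  | one =>
    rw [hW, hW, hσ.nonBacktrackingWalks_one, nonBacktrackingWalks_zero, hD 2, hD 1, hD 0, hD1,
      aeval_dickson_zero]
    simp only [Matrix.sub_mul, Matrix.smul_mul, Matrix.one_mul]
    module
  | more k ih ih' =>
    calc nonBacktrackingWalks σ (k + 4) - ((r : ℝ) - 1) • nonBacktrackingWalks σ (k + 2)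
      _ = (nonBacktrackingWalks σ (k + 3) - ((r : ℝ) - 1) • nonBacktrackingWalks σ (k + 1)) *
              adjacency σ -
            ((r : ℝ) - 1) •
              (nonBacktrackingWalks σ (k + 2) - ((r : ℝ) - 1) • nonBacktrackingWalks σ k) := by
          rw [hW (k + 2), Matrix.sub_mul, Matrix.smul_mul]
          nth_rewrite 2 [hW k]
          module
      _ = aeval (adjacency σ) (dickson 1 ((r : ℝ) - 1) (k + 5)) -
            aeval (adjacency σ) (dickson 1 ((r : ℝ) - 1) (k + 3)) := by
          rw [ih, ih', hD (k + 3), Matrix.sub_mul, eq_sub_iff_add_eq]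
          nth_rewrite 2 [hD (k + 1)]
          module

theorem IsPerfectMatching.trace_nonBacktracking_pow (hσ : IsPerfectMatching σ) (k : ℕ) :
    (nonBacktracking σ ^ (k + 1)).trace =
      (aeval (adjacency σ) (dickson 1 ((r : ℝ) - 1) (k + 1))).trace +
        if Even (k + 1) then ((r : ℝ) - 2) * Fintype.card V else 0 := by
  induction k using Nat.twoStepInduction with
  | zero =>
    have h := trace_nonBacktrackingWalks σ 0
    rw [nonBacktrackingWalks_zero, pow_zero, Matrix.one_mul, hσ.trace_permMatrix, add_zero] at h
    simpa using h.symm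
  | one =>
    have h := trace_nonBacktrackingWalks σ 1
    rw [hσ.nonBacktrackingWalks_one, pow_one, hσ.trace_nonBacktracking_mul_permMatrix,
      add_zero] at h
    rw [← h, aeval_dickson_add_two, aeval_dickson_zero, if_pos (by decide), dickson_one, aeval_X]
    simp only [trace_sub, trace_smul, trace_one, smul_eq_mul]
    ring
  | more k ih _ =>
    have h := trace_nonBacktrackingWalks σ (k + 2)
    rw [hσ.trace_nonBacktracking_pow_add_two_mul_permMatrix] at h
    have hD := congrArg Matrix.trace (hσ.nonBacktrackingWalks_sub_eq_dickson_sub k)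
    rw [trace_sub, trace_sub, trace_smul, smul_eq_mul] at hD
    have hparity : Even (k + 2 + 1) ↔ Even (k + 1) := by grind
    simp only [hparity]
    change (nonBacktracking σ ^ (k + 3)).trace =
      (aeval (adjacency σ) (dickson 1 ((r : ℝ) - 1) (k + 3))).trace + _
    linarith

end IharaBass

section ClosedWalks

open Finset Matrix

variable {H R : Type*} [Fintype H] [DecidableEq H] [CommSemiring R]

lemma pow_succ_apply_eq_sum_walks (M : Matrix H H R) (k : ℕ) (x y : H) :
    (M ^ (k + 1)) x y = ∑ w : Fin (k + 1) → H,
      if w 0 = x then (∏ i : Fin k, M (w i.castSucc) (w i.succ)) * M (w (Fin.last k)) y else 0 := by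
  induction k generalizing y with
  | zero =>
    rw [← (Equiv.funUnique (Fin 1) H).symm.sum_comp]
    simp
  | succ k ih =>
    rw [pow_succ, Matrix.mul_apply, ← (Fin.snocEquiv fun _ : Fin (k + 2) => H).sum_comp,
      Fintype.sum_prod_type]
    refine sum_congr rfl fun z _ => ?_
    rw [ih, sum_mul]
    refine sum_congr rfl fun w _ => ?_
    have hzero : (Fin.snoc w z : Fin (k + 2) → H) 0 = w 0 := by simp
    rw [show Fin.snocEquiv (fun _ : Fin (k + 2) => H) (z, w) = Fin.snoc w z from rfl, hzero,
      Fin.prod_univ_castSucc]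
    simp only [Fin.snoc_last, Fin.succ_last, Fin.snoc_castSucc, ← Fin.castSucc_succ]
    split_ifs <;> ring

lemma trace_pow_succ_eq_sum_closed_walks (M : Matrix H H R) (k : ℕ) :
    (M ^ (k + 1)).trace = ∑ w : Fin (k + 1) → H, ∏ i, M (w i) (w (i + 1)) := by
  simp only [Matrix.trace, Matrix.diag_apply, pow_succ_apply_eq_sum_walks]
  rw [sum_comm]
  refine sum_congr rfl fun w _ => ?_
  rw [sum_ite_eq]
  simp [Fin.prod_univ_castSucc]

end ClosedWalks

section WalkShapes

open Finset

variable {I α β : Type*} {r : ℕ}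

/-- The half-edges through which a walk visiting the vertices `v` leaves them. The ports
`p i = (a, b)` say that the walk leaves `v i` through its half-edge `a` and arrived through `b`. -/
def outgoing (v : I → α) (p : I → Fin r × Fin r) (i : I) : α × Fin r := (v i, (p i).1)

/-- The half-edges matched with `outgoing v p` along the walk. -/
def incoming [Add I] [One I] (v : I → α) (p : I → Fin r × Fin r) (i : I) : α × Fin r :=
  (v (i + 1), (p (i + 1)).2)

/-- The cyclic sequence of vertices `v` and ports `p` is a closed non-backtracking walk of some
multigraph, that is, it never turns around and the pairs of half-edges it uses are consistent. -/
structure IsRealizable [Add I] [One I] (v : I → α) (p : I → Fin r × Fin r) : Prop where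
  ports_ne : ∀ i, (p i).1 ≠ (p i).2
  isPartialMatching : IsPartialMatching (outgoing v p) (incoming v p)

lemma incoming_sub_one [AddGroup I] [One I] (v : I → α) (p : I → Fin r × Fin r) (i : I) :
    incoming v p (i - 1) = (v i, (p i).2) := by
  simp [incoming]

variable [Add I] [One I]

lemma isRealizable_comp_iff {ι : α → β} (hι : Function.Injective ι) (v : I → α)
    (p : I → Fin r × Fin r) : IsRealizable (ι ∘ v) p ↔ IsRealizable v p := by
  refine ⟨fun ⟨hp, hmatch⟩ => ⟨hp, ?_, ?_, ?_⟩, fun ⟨hp, hmatch⟩ => ⟨hp, ?_, ?_, ?_⟩⟩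
  all_goals simp only [outgoing, incoming, Function.comp_apply, Prod.mk.injEq, ne_eq]
  · simpa [outgoing, incoming, hι.eq_iff] using hmatch.left_eq_iff
  · simpa [outgoing, incoming, hι.eq_iff] using hmatch.right_eq_of_left_eq
  · simpa [outgoing, incoming, hι.eq_iff] using hmatch.ne
  · simpa [outgoing, incoming, hι.eq_iff] using hmatch.left_eq_iff
  · simpa [outgoing, incoming, hι.eq_iff] using hmatch.right_eq_of_left_eq
  · simpa [outgoing, incoming, hι.eq_iff] using hmatch.ne

lemma card_endpoints_comp [Fintype I] {ι : α → β} (hι : Function.Injective ι) (v : I → α)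
    (p : I → Fin r × Fin r) :
    #(endpoints (outgoing (ι ∘ v) p) (incoming (ι ∘ v) p)) =
      #(endpoints (outgoing v p) (incoming v p)) := by
  have himage : endpoints (outgoing (ι ∘ v) p) (incoming (ι ∘ v) p) =
      (endpoints (outgoing v p) (incoming v p)).image (Prod.map ι id) := by
    ext x
    simp only [mem_endpoints, mem_image]
    constructor
    · rintro (⟨i, hi⟩ | ⟨i, hi⟩)
      · exact ⟨outgoing v p i, .inl ⟨i, rfl⟩, hi⟩
      · exact ⟨incoming v p i, .inr ⟨i, rfl⟩, hi⟩
    · rintro ⟨_, ⟨i, rfl⟩ | ⟨i, rfl⟩, hi⟩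
      · exact .inl ⟨i, hi⟩
      · exact .inr ⟨i, hi⟩
  rw [himage, card_image_of_injective _ (hι.prodMap Function.injective_id)]

end WalkShapes

section Kernels

open Finset

variable {I : Type*} [Fintype I]

noncomputable instance : Fintype (Setoid I) :=
  Fintype.ofInjective (fun s : Setoid I => fun i j => s i j) fun _ _ h =>
    Setoid.ext fun i j => iff_of_eq (congrFun (congrFun h i) j)

lemma card_quotient_ker {α : Type*} [DecidableEq α] (v : I → α) :
    Nat.card (Quotient (Setoid.ker v)) = #(univ.image v) := by
  rw [Nat.card_congr (Setoid.quotientKerEquivRange v), Nat.card_coe_set_eq, ← Set.image_univ,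
    ← coe_univ, ← coe_image, Set.ncard_coe_finset]

lemma card_filter_ker_eq (s : Setoid I) (n : ℕ) :
    #{v : I → Fin n | Setoid.ker v = s} = n.descFactorial (Fintype.card (Quotient s)) := by
  rw [← Fintype.card_fin n, ← Fintype.card_embedding_eq, Fintype.card_fin, ← card_univ]
  symm
  refine card_bij (fun φ _ => φ ∘ Quotient.mk s) (fun φ _ => ?_) (fun φ _ ψ _ h => ?_)
    fun v hv => ?_
  · refine mem_filter.mpr ⟨mem_univ _, Setoid.ext fun i j => ?_⟩
    simp [Setoid.ker_def, Quotient.eq]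
  · ext x
    induction x using Quotient.inductionOn with
    | h i => exact congrArg Fin.val (congrFun h i)
  · obtain rfl : Setoid.ker v = s := (mem_filter.mp hv).2
    exact ⟨⟨Setoid.kerLift v, Setoid.kerLift_injective v⟩, mem_univ _, rfl⟩

end Kernels

section ExpectedTraces

open Finset Matrix

variable {V : Type*} [Fintype V] [DecidableEq V] {r : ℕ}

lemma nonBacktracking_apply (σ : Equiv.Perm (V × Fin r)) (x y : V × Fin r) :
    nonBacktracking σ x y = ∑ b : Fin r, if y.2 ≠ b ∧ σ x = (y.1, b) then 1 else 0 := by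
  rw [nonBacktracking, PEquiv.toMatrix_toPEquiv_mul, submatrix_apply, Matrix.sub_apply,
    Matrix.mul_apply, Matrix.one_apply]
  simp only [incidence_apply, transpose_apply, id]
  rcases σ x with ⟨u, c⟩
  obtain ⟨w, d⟩ := y
  simp only [Prod.mk.injEq]
  by_cases huw : u = w
  · by_cases hcd : c = d
    · simp [huw, hcd]
    · have hiff (b : Fin r) : ¬d = b ∧ c = b ↔ b = c :=
        ⟨fun h => h.2.symm, fun h => ⟨fun hd => hcd (hd.trans h).symm, h.symm⟩⟩
      simp [huw, hcd, hiff]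
  · simp [huw]

lemma prod_nonBacktracking_apply {m : ℕ} [NeZero m] (σ : Equiv.Perm (V × Fin r))
    (w : ZMod m → V × Fin r) :
    ∏ i, nonBacktracking σ (w i) (w (i + 1)) = ∑ b : ZMod m → Fin r,
      if ∀ i, (w i).2 ≠ b i ∧ σ (w (i - 1)) = ((w i).1, b i) then 1 else 0 := by
  rw [← (Equiv.subRight (1 : ZMod m)).prod_comp]
  simp only [nonBacktracking_apply, Equiv.subRight_apply, sub_add_cancel]
  rw [prod_univ_sum, Fintype.piFinset_univ]
  exact sum_congr rfl fun b _ => by rw [prod_ite_zero]; simp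

lemma trace_nonBacktracking_pow_eq_sum (σ : Equiv.Perm (V × Fin r)) (k : ℕ) :
    (nonBacktracking σ ^ (k + 1)).trace =
      ∑ v : ZMod (k + 1) → V, ∑ p : ZMod (k + 1) → Fin r × Fin r,
        if (∀ i, (p i).1 ≠ (p i).2) ∧ ∀ i, σ (outgoing v p i) = incoming v p i then 1 else 0 := by
  have htrace : (nonBacktracking σ ^ (k + 1)).trace = ∑ w : ZMod (k + 1) → V × Fin r,
      ∏ i, nonBacktracking σ (w i) (w (i + 1)) :=
    trace_pow_succ_eq_sum_closed_walks (nonBacktracking σ) k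
  simp only [htrace, prod_nonBacktracking_apply, ← Fintype.sum_prod_type']
  refine Fintype.sum_equiv
    { toFun := fun x => (fun i => (x.1 i).1, fun i => ((x.1 i).2, x.2 i))
      invFun := fun y => (fun i => (y.1 i, (y.2 i).1), fun i => (y.2 i).2)
      left_inv := fun _ => rfl
      right_inv := fun _ => rfl } _ _ fun ⟨w, b⟩ => ?_
  simp only [Equiv.coe_fn_mk, outgoing, incoming]
  exact if_congr ⟨fun h => ⟨fun i => (h i).1, fun i => by simpa using (h (i + 1)).2⟩,
    fun ⟨hne, hσ⟩ i => ⟨hne i, by simpa using hσ (i - 1)⟩⟩ rfl rfl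

/-- The combinatorial types of closed walks with `k + 1` steps in the configuration model: which
vertices of the walk coincide, and through which ports it passes. -/
abbrev WalkType (r k : ℕ) : Type :=
  Setoid (ZMod (k + 1)) × (ZMod (k + 1) → Fin r × Fin r)

namespace WalkType

variable {k : ℕ}

/-- The vertices of the walk of type `T`, named by the steps at which they are visited. -/
def vertex (T : WalkType r k) : ZMod (k + 1) → Quotient T.1 := Quotient.mk T.1

/-- The half-edges used by a walk of type `T`. -/
noncomputable def halfEdges (T : WalkType r k) : Finset (Quotient T.1 × Fin r) :=
  endpoints (outgoing T.vertex T.2) (incoming T.vertex T.2)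

/-- The number of distinct edges of a walk of type `T`. -/
noncomputable def numEdges (T : WalkType r k) : ℕ := #T.halfEdges / 2

/-- The number of distinct vertices of a walk of type `T`. -/
noncomputable def numVertices (T : WalkType r k) : ℕ := Fintype.card (Quotient T.1)

lemma card_image_vertex (T : WalkType r k) : #(univ.image T.vertex) = T.numVertices := by
  rw [image_univ_of_surjective (f := T.vertex) Quotient.mk_surjective, card_univ, numVertices]

lemma numEdges_le (T : WalkType r k) : T.numEdges ≤ k + 1 := by
  have h := card_endpoints_le (outgoing T.vertex T.2) (incoming T.vertex T.2)
  rw [ZMod.card] at h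
  exact Nat.div_le_of_le_mul h

/-- The probability that a given walk of type `T` is present in a uniformly random matching of
`m` half-edges. -/
noncomputable def probability (T : WalkType r k) (m : ℕ) : ℝ :=
  (∏ j ∈ range T.numEdges, ((m : ℝ) - 1 - 2 * j))⁻¹

end WalkType

/-- The types of closed non-backtracking walks with `k + 1` steps. -/
noncomputable def walkTypes (r k : ℕ) : Finset (WalkType r k) :=
  {T | IsRealizable T.vertex T.2}

lemma mem_walkTypes {k : ℕ} {T : WalkType r k} : T ∈ walkTypes r k ↔ IsRealizable T.vertex T.2 := by
  simp [walkTypes]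

lemma ker_mem_walkTypes_iff {k : ℕ} {α : Type*} (v : ZMod (k + 1) → α)
    (p : ZMod (k + 1) → Fin r × Fin r) : (Setoid.ker v, p) ∈ walkTypes r k ↔ IsRealizable v p := by
  rw [mem_walkTypes, ← isRealizable_comp_iff (Setoid.kerLift_injective v)]
  rfl

lemma numEdges_ker {k : ℕ} {α : Type*} (v : ZMod (k + 1) → α) (p : ZMod (k + 1) → Fin r × Fin r) :
    WalkType.numEdges (Setoid.ker v, p) = #(endpoints (outgoing v p) (incoming v p)) / 2 := by
  rw [WalkType.numEdges, WalkType.halfEdges, ← card_endpoints_comp (Setoid.kerLift_injective v)]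
  rfl

lemma sub_one_sub_two_mul_pos {m e j : ℕ} (he : 2 * e ≤ m) (hj : j < e) :
    (0 : ℝ) < (m : ℝ) - 1 - 2 * j := by
  have : ((2 * j + 1 : ℕ) : ℝ) < m := by exact_mod_cast (by omega : 2 * j + 1 < m)
  push_cast at this
  linarith

lemma card_filter_walk_mem {k : ℕ} (hcard : 2 * (k + 1) ≤ Fintype.card (V × Fin r))
    (v : ZMod (k + 1) → V) (p : ZMod (k + 1) → Fin r × Fin r) :
    (#{σ ∈ perfectMatchings (V × Fin r) |
        (∀ i, (p i).1 ≠ (p i).2) ∧ ∀ i, σ (outgoing v p i) = incoming v p i} : ℝ) =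
      if (Setoid.ker v, p) ∈ walkTypes r k then
        #(perfectMatchings (V × Fin r)) *
          WalkType.probability (Setoid.ker v, p) (Fintype.card (V × Fin r)) else 0 := by
  simp only [ker_mem_walkTypes_iff]
  split_ifs with h
  · have hne : ∏ j ∈ range (#(endpoints (outgoing v p) (incoming v p)) / 2),
        ((Fintype.card (V × Fin r) : ℝ) - 1 - 2 * j) ≠ 0 := by
      rw [← numEdges_ker]
      exact prod_ne_zero_iff.mpr fun j hj => (sub_one_sub_two_mul_pos hcard
        ((mem_range.mp hj).trans_le (WalkType.numEdges_le _))).ne'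
    rw [WalkType.probability, numEdges_ker, ← h.isPartialMatching.card_filter_mul_prod,
      mul_inv_cancel_right₀ hne]
    congr 2
    ext σ
    simp [h.ports_ne]
  · rw [Nat.cast_eq_zero, card_eq_zero, filter_eq_empty_iff]
    exact fun σ hσ hwalk =>
      h ⟨hwalk.1, (mem_perfectMatchings.mp hσ).isPartialMatching hwalk.2⟩

theorem sum_trace_nonBacktracking_pow (n k : ℕ) (hn : 2 * (k + 1) ≤ n * r) :
    ∑ σ ∈ perfectMatchings (Fin n × Fin r), (nonBacktracking σ ^ (k + 1)).trace =
      #(perfectMatchings (Fin n × Fin r)) *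
        ∑ T ∈ walkTypes r k, n.descFactorial T.numVertices * T.probability (n * r) := by
  have hcard : Fintype.card (Fin n × Fin r) = n * r := by simp
  let weight (T : WalkType r k) : ℝ := if T ∈ walkTypes r k then
    #(perfectMatchings (Fin n × Fin r)) * T.probability (n * r) else 0
  calc ∑ σ ∈ perfectMatchings (Fin n × Fin r), (nonBacktracking σ ^ (k + 1)).trace
    _ = ∑ p : ZMod (k + 1) → Fin r × Fin r, ∑ v : ZMod (k + 1) → Fin n,
          weight (Setoid.ker v, p) := by
        simp only [trace_nonBacktracking_pow_eq_sum]
        rw [sum_comm, sum_comm (t := univ)]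
        refine sum_congr rfl fun v _ => ?_
        rw [sum_comm]
        refine sum_congr rfl fun p _ => ?_
        rw [← natCast_card_filter, card_filter_walk_mem (hcard.symm ▸ hn), hcard]
    _ = ∑ T : WalkType r k, n.descFactorial T.numVertices * weight T := by
        rw [Fintype.sum_prod_type_right]
        refine sum_congr rfl fun p _ => ?_
        rw [← sum_fiberwise univ Setoid.ker]
        refine sum_congr rfl fun s _ => ?_
        rw [sum_congr rfl fun v hv => by rw [(mem_filter.mp hv).2], sum_const, nsmul_eq_mul,
          WalkType.numVertices]
        congr 2
        convert card_filter_ker_eq s n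
    _ = _ := by
        simp only [weight, mul_ite, mul_zero]
        rw [← sum_filter, filter_mem_eq_inter, univ_inter, mul_sum]
        exact sum_congr rfl fun T _ => mul_left_comm _ _ _

end ExpectedTraces

section Periods

open Finset

variable {m : ℕ} [NeZero m]

lemma exists_dvd_ker_eq_ker_val_mod {α : Type*} {v : ZMod m → α}
    (hv : ∀ i j : ZMod m, v j = v i → ∀ x, v (j + x) = v (i + x)) :
    ∃ d, d ∣ m ∧ Setoid.ker v = Setoid.ker fun i : ZMod m => i.val % d := by
  let periods : AddSubgroup (ZMod m) :=
    { carrier := {x | v x = v 0}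
      add_mem' := fun {a b} ha hb => by simpa using (hv _ _ ha b).trans (by simpa using hb)
      zero_mem' := rfl
      neg_mem' := fun {a} ha => by simpa using (hv _ _ ha (-a)).symm }
  have hmem (i j : ZMod m) : v i = v j ↔ -i + j ∈ periods := by
    refine ⟨fun h => ?_, fun h => ?_⟩
    · simpa [periods, add_comm] using hv _ _ h.symm (-i)
    · simpa using (hv _ _ (show v (-i + j) = v 0 from h) i).symm
  have hcast (x : ZMod m) : (x : ZMod m ⧸ periods) = x.val • ((1 : ZMod m) : ZMod m ⧸ periods) := by
    rw [← QuotientAddGroup.mk_nsmul, nsmul_one, ZMod.natCast_zmod_val]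
  refine ⟨addOrderOf ((1 : ZMod m) : ZMod m ⧸ periods), addOrderOf_dvd_of_nsmul_eq_zero ?_,
    Setoid.ext fun i j => ?_⟩
  · rw [← QuotientAddGroup.mk_nsmul, nsmul_one, ZMod.natCast_self, QuotientAddGroup.mk_zero]
  · rw [Setoid.ker_def, Setoid.ker_def, hmem, ← QuotientAddGroup.eq, hcast i, hcast j,
      nsmul_eq_nsmul_iff_modEq, Nat.ModEq]

lemma card_image_val_mod {d : ℕ} (hd : d ∣ m) :
    #(univ.image fun i : ZMod m => i.val % d) = d := by
  have hm := NeZero.pos m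
  have hdm := Nat.le_of_dvd hm hd
  suffices univ.image (fun i : ZMod m => i.val % d) = range d by rw [this, card_range]
  ext x
  simp only [mem_image, mem_univ, true_and, mem_range]
  refine ⟨?_, fun hx => ⟨x, ?_⟩⟩
  · rintro ⟨i, rfl⟩
    exact Nat.mod_lt _ (Nat.pos_of_dvd_of_pos hd hm)
  · rw [ZMod.val_natCast, Nat.mod_eq_of_lt (hx.trans_le hdm), Nat.mod_eq_of_lt hx]

end Periods

section TightWalks

open Finset

variable {I α : Type*} [DecidableEq α] {r : ℕ} {v : I → α} {p : I → Fin r × Fin r}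

lemma pair_subset_endpoints [Fintype I] [AddGroup I] [One I] (v : I → α) (p : I → Fin r × Fin r)
    (i : I) : {(v i, (p i).1), (v i, (p i).2)} ⊆
      {x ∈ endpoints (outgoing v p) (incoming v p) | x.1 = v i} := by
  simp only [insert_subset_iff, singleton_subset_iff, mem_filter, mem_endpoints, and_true]
  exact ⟨.inl ⟨i, rfl⟩, .inr ⟨i - 1, incoming_sub_one v p i⟩⟩

lemma card_pair_ports (hp : ∀ i, (p i).1 ≠ (p i).2) (i : I) :
    #{(v i, (p i).1), (v i, (p i).2)} = 2 :=
  card_pair fun h => hp i (Prod.mk.inj h).2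

lemma two_le_card_filter_endpoints [Fintype I] [AddGroup I] [One I]
    (hp : ∀ i, (p i).1 ≠ (p i).2) :
    ∀ u ∈ univ.image v, 2 ≤ #{x ∈ endpoints (outgoing v p) (incoming v p) | x.1 = u} := by
  intro u hu
  obtain ⟨i, -, rfl⟩ := mem_image.mp hu
  exact (card_pair_ports hp i).ge.trans (card_le_card (pair_subset_endpoints v p i))

lemma card_endpoints_eq_sum_fiber [Fintype I] [Add I] [One I] (v : I → α)
    (p : I → Fin r × Fin r) : #(endpoints (outgoing v p) (incoming v p)) =
      ∑ u ∈ univ.image v, #{x ∈ endpoints (outgoing v p) (incoming v p) | x.1 = u} := by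
  refine card_eq_sum_card_fiberwise fun x hx => ?_
  rcases mem_endpoints.mp hx with ⟨i, rfl⟩ | ⟨i, rfl⟩
  · exact mem_image_of_mem v (mem_univ i)
  · exact mem_image_of_mem v (mem_univ (i + 1))

lemma two_mul_card_image_le_card_endpoints [Fintype I] [AddGroup I] [One I]
    (hp : ∀ i, (p i).1 ≠ (p i).2) :
    2 * #(univ.image v) ≤ #(endpoints (outgoing v p) (incoming v p)) := by
  rw [card_endpoints_eq_sum_fiber, mul_comm, ← smul_eq_mul, ← sum_const]
  exact sum_le_sum (two_le_card_filter_endpoints hp)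

lemma port_eq_or_eq_of_tight [Fintype I] [AddGroup I] [One I] (hp : ∀ i, (p i).1 ≠ (p i).2)
    (htight : #(endpoints (outgoing v p) (incoming v p)) = 2 * #(univ.image v)) {i j : I}
    (hij : v j = v i) : (p j).1 = (p i).1 ∨ (p j).1 = (p i).2 := by
  have hsum := card_endpoints_eq_sum_fiber v p
  rw [htight, mul_comm, ← smul_eq_mul, ← sum_const,
    sum_eq_sum_iff_of_le (two_le_card_filter_endpoints hp)] at hsum
  have hpair := eq_of_subset_of_card_le (pair_subset_endpoints v p i)
    (by rw [card_pair_ports hp i, ← hsum _ (mem_image_of_mem v (mem_univ i))])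
  have hmem := pair_subset_endpoints v p j (mem_insert_self _ _)
  rw [hij, ← hpair] at hmem
  simpa using hmem

variable {m : ℕ} [NeZero m] {v : ZMod m → α} {p : ZMod m → Fin r × Fin r}

lemma outgoing_add_eq_incoming_sub (h : IsRealizable v p)
    (htight : #(endpoints (outgoing v p) (incoming v p)) = 2 * #(univ.image v)) {i j : ZMod m}
    (hij : v j = v i) (hport : (p j).1 = (p i).2) (s : ℕ) :
    outgoing v p (j + s) = incoming v p (i - 1 - s) := by
  induction s with
  | zero => simp [incoming_sub_one, outgoing, hij, hport]
  | succ s ih =>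
    obtain ⟨hvertex, hback⟩ := Prod.mk.inj (h.isPartialMatching.right_eq_of_left_eq _ _ ih)
    have hforth : (p (j + s + 1)).1 = (p (i - 1 - s)).2 :=
      (port_eq_or_eq_of_tight h.ports_ne htight hvertex).resolve_left
        fun heq => h.ports_ne _ (heq.trans hback.symm)
    push_cast
    rw [← add_assoc, ← sub_sub, incoming_sub_one, outgoing, hvertex, hforth]

/- Otherwise the walk, followed forwards from `j` and backwards from `i`, retraces itself until
the two ends meet, either in a turn or in an edge traversed in both directions at once. -/
lemma port_eq_of_tight (h : IsRealizable v p)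
    (htight : #(endpoints (outgoing v p) (incoming v p)) = 2 * #(univ.image v)) {i j : ZMod m}
    (hij : v j = v i) : (p j).1 = (p i).1 := by
  refine (port_eq_or_eq_of_tight h.ports_ne htight hij).resolve_right fun hport => ?_
  have hretrace := outgoing_add_eq_incoming_sub h htight hij hport
  have hi : i = j + ((i - j).val : ℕ) := by rw [ZMod.natCast_zmod_val]; ring
  generalize (i - j).val = δ at hi
  rcases Nat.even_or_odd' δ with ⟨_ | s, rfl | rfl⟩
  · obtain rfl : i = j := by simpa using hi
    exact h.ports_ne _ hport
  · have hs := hretrace 0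
    rw [show i - 1 - ((0 : ℕ) : ZMod m) = j + (0 : ℕ) by rw [hi]; push_cast; ring] at hs
    exact h.isPartialMatching.ne _ hs
  · have hs := hretrace s
    rw [show i - 1 - (s : ZMod m) = j + s + 1 by rw [hi]; push_cast; ring] at hs
    exact h.ports_ne _ (Prod.mk.inj (h.isPartialMatching.right_eq_of_left_eq _ _ hs)).2.symm
  · have hs := hretrace (s + 1)
    rw [show i - 1 - ((s + 1 : ℕ) : ZMod m) = j + (s + 1 : ℕ) by rw [hi]; push_cast; ring] at hs
    exact h.isPartialMatching.ne _ hs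

lemma incoming_eq_of_tight (h : IsRealizable v p)
    (htight : #(endpoints (outgoing v p) (incoming v p)) = 2 * #(univ.image v)) {i j : ZMod m}
    (hij : v j = v i) : incoming v p j = incoming v p i :=
  (h.isPartialMatching.left_eq_iff j i).mp (Prod.ext hij (port_eq_of_tight h htight hij))

lemma vertex_add_eq_of_tight (h : IsRealizable v p)
    (htight : #(endpoints (outgoing v p) (incoming v p)) = 2 * #(univ.image v)) {i j : ZMod m}
    (hij : v j = v i) (x : ZMod m) : v (j + x) = v (i + x) := by
  rw [← ZMod.natCast_zmod_val x]
  induction x.val with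
  | zero => simpa using hij
  | succ s ih =>
    push_cast
    rw [← add_assoc, ← add_assoc]
    exact congrArg Prod.fst (incoming_eq_of_tight h htight ih)

lemma ports_eq_of_tight (h : IsRealizable v p)
    (htight : #(endpoints (outgoing v p) (incoming v p)) = 2 * #(univ.image v)) {i j : ZMod m}
    (hij : v j = v i) : p j = p i := by
  have hprev : v (j - 1) = v (i - 1) := by
    simpa only [sub_eq_add_neg] using vertex_add_eq_of_tight h htight hij (-1)
  have hincoming := incoming_eq_of_tight h htight hprev
  rw [incoming_sub_one, incoming_sub_one] at hincoming
  exact Prod.ext (port_eq_of_tight h htight hij) (Prod.mk.inj hincoming).2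

end TightWalks

section TightTypes

open Finset

variable {r k : ℕ}

lemma card_halfEdges {T : WalkType r k} (hT : T ∈ walkTypes r k) :
    #T.halfEdges = 2 * T.numEdges :=
  (Nat.two_mul_div_two_of_even (mem_walkTypes.mp hT).isPartialMatching.even_card_endpoints).symm

lemma numVertices_le_numEdges {T : WalkType r k} (hT : T ∈ walkTypes r k) :
    T.numVertices ≤ T.numEdges := by
  have h : 2 * #(univ.image T.vertex) ≤ #T.halfEdges :=
    two_mul_card_image_le_card_endpoints (mem_walkTypes.mp hT).ports_ne
  rw [T.card_image_vertex, card_halfEdges hT] at h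
  omega

lemma tight_walkType {T : WalkType r k} (hT : T ∈ walkTypes r k)
    (htight : T.numEdges = T.numVertices) :
    T.numVertices ∣ k + 1 ∧ T.1 = Setoid.ker (fun i => i.val % T.numVertices) ∧
      ∀ i j, i.val % T.numVertices = j.val % T.numVertices → T.2 i = T.2 j := by
  have hcard : #(endpoints (outgoing T.vertex T.2) (incoming T.vertex T.2)) =
      2 * #(univ.image T.vertex) := by
    rw [T.card_image_vertex, ← htight]
    exact card_halfEdges hT
  have hwalk := mem_walkTypes.mp hT
  obtain ⟨d, hd, hker⟩ := exists_dvd_ker_eq_ker_val_mod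
    fun i j hij => vertex_add_eq_of_tight hwalk hcard hij
  obtain rfl : T.numVertices = d := by
    rw [← T.card_image_vertex, ← card_quotient_ker, ← card_image_val_mod hd, ← card_quotient_ker,
      hker]
  refine ⟨hd, (Setoid.ker_mk_eq T.1).symm.trans hker, fun i j hij => ?_⟩
  have hji : Setoid.ker T.vertex j i := hker ▸ hij.symm
  exact (ports_eq_of_tight hwalk hcard hji).symm

lemma card_tight_walkTypes_le (r k d : ℕ) :
    #{T ∈ walkTypes r k | T.numEdges = d ∧ T.numVertices = d} ≤ (r * r - r) ^ d := by
  have hcard : #(Fintype.piFinset fun _ : Fin d => (univ : Finset (Fin r)).offDiag) =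
      (r * r - r) ^ d := by simp [offDiag_card]
  rw [← hcard]
  refine card_le_card_of_injOn (fun T (i : Fin d) => T.2 ((i : ℕ) : ZMod (k + 1)))
    (fun T hT => ?_) fun T hT T' hT' h => ?_
  · have hwalk := mem_walkTypes.mp (mem_filter.mp hT).1
    exact Fintype.mem_piFinset.mpr fun i => by simpa using hwalk.ports_ne _
  · obtain ⟨hwalk, hedges, hverts⟩ := mem_filter.mp hT
    obtain ⟨hwalk', hedges', hverts'⟩ := mem_filter.mp hT'
    obtain ⟨hdvd, hker, hports⟩ := tight_walkType hwalk (hedges.trans hverts.symm)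
    obtain ⟨-, hker', hports'⟩ := tight_walkType hwalk' (hedges'.trans hverts'.symm)
    rw [hverts] at hdvd hker hports
    rw [hverts'] at hker' hports'
    refine Prod.ext (hker.trans hker'.symm) (funext fun i => ?_)
    have hlt : i.val % d < d := Nat.mod_lt _ (Nat.pos_of_dvd_of_pos hdvd k.succ_pos)
    have hmod : i.val % d = ((i.val % d : ℕ) : ZMod (k + 1)).val % d := by
      rw [ZMod.val_natCast, Nat.mod_eq_of_lt (hlt.trans_le (Nat.le_of_dvd k.succ_pos hdvd)),
        Nat.mod_mod]
    rw [hports _ _ hmod, hports' _ _ hmod]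
    exact congrFun h ⟨i.val % d, hlt⟩

lemma isRealizable_of_injective {I α : Type*} [AddRightCancelSemigroup I] [One I] {v : I → α}
    {p : I → Fin r × Fin r} (hv : Function.Injective v) (hp : ∀ i, (p i).1 ≠ (p i).2) :
    IsRealizable v p where
  ports_ne := hp
  isPartialMatching :=
    { left_eq_iff := fun i j => by
        simp only [outgoing, incoming, Prod.mk.injEq, hv.eq_iff, add_left_inj]
        exact ⟨by rintro ⟨rfl, -⟩; exact ⟨rfl, rfl⟩, by rintro ⟨rfl, -⟩; exact ⟨rfl, rfl⟩⟩
      right_eq_of_left_eq := fun i j h => by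
        obtain ⟨hvertex, hport⟩ := Prod.mk.inj h
        obtain rfl := hv hvertex
        exact absurd hport (hp _)
      ne := fun i h => by
        obtain ⟨hvertex, hport⟩ := Prod.mk.inj h
        rw [← hv hvertex] at hport
        exact hp _ hport }

lemma cycle_mem_walkTypes {p : ZMod (k + 1) → Fin r × Fin r} (hp : ∀ i, (p i).1 ≠ (p i).2) :
    (⊥, p) ∈ walkTypes r k :=
  mem_walkTypes.mpr (isRealizable_of_injective (fun _ _ h => Quotient.exact h) hp)

lemma numVertices_cycle (p : ZMod (k + 1) → Fin r × Fin r) :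
    WalkType.numVertices (⊥, p) = k + 1 := by
  have hinj : Function.Injective (WalkType.vertex (⊥, p)) := fun _ _ h => Quotient.exact h
  rw [← WalkType.card_image_vertex, card_image_of_injective _ hinj, card_univ, ZMod.card]

lemma card_cycle_walkTypes (r k : ℕ) :
    #{T ∈ walkTypes r k | T.numEdges = k + 1 ∧ T.numVertices = k + 1} = (r * r - r) ^ (k + 1) := by
  refine (card_tight_walkTypes_le r k (k + 1)).antisymm ?_
  have hcard : #(Fintype.piFinset fun _ : ZMod (k + 1) => (univ : Finset (Fin r)).offDiag) =
      (r * r - r) ^ (k + 1) := by simp [offDiag_card, ZMod.card]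
  rw [← hcard]
  refine card_le_card_of_injOn (fun p => (⊥, p)) (fun p hp => ?_)
    fun p _ p' _ h => (Prod.mk.inj h).2
  have hmem : (⊥, p) ∈ walkTypes r k :=
    cycle_mem_walkTypes fun i => by simpa using Fintype.mem_piFinset.mp hp i
  have hverts := numVertices_cycle p
  have hedges := numVertices_le_numEdges hmem
  rw [hverts] at hedges
  exact mem_filter.mpr ⟨hmem, (WalkType.numEdges_le _).antisymm hedges, hverts⟩

end TightTypes

section RationalTraces

open Finset Polynomial

variable {r q k : ℕ}

/-- The common denominator, as a polynomial in `1 / n`, of the probabilities that given sets of at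
most `q` edges are present in a random matching of `n * r` half-edges. -/
noncomputable def traceDenominator (r q : ℕ) : ℝ[X] :=
  ∏ j ∈ range q, (1 - C ((2 * (j : ℝ) + 1) / r) * X)

/-- The numerator, as a polynomial in `1 / n`, of the expected number of closed non-backtracking
walks with `k + 1` steps, over the denominator `traceDenominator r q`. -/
noncomputable def traceNumerator (r q k : ℕ) : ℝ[X] :=
  ∑ T ∈ walkTypes r k, X ^ (T.numEdges - T.numVertices) *
    (∏ i ∈ range T.numVertices, (1 - C (i : ℝ) * X)) * C (((r : ℝ) ^ T.numEdges)⁻¹) *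
    ∏ j ∈ Ico T.numEdges q, (1 - C ((2 * (j : ℝ) + 1) / r) * X)

lemma natDegree_prod_one_sub_C_mul_X_le {ι : Type*} (s : Finset ι) (c : ι → ℝ) :
    (∏ i ∈ s, (1 - C (c i) * X)).natDegree ≤ #s := by
  refine (natDegree_prod_le _ _).trans ((sum_le_card_nsmul _ _ 1 fun i _ => ?_).trans (by simp))
  compute_degree

lemma natDegree_traceNumerator_le (hk : k + 1 ≤ q) : (traceNumerator r q k).natDegree ≤ q := by
  refine natDegree_sum_le_of_forall_le _ _ fun T hT => ?_
  have hVE := numVertices_le_numEdges hT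
  have hE := T.numEdges_le
  have hfalling := natDegree_prod_one_sub_C_mul_X_le (range T.numVertices) fun i => (i : ℝ)
  have hrest := natDegree_prod_one_sub_C_mul_X_le (Ico T.numEdges q) fun j => (2 * (j : ℝ) + 1) / r
  rw [card_range] at hfalling
  rw [Nat.card_Ico] at hrest
  have hfirst := natDegree_mul_le_of_le (natDegree_X_pow_le (R := ℝ) (T.numEdges - T.numVertices))
    hfalling
  exact (natDegree_mul_le_of_le ((natDegree_mul_C_le _ _).trans hfirst) hrest).trans (by omega)

lemma cast_descFactorial_eq_pow_mul_prod {n : ℕ} (hn : n ≠ 0) (v : ℕ) :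
    (n.descFactorial v : ℝ) = (n : ℝ) ^ v * ∏ i ∈ range v, (1 - (i : ℝ) * (1 / n)) := by
  induction v with
  | zero => simp
  | succ v ih =>
    rw [Nat.descFactorial_succ, prod_range_succ, Nat.cast_mul, ih, pow_succ]
    rcases le_or_gt v n with h | h
    · rw [Nat.cast_sub h]
      field_simp
    · have hzero : (n.descFactorial v : ℝ) = 0 := by
        exact_mod_cast Nat.descFactorial_eq_zero_iff_lt.mpr h
      rw [ih] at hzero
      rw [hzero, mul_zero, mul_right_comm, ← mul_assoc, hzero, zero_mul, zero_mul]

lemma prod_mul_sub_one_sub_two_mul {n : ℕ} (hn : n ≠ 0) (hr : r ≠ 0) (e : ℕ) :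
    ∏ j ∈ range e, (((n * r : ℕ) : ℝ) - 1 - 2 * j) =
      ((n : ℝ) * r) ^ e * ∏ j ∈ range e, (1 - (2 * (j : ℝ) + 1) / r * (1 / n)) := by
  rw [← card_range e, ← prod_const, card_range, ← prod_mul_distrib]
  refine prod_congr rfl fun j _ => ?_
  push_cast
  field_simp
  ring

lemma sum_walkTypes_eq_eval_div {n : ℕ} (hr : r ≠ 0) (hn : n ≠ 0) (hk : k + 1 ≤ q)
    (hq : 2 * q ≤ n * r) :
    ∑ T ∈ walkTypes r k, n.descFactorial T.numVertices * T.probability (n * r) =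
      (traceNumerator r q k).eval (1 / (n : ℝ)) / (traceDenominator r q).eval (1 / (n : ℝ)) := by
  have hden : (∏ j ∈ range q, (1 - (2 * (j : ℝ) + 1) / r * (1 / n))) ≠ 0 := by
    refine right_ne_zero_of_mul (a := ((n : ℝ) * r) ^ q) ?_
    rw [← prod_mul_sub_one_sub_two_mul hn hr]
    exact prod_ne_zero_iff.mpr fun j hj => (sub_one_sub_two_mul_pos hq (mem_range.mp hj)).ne'
  rw [traceNumerator, traceDenominator, eval_finsetSum, sum_div]
  refine sum_congr rfl fun T hT => ?_
  obtain ⟨s, hs⟩ := Nat.exists_eq_add_of_le (numVertices_le_numEdges hT)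
  rw [← prod_range_mul_prod_Ico _ (T.numEdges_le.trans hk)] at hden ⊢
  have hden' := mul_ne_zero_iff.mp hden
  simp only [eval_mul, eval_pow, eval_X, eval_prod, eval_sub, eval_one, eval_C]
  rw [WalkType.probability, prod_mul_sub_one_sub_two_mul hn hr,
    cast_descFactorial_eq_pow_mul_prod hn, eq_div_iff hden]
  generalize ∏ i ∈ range T.numVertices, (1 - (i : ℝ) * (1 / n)) = falling
  generalize ∏ j ∈ range T.numEdges, (1 - (2 * (j : ℝ) + 1) / r * (1 / n)) = used at hden' ⊢
  have hused := hden'.1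
  rw [mul_pow, hs, Nat.add_sub_cancel_left, one_div, inv_pow, pow_add]
  field_simp

lemma eval_zero_traceNumerator (r q k : ℕ) :
    (traceNumerator r q k).eval 0 = ∑ d ∈ range (k + 2),
      #{T ∈ walkTypes r k | T.numEdges = d ∧ T.numVertices = d} * ((r : ℝ) ^ d)⁻¹ := by
  have htight : (traceNumerator r q k).eval 0 =
      ∑ T ∈ walkTypes r k with T.numEdges = T.numVertices, ((r : ℝ) ^ T.numEdges)⁻¹ := by
    rw [traceNumerator, eval_finsetSum, sum_filter]
    refine sum_congr rfl fun T hT => ?_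
    have hle := numVertices_le_numEdges hT
    simp only [eval_mul, eval_pow, eval_X, eval_prod, eval_sub, eval_one, eval_C, mul_zero,
      sub_zero, prod_const_one, mul_one]
    split_ifs with h
    · rw [h, Nat.sub_self, pow_zero, one_mul]
    · rw [zero_pow (by omega), zero_mul]
  rw [htight, ← sum_fiberwise_of_maps_to (t := range (k + 2)) (g := WalkType.numEdges)
    fun T _ => mem_range.mpr (Nat.lt_succ_of_le T.numEdges_le)]
  refine sum_congr rfl fun d _ => ?_
  rw [filter_filter, sum_congr rfl fun T hT => by rw [(mem_filter.mp hT).2.2], sum_const,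
    nsmul_eq_mul]
  congr 3
  ext T
  simp only [mem_filter]
  exact and_congr_right fun _ => by omega

lemma cast_pow_mul_inv_pow (hr : r ≠ 0) (d : ℕ) :
    (((r * r - r) ^ d : ℕ) : ℝ) * ((r : ℝ) ^ d)⁻¹ = ((r : ℝ) - 1) ^ d := by
  have hcast : ((r * r - r : ℕ) : ℝ) = r * (r - 1) := by
    rw [Nat.cast_sub (Nat.le_mul_self r)]
    push_cast
    ring
  rw [Nat.cast_pow, hcast, mul_pow]
  field_simp

lemma card_tight_walkTypes_mul_inv_pow_le (hr : 2 ≤ r) {d : ℕ} (hd : d < k + 1) :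
    #{T ∈ walkTypes r k | T.numEdges = d ∧ T.numVertices = d} * ((r : ℝ) ^ d)⁻¹ ≤
      √((r : ℝ) - 1) ^ (k + 1) := by
  have hr2 : (2 : ℝ) ≤ r := by exact_mod_cast hr
  rcases ({T ∈ walkTypes r k | T.numEdges = d ∧ T.numVertices = d}).eq_empty_or_nonempty
    with hempty | ⟨T, hT⟩
  · rw [hempty, card_empty, Nat.cast_zero, zero_mul]
    positivity
  · obtain ⟨hT, hedges, hverts⟩ := mem_filter.mp hT
    obtain ⟨c, hc⟩ := hverts ▸ (tight_walkType hT (hedges.trans hverts.symm)).1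
    have hc2 : 2 ≤ c := by
      by_contra! hlt
      interval_cases c <;> omega
    have hle : 2 * d ≤ k + 1 := by rw [hc, mul_comm]; exact Nat.mul_le_mul_left d hc2
    calc _ ≤ (((r * r - r) ^ d : ℕ) : ℝ) * ((r : ℝ) ^ d)⁻¹ := by
          gcongr
          exact card_tight_walkTypes_le r k d
      _ = √((r : ℝ) - 1) ^ (2 * d) := by
          rw [cast_pow_mul_inv_pow (by omega), pow_mul, Real.sq_sqrt (by linarith)]
      _ ≤ √((r : ℝ) - 1) ^ (k + 1) :=
          pow_le_pow_right₀ (Real.one_le_sqrt.mpr (by linarith)) hle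

/- In the limit `n → ∞` only tight walks survive: the walks once around a cycle of length `k + 1`
give `(r - 1) ^ (k + 1)`, and multiple turns around shorter cycles give lower order terms. -/
lemma abs_eval_zero_traceNumerator_sub_le (hr : 2 ≤ r) (q k : ℕ) :
    |(traceNumerator r q k).eval 0 - ((r : ℝ) - 1) ^ (k + 1)| ≤
      (k + 1) * √((r : ℝ) - 1) ^ (k + 1) := by
  rw [eval_zero_traceNumerator, sum_range_succ, card_cycle_walkTypes,
    cast_pow_mul_inv_pow (by omega), add_sub_cancel_right,
    abs_of_nonneg (sum_nonneg fun d _ => by positivity)]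
  refine (sum_le_card_nsmul _ _ _ fun d hd =>
    card_tight_walkTypes_mul_inv_pow_le hr (mem_range.mp hd)).trans_eq ?_
  rw [card_range, nsmul_eq_mul, Nat.cast_succ]

lemma eval_traceDenominator_bounds {x : ℝ} (hx : 0 ≤ x) (hr : 0 < r)
    (hqx : 2 * (q : ℝ) * x ≤ r) :
    1 - (q : ℝ) ^ 2 * x / r ≤ (traceDenominator r q).eval x ∧
      (traceDenominator r q).eval x ∈ Set.Icc 0 1 := by
  have hr' : (0 : ℝ) < r := by exact_mod_cast hr
  induction q with
  | zero => simp [traceDenominator]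
  | succ q ih =>
    push_cast at hqx
    obtain ⟨hlow, hnonneg, hone⟩ := ih (by nlinarith)
    rw [traceDenominator, prod_range_succ, eval_mul, ← traceDenominator]
    simp only [eval_sub, eval_one, eval_mul, eval_C, eval_X]
    set y := (2 * (q : ℝ) + 1) / r * x with hy
    have hy0 : 0 ≤ y := by positivity
    have hy1 : y ≤ 1 := by
      rw [hy, div_mul_eq_mul_div, div_le_one hr']
      nlinarith
    have hsq : ((q + 1 : ℕ) : ℝ) ^ 2 * x / r = (q : ℝ) ^ 2 * x / r + y := by
      rw [hy]
      push_cast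
      field_simp
      ring
    refine ⟨?_, mul_nonneg hnonneg (by linarith), by nlinarith⟩
    rw [hsq]
    nlinarith

end RationalTraces

section DicksonExpansion

open Finset Polynomial

variable {q : ℕ}

lemma dickson_one_sq_comp (a : ℝ) (k : ℕ) :
    (dickson 1 (a ^ 2) k).comp (C (2 * a) * X) = C (2 * a ^ k) * Chebyshev.T ℝ (k : ℤ) := by
  induction k using Nat.twoStepInduction with
  | zero =>
    rw [dickson_zero, Nat.cast_one, Nat.cast_zero, Chebyshev.T_zero, mul_one, pow_zero, mul_one,
      map_ofNat, sub_comp, one_comp, ofNat_comp]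
    norm_num
  | one => simp
  | more k ih₀ ih₁ =>
    have hcast : ((k + 2 : ℕ) : ℤ) = (k : ℤ) + 2 := by push_cast; ring
    have hcast' : ((k + 1 : ℕ) : ℤ) = (k : ℤ) + 1 := by push_cast; ring
    rw [dickson_add_two, hcast, Chebyshev.T_add_two, sub_comp, mul_comp, mul_comp, X_comp, C_comp,
      ih₀, ih₁, hcast']
    simp only [map_mul, map_pow, map_ofNat]
    ring

lemma eval_dickson_one_sub_one (x : ℝ) (k : ℕ) :
    (dickson 1 (x - 1) k).eval x = (x - 1) ^ k + 1 := by
  induction k using Nat.twoStepInduction with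
  | zero => norm_num [dickson_zero]
  | one => simp
  | more k ih₀ ih₁ =>
    rw [dickson_add_two, eval_sub, eval_mul, eval_mul, ih₀, ih₁, eval_X, eval_C]
    ring

lemma comp_C_mul_X_comp_C_inv_mul_X {b : ℝ} (hb : b ≠ 0) (p : ℝ[X]) :
    (p.comp (C b * X)).comp (C b⁻¹ * X) = p := by
  rw [comp_assoc, mul_comp, C_comp, X_comp, ← mul_assoc, ← C_mul, mul_inv_cancel₀ hb, C_1,
    one_mul, comp_X]

lemma exists_eq_sum_C_mul_dickson {a : ℝ} (ha : 0 < a) {p : ℝ[X]} (hp : p.natDegree ≤ q) {K : ℝ}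
    (hK : ∀ x, |x| ≤ 2 * a → |p.eval x| ≤ K) :
    ∃ c : ℕ → ℝ, p = ∑ k ∈ range (q + 1), C (c k) * dickson 1 (a ^ 2) k ∧
      ∀ k ≤ q, |c k| * a ^ k ≤ K := by
  have hdeg : (p.comp (C (2 * a) * X)).natDegree ≤ q := by
    rw [natDegree_comp]
    exact (Nat.mul_le_mul hp (by compute_degree)).trans_eq (mul_one q)
  obtain ⟨c, hc, hbound⟩ := exists_eq_sum_C_mul_T_abs_le hdeg fun x hx => by
    rw [eval_comp]
    refine hK _ ?_
    rw [eval_mul, eval_C, eval_X, abs_mul, abs_of_pos (by positivity : 0 < 2 * a)]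
    exact mul_le_of_le_one_right (by positivity) hx
  refine ⟨fun k => c k / (2 * a ^ k), ?_, fun k hk => ?_⟩
  · rw [← comp_C_mul_X_comp_C_inv_mul_X (b := 2 * a) (by positivity)
      (∑ k ∈ range (q + 1), _), ← comp_C_mul_X_comp_C_inv_mul_X (b := 2 * a) (by positivity) p, hc]
    congr 1
    rw [Polynomial.sum_comp]
    refine sum_congr rfl fun k _ => ?_
    rw [mul_comp, dickson_one_sq_comp, C_comp, ← mul_assoc, ← C_mul, div_mul_cancel₀ _
      (by positivity)]
  · have hhalf : |c k| / (2 * a ^ k) * a ^ k = |c k| / 2 := by field_simp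
    rw [abs_div, abs_of_pos (by positivity : 0 < 2 * a ^ k), hhalf]
    linarith [hbound k hk]

end DicksonExpansion

section ExpectedPolynomialTraces

open Finset Polynomial Matrix

variable {r q : ℕ} {c : ℕ → ℝ} {K : ℝ}

/-- The mean of `∑ k ≤ q, c k * dickson 1 (r - 1) k` under the spectral density of the infinite
`r`-regular tree. -/
noncomputable def treeMean (r q : ℕ) (c : ℕ → ℝ) : ℝ :=
  2 * c 0 - ∑ k ∈ range q, c (k + 1) * if Even (k + 1) then (r : ℝ) - 2 else 0

lemma abs_treeMean_le (hr : 2 ≤ r) (hc : ∀ k ≤ q, |c k| ≤ K) :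
    |treeMean r q c| ≤ r * (q + 1) * K := by
  have hr2 : (2 : ℝ) ≤ r := by exact_mod_cast hr
  have hc0 := hc 0 (Nat.zero_le q)
  have hK : 0 ≤ K := (abs_nonneg _).trans hc0
  have hsum : |∑ k ∈ range q, c (k + 1) * (if Even (k + 1) then (r : ℝ) - 2 else 0)| ≤
      q * (K * (r - 2)) := by
    refine (abs_sum_le_sum_abs _ _).trans ((sum_le_card_nsmul _ _ _ fun k hk => ?_).trans_eq
      (by rw [card_range, nsmul_eq_mul]))
    rw [abs_mul]
    refine mul_le_mul (hc _ (mem_range.mp hk)) ?_ (abs_nonneg _) hK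
    split_ifs
    · rw [abs_of_nonneg (by linarith)]
    · simpa using hr2
  have htwo : |2 * c 0| ≤ 2 * K := by
    rw [abs_mul, abs_two]
    linarith
  refine (abs_sub _ _).trans ((add_le_add htwo hsum).trans ?_)
  nlinarith [mul_nonneg (Nat.cast_nonneg (α := ℝ) q) hK]

lemma IsPerfectMatching.trace_aeval_sum_dickson {V : Type*} [Fintype V] [DecidableEq V]
    {σ : Equiv.Perm (V × Fin r)} (hσ : IsPerfectMatching σ) (q : ℕ) (c : ℕ → ℝ) :
    (aeval (adjacency σ) (∑ k ∈ range (q + 1), C (c k) * dickson 1 ((r : ℝ) - 1) k)).trace =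
      Fintype.card V * treeMean r q c +
        ∑ k ∈ range q, c (k + 1) * (nonBacktracking σ ^ (k + 1)).trace := by
  rw [sum_range_succ', map_add, map_sum, trace_add, trace_sum, treeMean]
  simp only [map_mul, aeval_C, aeval_dickson_zero, Algebra.algebraMap_eq_smul_one, smul_mul_assoc,
    one_mul, trace_smul, trace_one, smul_eq_mul, hσ.trace_nonBacktracking_pow, mul_add,
    sum_add_distrib, mul_sub, mul_sum]
  have hcorrection (k : ℕ) : c (k + 1) * (if Even (k + 1) then ((r : ℝ) - 2) * Fintype.card V
      else 0) = Fintype.card V * (c (k + 1) * if Even (k + 1) then (r : ℝ) - 2 else 0) := by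
    split_ifs <;> ring
  simp only [hcorrection]
  ring

lemma abs_sum_eval_zero_traceNumerator_sub_le (hr : 2 ≤ r)
    (hc : ∀ k ≤ q, |c k| * √((r : ℝ) - 1) ^ k ≤ K) (hc' : ∀ k ≤ q, |c k| ≤ K) :
    |∑ k ∈ range q, c (k + 1) * (traceNumerator r q k).eval 0 -
      ∑ k ∈ range (q + 1), c k * (((r : ℝ) - 1) ^ k + 1)| ≤ 2 * (q + 1) ^ 2 * K := by
  have hterm : ∀ k ∈ range q, |c (k + 1) * ((traceNumerator r q k).eval 0 -
      ((r : ℝ) - 1) ^ (k + 1)) - c (k + 1)| ≤ K * q + K := fun k hk => by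
    have hkq : k + 1 ≤ q := mem_range.mp hk
    refine (abs_sub _ _).trans (add_le_add ?_ (hc' _ hkq))
    calc _ ≤ |c (k + 1)| * ((k + 1) * √((r : ℝ) - 1) ^ (k + 1)) := by
          rw [abs_mul]
          gcongr
          exact abs_eval_zero_traceNumerator_sub_le hr q k
      _ = |c (k + 1)| * √((r : ℝ) - 1) ^ (k + 1) * ((k + 1 : ℕ) : ℝ) := by push_cast; ring
      _ ≤ K * q := by
          gcongr
          · exact (abs_nonneg _).trans (hc' _ hkq)
          · exact hc _ hkq
  have hsum := (abs_sum_le_sum_abs _ _).trans (sum_le_card_nsmul _ _ _ hterm)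
  have htwo : |2 * c 0| ≤ 2 * K := by
    rw [abs_mul, abs_two]
    linarith [hc' 0 (Nat.zero_le q)]
  have hK : 0 ≤ K := (abs_nonneg _).trans (hc' 0 (Nat.zero_le q))
  rw [card_range, nsmul_eq_mul] at hsum
  have hsplit : ∑ k ∈ range q, c (k + 1) * (traceNumerator r q k).eval 0 -
      ∑ k ∈ range (q + 1), c k * (((r : ℝ) - 1) ^ k + 1) =
      ∑ k ∈ range q, (c (k + 1) * ((traceNumerator r q k).eval 0 - ((r : ℝ) - 1) ^ (k + 1)) -
        c (k + 1)) - 2 * c 0 := by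
    rw [sum_range_succ', ← sub_sub, ← sum_sub_distrib]
    congr 1
    · exact sum_congr rfl fun k _ => by ring
    · ring
  rw [hsplit]
  refine (abs_sub _ _).trans ((add_le_add hsum htwo).trans ?_)
  nlinarith [mul_nonneg (Nat.cast_nonneg (α := ℝ) q) hK]

theorem exists_sum_trace_aeval_adjacency_eq (hr : 2 ≤ r) {p : ℝ[X]} (hp : p.natDegree ≤ q)
    (hK : ∀ x, |x| ≤ 2 * √((r : ℝ) - 1) → |p.eval x| ≤ K) :
    ∃ (μ : ℝ) (P : ℝ[X]), P.natDegree ≤ q ∧ |μ| ≤ r * (q + 1) * K ∧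
      |P.eval 0 - p.eval (r : ℝ)| ≤ 2 * (q + 1) ^ 2 * K ∧
      ∀ n : ℕ, n ≠ 0 → 2 * q ≤ n * r →
        ∑ σ ∈ perfectMatchings (Fin n × Fin r), (aeval (adjacency σ) p).trace =
          #(perfectMatchings (Fin n × Fin r)) *
            (n * μ + P.eval (1 / (n : ℝ)) / (traceDenominator r q).eval (1 / (n : ℝ))) := by
  have hr2 : (2 : ℝ) ≤ r := by exact_mod_cast hr
  have hone : 1 ≤ √((r : ℝ) - 1) := Real.one_le_sqrt.mpr (by linarith)
  obtain ⟨c, rfl, hc⟩ := exists_eq_sum_C_mul_dickson (one_pos.trans_le hone) hp hK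
  rw [Real.sq_sqrt (by linarith)]
  have hc' (k : ℕ) (hk : k ≤ q) : |c k| ≤ K :=
    (le_mul_of_one_le_right (abs_nonneg _) (one_le_pow₀ hone)).trans (hc k hk)
  refine ⟨treeMean r q c, ∑ k ∈ range q, C (c (k + 1)) * traceNumerator r q k,
    natDegree_sum_le_of_forall_le _ _ fun k hk =>
      (natDegree_C_mul_le _ _).trans (natDegree_traceNumerator_le (mem_range.mp hk)),
    abs_treeMean_le hr hc', ?_, fun n hn hqn => ?_⟩
  · simpa only [eval_finsetSum, eval_mul, eval_C, eval_dickson_one_sub_one] using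
      abs_sum_eval_zero_traceNumerator_sub_le hr hc hc'
  · have htrace (k : ℕ) (hk : k ∈ range q) := by
      have hkq : k + 1 ≤ q := mem_range.mp hk
      exact (sum_trace_nonBacktracking_pow n k (by omega : 2 * (k + 1) ≤ n * r)).trans
        (congrArg _ (sum_walkTypes_eq_eval_div (by omega) hn hkq hqn))
    rw [sum_congr rfl fun σ hσ => (mem_perfectMatchings.mp hσ).trace_aeval_sum_dickson q c,
      sum_add_distrib, sum_const, nsmul_eq_mul, sum_comm, Fintype.card_fin, mul_add, eval_finsetSum,
      sum_div, mul_sum]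
    congr 1
    refine sum_congr rfl fun k hk => ?_
    rw [← mul_sum, htrace k hk, eval_mul, eval_C]
    ring

end ExpectedPolynomialTraces

section SpectralTraces

open Finset Matrix Polynomial

variable {V : Type*} [Fintype V] {A : Matrix V V ℝ} {r μ b δ : ℝ} {f : V → ℝ} {p : ℝ[X]}

lemma mulVec_one_eq_smul (hrow : ∀ u, ∑ v, A u v = r) : A *ᵥ 1 = r • (1 : V → ℝ) := by
  ext u
  simp [mulVec, dotProduct, hrow]

variable [DecidableEq V]

lemma trace_aeval_eq_sum_eigenvalues (hA : A.IsHermitian) (p : ℝ[X]) :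
    (aeval A p).trace = ∑ i, p.eval (hA.eigenvalues i) := by
  rw [← cfc_polynomial p A hA.isSelfAdjoint, hA.cfc_eq, IsHermitian.cfc,
    Unitary.conjStarAlgAut_apply, trace_mul_comm, ← mul_assoc]
  simp [trace]

lemma mem_spectrum_iff_exists_mulVec_eq_smul :
    μ ∈ spectrum ℝ A ↔ ∃ f ≠ 0, A *ᵥ f = μ • f := by
  rw [← spectrum_toLin', ← Module.End.hasEigenvalue_iff_mem_spectrum]
  constructor
  · rintro h
    obtain ⟨f, hf⟩ := h.exists_hasEigenvector
    exact ⟨f, hf.2, by simpa using hf.apply_eq_smul⟩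
  · rintro ⟨f, hf, hAf⟩
    exact Module.End.hasEigenvalue_of_hasEigenvector
      ⟨Module.End.mem_eigenspace_iff.mpr (by simpa using hAf), hf⟩

lemma eigenvectorBasis_dotProduct_eq_zero (hA : A.IsHermitian) (hf : A *ᵥ f = μ • f) {i : V}
    (hi : hA.eigenvalues i ≠ μ) : (hA.eigenvectorBasis i).ofLp ⬝ᵥ f = 0 := by
  have hsymm : Aᵀ = A := by rwa [← conjTranspose_eq_transpose_of_trivial]
  have hdot := dotProduct_mulVec (hA.eigenvectorBasis i).ofLp A f
  rw [← mulVec_transpose, hsymm, hA.mulVec_eigenvectorBasis, hf, dotProduct_smul, smul_dotProduct,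
    smul_eq_mul, smul_eq_mul] at hdot
  exact (mul_eq_mul_right_iff.mp hdot).resolve_left hi.symm

lemma eq_sum_dotProduct_mul_eigenvectorBasis (hA : A.IsHermitian) (f : V → ℝ) (u : V) :
    f u = ∑ i, ((hA.eigenvectorBasis i).ofLp ⬝ᵥ f) * (hA.eigenvectorBasis i).ofLp u := by
  have hrepr := congrArg (fun x => x.ofLp u) (hA.eigenvectorBasis.sum_repr (WithLp.toLp 2 f))
  simpa [OrthonormalBasis.repr_apply_apply, EuclideanSpace.inner_eq_star_dotProduct,
    dotProduct_comm] using hrepr.symm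

lemma eq_dotProduct_mul_of_forall_eigenvalues_ne (hA : A.IsHermitian) (hf : A *ᵥ f = μ • f) {i : V}
    (hi : ∀ j ≠ i, hA.eigenvalues j ≠ μ) (u : V) :
    f u = ((hA.eigenvectorBasis i).ofLp ⬝ᵥ f) * (hA.eigenvectorBasis i).ofLp u := by
  refine (eq_sum_dotProduct_mul_eigenvectorBasis hA f u).trans
    (sum_eq_single_of_mem i (mem_univ i) fun j _ hj => ?_)
  rw [eigenvectorBasis_dotProduct_eq_zero hA hf (hi j hj), zero_mul]

lemma exists_eigenvalues_eq_of_row_sum [Nonempty V] (hA : A.IsHermitian)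
    (hrow : ∀ u, ∑ v, A u v = r) : ∃ i, hA.eigenvalues i = r := by
  have hr : r ∈ spectrum ℝ A :=
    mem_spectrum_iff_exists_mulVec_eq_smul.mpr ⟨1, one_ne_zero, mulVec_one_eq_smul hrow⟩
  rwa [hA.spectrum_real_eq_range_eigenvalues] at hr

lemma eigenvalues_mem_Icc_of_row_sum (hA : A.IsHermitian) (hrow : ∀ u, ∑ v, A u v = r)
    (hnonneg : ∀ u v, 0 ≤ A u v) (i : V) : hA.eigenvalues i ∈ Set.Icc (-r) r := by
  have hi := hA.eigenvalues_mem_spectrum_real i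
  rw [← spectrum_toLin', ← Module.End.hasEigenvalue_iff_mem_spectrum] at hi
  obtain ⟨u, hu⟩ := eigenvalue_mem_ball hi
  simp only [Real.norm_eq_abs, abs_of_nonneg (hnonneg _ _), Metric.mem_closedBall,
    Real.dist_eq] at hu
  have hsum := add_sum_erase univ (A u) (mem_univ u)
  rw [hrow u] at hsum
  obtain ⟨hlower, hupper⟩ := abs_le.mp hu
  exact ⟨by linarith [hnonneg u u], by linarith⟩

/-- `A` has an eigenvector which is not constant, with eigenvalue at least `b`. For a matrix with
constant row sums `r ≥ b` this says that its second-largest eigenvalue, counted with multiplicity,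
is at least `b`. -/
def HasNonconstantEigenvector (A : Matrix V V ℝ) (b : ℝ) : Prop :=
  ∃ μ ≥ b, ∃ f : V → ℝ, A *ᵥ f = μ • f ∧ ∃ u v, f u ≠ f v

lemma HasNonconstantEigenvector.exists_ne [Nonempty V] (h : HasNonconstantEigenvector A b)
    (hA : A.IsHermitian) (hrow : ∀ u, ∑ v, A u v = r) (hbr : b ≤ r) :
    ∃ i j, i ≠ j ∧ hA.eigenvalues i = r ∧ b ≤ hA.eigenvalues j := by
  obtain ⟨μ, hbμ, f, hf, u, v, huv⟩ := h
  obtain ⟨i, hi⟩ := exists_eigenvalues_eq_of_row_sum hA hrow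
  by_contra! hlt
  have hone := eq_dotProduct_mul_of_forall_eigenvalues_ne hA (mulVec_one_eq_smul hrow)
    fun j hj => ((hlt i j hj.symm hi).trans_le hbr).ne
  have hmul := eq_dotProduct_mul_of_forall_eigenvalues_ne hA hf
    fun j hj => ((hlt i j hj.symm hi).trans_le hbμ).ne
  have hne : (hA.eigenvectorBasis i).ofLp ⬝ᵥ 1 ≠ 0 := by
    intro hzero
    simpa [hzero] using hone u
  refine huv ?_
  rw [hmul u, hmul v, mul_left_cancel₀ hne ((hone u).symm.trans (hone v))]

lemma trace_aeval_mem_Icc (hA : A.IsHermitian) (hrow : ∀ u, ∑ v, A u v = r)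
    (hnonneg : ∀ u v, 0 ≤ A u v) (hp : ∀ x ∈ Set.Icc (-r) r, p.eval x ∈ Set.Icc (0 : ℝ) 1) :
    (aeval A p).trace ∈ Set.Icc (0 : ℝ) (Fintype.card V) := by
  have hmem (i : V) := hp _ (eigenvalues_mem_Icc_of_row_sum hA hrow hnonneg i)
  rw [trace_aeval_eq_sum_eigenvalues hA]
  exact ⟨sum_nonneg fun i _ => (hmem i).1,
    (sum_le_card_nsmul _ _ 1 fun i _ => (hmem i).2).trans_eq (by simp)⟩

lemma eval_le_trace_aeval [Nonempty V] (hA : A.IsHermitian) (hrow : ∀ u, ∑ v, A u v = r)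
    (hnonneg : ∀ u v, 0 ≤ A u v) (hp : ∀ x ∈ Set.Icc (-r) r, 0 ≤ p.eval x) :
    p.eval r ≤ (aeval A p).trace := by
  obtain ⟨i, rfl⟩ := exists_eigenvalues_eq_of_row_sum hA hrow
  rw [trace_aeval_eq_sum_eigenvalues hA]
  exact single_le_sum (f := fun j => p.eval (hA.eigenvalues j))
    (fun j _ => hp _ (eigenvalues_mem_Icc_of_row_sum hA hrow hnonneg j)) (mem_univ i)

lemma HasNonconstantEigenvector.le_trace_aeval [Nonempty V] (h : HasNonconstantEigenvector A b)
    (hA : A.IsHermitian) (hrow : ∀ u, ∑ v, A u v = r) (hnonneg : ∀ u v, 0 ≤ A u v) (hbr : b ≤ r)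
    (hp : ∀ x ∈ Set.Icc (-r) r, 0 ≤ p.eval x) (hpb : ∀ x ∈ Set.Icc b r, δ ≤ p.eval x) :
    p.eval r + δ ≤ (aeval A p).trace := by
  have hmem := eigenvalues_mem_Icc_of_row_sum hA hrow hnonneg
  obtain ⟨i, j, hij, hi, hj⟩ := h.exists_ne hA hrow hbr
  rw [trace_aeval_eq_sum_eigenvalues hA]
  calc p.eval r + δ ≤ p.eval (hA.eigenvalues i) + p.eval (hA.eigenvalues j) := by
        rw [hi]
        gcongr
        exact hpb _ ⟨hj, (hmem j).2⟩
    _ = ∑ k ∈ {i, j}, p.eval (hA.eigenvalues k) := by rw [sum_pair hij]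
    _ ≤ ∑ k, p.eval (hA.eigenvalues k) :=
        sum_le_sum_of_subset_of_nonneg (subset_univ _) fun k _ _ => hp _ (hmem k)

end SpectralTraces

section SpectralGap

open Finset Polynomial

variable {r q n : ℕ} {p P : ℝ[X]} {μ K b δ : ℝ}

lemma two_mul_sqrt_sub_one_lt {x : ℝ} (hx : 2 < x) : 2 * √(x - 1) < x := by
  nlinarith [Real.sq_sqrt (show 0 ≤ x - 1 by linarith), Real.sqrt_nonneg (x - 1),
    sq_nonneg (√(x - 1) - 1)]

lemma bounds_of_sixteen_mul_succ_pow_three_le (hn : 16 * (q + 1) ^ 3 ≤ n) :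
    n ≠ 0 ∧ 2 * q ≤ n ∧ 2 * (q : ℝ) ^ 2 ≤ n := by
  have hpow : (q + 1) ^ 2 ≤ (q + 1) ^ 3 := Nat.pow_le_pow_right (by omega) (by norm_num)
  have hone : 0 < (q + 1) ^ 2 := by positivity
  exact ⟨by omega, by nlinarith, by exact_mod_cast (by nlinarith : 2 * q ^ 2 ≤ n)⟩

lemma eval_traceDenominator_one_div_bounds (hr : 0 < r) (hn : 16 * (q + 1) ^ 3 ≤ n) :
    (traceDenominator r q).eval (1 / (n : ℝ)) ∈ Set.Icc (1 / 2) 1 ∧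
      1 - (q : ℝ) ^ 2 / n ≤ (traceDenominator r q).eval (1 / (n : ℝ)) := by
  obtain ⟨hn0, hqn, hqn2⟩ := bounds_of_sixteen_mul_succ_pow_three_le hn
  have hn0' : (0 : ℝ) < n := by exact_mod_cast hn0.bot_lt
  have hqn' : 2 * (q : ℝ) ≤ n := by exact_mod_cast hqn
  have hr1 : (1 : ℝ) ≤ r := by exact_mod_cast hr
  obtain ⟨hlower, -, hle⟩ := eval_traceDenominator_bounds (q := q) (x := 1 / (n : ℝ))
    (by positivity) hr (by rw [mul_one_div, div_le_iff₀ hn0']; nlinarith)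
  have hdiv : (q : ℝ) ^ 2 * (1 / n) / r ≤ (q : ℝ) ^ 2 / n := by
    rw [mul_one_div]
    exact div_le_self (by positivity) hr1
  have hhalf : (q : ℝ) ^ 2 / n ≤ 1 / 2 := by
    rw [div_le_iff₀ hn0']
    linarith
  exact ⟨⟨by linarith, hle⟩, by linarith⟩

lemma sum_trace_aeval_adjacency_mem_Icc
    (hp : ∀ x ∈ Set.Icc (-(r : ℝ)) r, p.eval x ∈ Set.Icc (0 : ℝ) 1) :
    ∑ σ ∈ perfectMatchings (Fin n × Fin r), (aeval (adjacency σ) p).trace ∈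
      Set.Icc (0 : ℝ) (#(perfectMatchings (Fin n × Fin r)) * n) := by
  have htrace (σ) (hσ : σ ∈ perfectMatchings (Fin n × Fin r)) :=
    trace_aeval_mem_Icc (mem_perfectMatchings.mp hσ).isHermitian_adjacency (sum_adjacency σ)
      (adjacency_nonneg σ) hp
  refine ⟨sum_nonneg fun σ hσ => (htrace σ hσ).1, ?_⟩
  simpa using sum_le_card_nsmul _ _ (n : ℝ) fun σ hσ => by simpa using (htrace σ hσ).2

lemma card_hasNonconstantEigenvector_mul_add_le_sum_trace [NeZero n] (hb : b ≤ r)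
    (hp : ∀ x ∈ Set.Icc (-(r : ℝ)) r, 0 ≤ p.eval x) (hpb : ∀ x ∈ Set.Icc b r, δ ≤ p.eval x) :
    #{σ ∈ perfectMatchings (Fin n × Fin r) | HasNonconstantEigenvector (adjacency σ) b} * δ +
        #(perfectMatchings (Fin n × Fin r)) * p.eval (r : ℝ) ≤
      ∑ σ ∈ perfectMatchings (Fin n × Fin r), (aeval (adjacency σ) p).trace := by
  rw [← nsmul_eq_mul, ← sum_const, sum_filter, ← nsmul_eq_mul, ← sum_const, ← sum_add_distrib]
  refine sum_le_sum fun σ hσ => ?_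
  have hA := (mem_perfectMatchings.mp hσ).isHermitian_adjacency
  split_ifs with hbad
  · rw [add_comm]
    exact hbad.le_trace_aeval hA (sum_adjacency σ) (adjacency_nonneg σ) hb hp hpb
  · rw [zero_add]
    exact eval_le_trace_aeval hA (sum_adjacency σ) (adjacency_nonneg σ) hp

lemma abs_le_of_sum_trace_aeval_adjacency_eq (hne : (perfectMatchings (Fin n × Fin r)).Nonempty)
    (hp : ∀ x ∈ Set.Icc (-(r : ℝ)) r, p.eval x ∈ Set.Icc (0 : ℝ) 1) {y : ℝ}
    (hsum : ∑ σ ∈ perfectMatchings (Fin n × Fin r), (aeval (adjacency σ) p).trace =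
      #(perfectMatchings (Fin n × Fin r)) * (n * μ + y)) :
    |y| ≤ n * (1 + |μ|) := by
  have hcard : (0 : ℝ) < #(perfectMatchings (Fin n × Fin r)) := by exact_mod_cast hne.card_pos
  have hmem := sum_trace_aeval_adjacency_mem_Icc (n := n) hp
  rw [hsum] at hmem
  have hnonneg := nonneg_of_mul_nonneg_right hmem.1 hcard
  have hle := le_of_mul_le_mul_left hmem.2 hcard
  exact abs_le.mpr ⟨by nlinarith [le_abs_self μ, n.cast_nonneg (α := ℝ)],
    by nlinarith [neg_abs_le μ, n.cast_nonneg (α := ℝ)]⟩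

lemma abs_div_sub_self_le {y g M t : ℝ} (hy : |y| ≤ M) (hg : g ∈ Set.Icc (1 / 2) 1)
    (ht : 1 - t ≤ g) : |y / g - y| ≤ 2 * M * t := by
  have hg0 : 0 < g := one_half_pos.trans_le hg.1
  have hfactor : y / g - y = y * ((1 - g) / g) := by field_simp
  have hnonneg : 0 ≤ (1 - g) / g := div_nonneg (by linarith [hg.2]) hg0.le
  have hle : (1 - g) / g ≤ 2 * t := by
    rw [div_le_iff₀ hg0]
    nlinarith [hg.1, hg.2]
  rw [hfactor, abs_mul, abs_of_nonneg hnonneg, mul_comm 2, mul_assoc]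
  exact mul_le_mul hy hle hnonneg ((abs_nonneg y).trans hy)

lemma abs_eval_one_div_two_mul_le (hr : 0 < r) (hμ : |μ| ≤ r * (q + 1))
    (hp : ∀ x ∈ Set.Icc (-(r : ℝ)) r, p.eval x ∈ Set.Icc (0 : ℝ) 1)
    (hsum : ∀ n : ℕ, n ≠ 0 → 2 * q ≤ n * r →
      ∑ σ ∈ perfectMatchings (Fin n × Fin r), (aeval (adjacency σ) p).trace =
        #(perfectMatchings (Fin n × Fin r)) *
          (n * μ + P.eval (1 / (n : ℝ)) / (traceDenominator r q).eval (1 / (n : ℝ))))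
    {j : ℕ} (hj : 8 * (q + 1) ^ 3 ≤ j) :
    |P.eval (1 / (2 * (j : ℝ)))| ≤ 2 * j * (1 + r * (q + 1)) := by
  have hj2 : 16 * (q + 1) ^ 3 ≤ 2 * j := by omega
  obtain ⟨hj0, hqj, -⟩ := bounds_of_sixteen_mul_succ_pow_three_le hj2
  have hne : (perfectMatchings (Fin (2 * j) × Fin r)).Nonempty :=
    perfectMatchings_nonempty (by simp [mul_assoc])
  have hquot := abs_le_of_sum_trace_aeval_adjacency_eq hne hp
    (hsum (2 * j) hj0 (hqj.trans (Nat.le_mul_of_pos_right _ hr)))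
  obtain ⟨⟨hhalf, hone⟩, -⟩ := eval_traceDenominator_one_div_bounds hr hj2
  push_cast at hquot hhalf hone
  have hpos := one_half_pos.trans_le hhalf
  rw [abs_div, abs_of_pos hpos, div_le_iff₀ hpos] at hquot
  calc |P.eval (1 / (2 * (j : ℝ)))|
      ≤ 2 * j * (1 + |μ|) * (traceDenominator r q).eval (1 / (2 * (j : ℝ))) := hquot
    _ ≤ 2 * j * (1 + r * (q + 1)) * 1 := by gcongr
    _ = 2 * j * (1 + r * (q + 1)) := mul_one _

/- The trivial bound on the traces controls `P` at the points `1 / (2 * j)`; Markov's inequality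
turns this into a Lipschitz bound near `0` without any estimate on the coefficients of `P`. -/
lemma abs_eval_div_traceDenominator_sub_eval_zero_le (hr : 0 < r) (hP : P.natDegree ≤ q)
    (hμ : |μ| ≤ r * (q + 1))
    (hp : ∀ x ∈ Set.Icc (-(r : ℝ)) r, p.eval x ∈ Set.Icc (0 : ℝ) 1)
    (hsum : ∀ n : ℕ, n ≠ 0 → 2 * q ≤ n * r →
      ∑ σ ∈ perfectMatchings (Fin n × Fin r), (aeval (adjacency σ) p).trace =
        #(perfectMatchings (Fin n × Fin r)) *
          (n * μ + P.eval (1 / (n : ℝ)) / (traceDenominator r q).eval (1 / (n : ℝ))))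
    (hn : 16 * (q + 1) ^ 3 ≤ n) :
    |P.eval (1 / (n : ℝ)) / (traceDenominator r q).eval (1 / (n : ℝ)) - P.eval 0| ≤
      40000 * r * (q + 1) ^ 13 / n := by
  have hr1 : (1 : ℝ) ≤ r := by exact_mod_cast hr
  have hn0 : (0 : ℝ) < n := by exact_mod_cast (bounds_of_sixteen_mul_succ_pow_three_le hn).1.bot_lt
  set Q : ℝ := (q : ℝ) + 1 with hQ
  have hQ1 : 1 ≤ Q := by linarith [q.cast_nonneg (α := ℝ)]
  set L : ℕ := 8 * (q + 1) ^ 3 with hL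
  have hLQ : (L : ℝ) = 8 * Q ^ 3 := by push_cast [hL, hQ]; ring
  set B : ℝ := 256 * r * Q ^ 7
  have hnodes (j : ℕ) (hLj : L ≤ j) (hjL : j ≤ L ^ 2) : |P.eval (1 / (2 * (j : ℝ)))| ≤ B := by
    have hjL' : (j : ℝ) ≤ (L : ℝ) ^ 2 := by exact_mod_cast hjL
    have hrQ : 1 ≤ r * Q := one_le_mul_of_one_le_of_one_le hr1 hQ1
    calc |P.eval (1 / (2 * (j : ℝ)))| ≤ 2 * j * (1 + r * Q) :=
          abs_eval_one_div_two_mul_le hr hμ hp hsum hLj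
      _ ≤ 2 * (8 * Q ^ 3) ^ 2 * (r * Q + r * Q) := by rw [← hLQ]; gcongr
      _ = B := by ring
  have hx : 1 / (n : ℝ) ∈ Set.Icc (0 : ℝ) (1 / (2 * L)) := by
    refine ⟨by positivity, one_div_le_one_div_of_le (by rw [hLQ]; positivity) ?_⟩
    exact_mod_cast (by omega : 2 * L ≤ n)
  have hdiff := abs_eval_sub_eval_zero_le_of_abs_eval_one_div_two_mul_le hP le_rfl hnodes _ hx
  obtain ⟨hg, hg'⟩ := eval_traceDenominator_one_div_bounds (q := q) hr hn
  have hquot := abs_div_sub_self_le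
    (abs_eval_le_of_abs_eval_one_div_two_mul_le hP le_rfl hnodes _ hx) hg hg'
  calc _ ≤ 2 * (2 * B) * ((q : ℝ) ^ 2 / n) + 16 * L * B * Q ^ 3 * (1 / n) :=
        (abs_sub_le _ _ _).trans (add_le_add hquot hdiff)
    _ ≤ 2 * (2 * B) * (Q ^ 6 / n) + 16 * L * B * Q ^ 3 * (1 / n) := by
        gcongr
        exact (pow_le_pow_left₀ q.cast_nonneg (by linarith) 2).trans
          (pow_le_pow_right₀ hQ1 (by norm_num))
    _ = 33792 * r * Q ^ 13 / n := by rw [hLQ]; ring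
    _ ≤ 40000 * r * Q ^ 13 / n := by gcongr; norm_num

theorem card_hasNonconstantEigenvector_mul_le (hr : 3 ≤ r) (hpdeg : p.natDegree ≤ q) (hK1 : K ≤ 1)
    (hb : b ≤ r) (hp : ∀ x ∈ Set.Icc (-(r : ℝ)) r, p.eval x ∈ Set.Icc (0 : ℝ) 1)
    (hpb : ∀ x ∈ Set.Icc b r, 1 - K ≤ p.eval x)
    (hpK : ∀ x ∈ Set.Icc (-(r : ℝ)) (2 * √((r : ℝ) - 1)), p.eval x ≤ K)
    (hn : 16 * (q + 1) ^ 3 ≤ n) :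
    #{σ ∈ perfectMatchings (Fin n × Fin r) | HasNonconstantEigenvector (adjacency σ) b} * (1 - K) ≤
      #(perfectMatchings (Fin n × Fin r)) *
        (40000 * r * (q + 1) ^ 13 / n + (r * (q + 1) * n + 2 * (q + 1) ^ 2) * K) := by
  have hlt := two_mul_sqrt_sub_one_lt (by exact_mod_cast hr : (2 : ℝ) < r)
  have habs (x : ℝ) (hx : |x| ≤ 2 * √((r : ℝ) - 1)) : |p.eval x| ≤ K := by
    obtain ⟨hlower, hupper⟩ := abs_le.mp hx
    rw [abs_of_nonneg (hp x ⟨by linarith, by linarith⟩).1]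
    exact hpK x ⟨by linarith, hupper⟩
  have : 0 ≤ K := (abs_nonneg _).trans (habs 0 (by simp))
  obtain ⟨μ, P, hPdeg, hμ, hP0, hsum⟩ :=
    exists_sum_trace_aeval_adjacency_eq (by omega : 2 ≤ r) hpdeg habs
  obtain ⟨hn0, hqn, -⟩ := bounds_of_sixteen_mul_succ_pow_three_le hn
  have : NeZero n := ⟨hn0⟩
  have hcount := card_hasNonconstantEigenvector_mul_add_le_sum_trace (n := n) hb
    (fun x hx => (hp x hx).1) hpb
  rw [hsum n hn0 (hqn.trans (Nat.le_mul_of_pos_right _ (by omega)))] at hcount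
  have hsmooth := abs_le.mp <| abs_eval_div_traceDenominator_sub_eval_zero_le (by omega) hPdeg
    (hμ.trans (mul_le_of_le_one_right (by positivity) hK1)) hp hsum hn
  have hmean : n * μ ≤ n * (r * (q + 1) * K) := by gcongr; exact (abs_le.mp hμ).2
  refine (le_sub_iff_add_le.mpr hcount).trans ?_
  rw [← mul_sub]
  gcongr
  linarith [hsmooth.2, (abs_le.mp hP0).2]

end SpectralGap

section SpectralGapAsymptotics

open Finset Polynomial Filter Topology

/-- The probability of the event `E` for a uniformly random perfect matching of `H`. It is the junk
value `0` when `H` has no perfect matching, that is, when `H` has odd cardinality. -/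
noncomputable def matchingProb {H : Type*} [Fintype H] (E : Equiv.Perm H → Prop) : ℝ :=
  #{σ ∈ perfectMatchings H | E σ} / #(perfectMatchings H)

lemma matchingProb_le {H : Type*} [Fintype H] {E : Equiv.Perm H → Prop} {B : ℝ} (hB : 0 ≤ B)
    (h : #{σ ∈ perfectMatchings H | E σ} ≤ #(perfectMatchings H) * B) : matchingProb E ≤ B :=
  div_le_of_le_mul₀ (Nat.cast_nonneg _) hB (by rwa [mul_comm])

lemma matchingProb_nonneg {H : Type*} [Fintype H] (E : Equiv.Perm H → Prop) : 0 ≤ matchingProb E :=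
  div_nonneg (Nat.cast_nonneg _) (Nat.cast_nonneg _)

lemma matchingProb_le_add {H : Type*} [Fintype H] {E E₁ E₂ : Equiv.Perm H → Prop}
    (h : ∀ σ, E σ → E₁ σ ∨ E₂ σ) : matchingProb E ≤ matchingProb E₁ + matchingProb E₂ := by
  rw [matchingProb, matchingProb, matchingProb, ← add_div]
  gcongr
  norm_cast
  refine (card_le_card fun σ hσ => ?_).trans (card_union_le _ _)
  rw [← filter_or]
  exact mem_filter.mpr ((mem_filter.mp hσ).imp_right (h σ))

lemma tendsto_const_mul_log_pow_div_atTop (c : ℝ) (k : ℕ) :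
    Tendsto (fun n : ℕ => c * Real.log n ^ k / n) atTop (𝓝 0) := by
  have h := ((Real.isLittleO_pow_log_id_atTop (n := k)).tendsto_div_nhds_zero.comp
    tendsto_natCast_atTop_atTop).const_mul c
  simpa [Function.comp_def, mul_div_assoc] using h

lemma pow_ceil_two_mul_log_div_le {θ : ℝ} (hθ : θ ∈ Set.Ioo (0 : ℝ) 1) {n : ℕ} (hn : n ≠ 0) :
    θ ^ ⌈2 / -Real.log θ * Real.log n⌉₊ ≤ 1 / (n : ℝ) ^ 2 := by
  have : (0 : ℝ) < n := by exact_mod_cast hn.bot_lt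
  have hlog : Real.log θ < 0 := Real.log_neg hθ.1 hθ.2
  rw [← Real.log_le_log_iff (pow_pos hθ.1 _) (by positivity), Real.log_pow, one_div, Real.log_inv,
    Real.log_pow]
  calc (⌈2 / -Real.log θ * Real.log n⌉₊ : ℝ) * Real.log θ
      ≤ 2 / -Real.log θ * Real.log n * Real.log θ :=
        mul_le_mul_of_nonpos_right (Nat.le_ceil _) hlog.le
    _ = -((2 : ℕ) * Real.log n) := by
        have := hlog.ne
        push_cast
        field_simp

lemma error_term_le {r n Q Y K : ℝ} (hr : 1 ≤ r) (hn : 1 ≤ n) (hQ : 1 ≤ Q) (hQY : Q ≤ Y)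
    (hK : K ≤ 1 / n ^ 2) :
    40000 * r * Q ^ 13 / n + (r * Q * n + 2 * Q ^ 2) * K ≤ 40003 * r * Y ^ 13 / n := by
  have hY : 1 ≤ Y := hQ.trans hQY
  have hlinear : Q ≤ Y ^ 13 := hQY.trans (le_self_pow₀ hY (by norm_num))
  have hsq : Q ^ 2 ≤ Y ^ 13 :=
    (pow_le_pow_left₀ (by linarith) hQY 2).trans (pow_le_pow_right₀ hY (by norm_num))
  calc 40000 * r * Q ^ 13 / n + (r * Q * n + 2 * Q ^ 2) * K
      ≤ 40000 * r * Q ^ 13 / n + (r * Q * n + 2 * Q ^ 2) * (1 / n ^ 2) := by gcongr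
    _ ≤ 40000 * r * Y ^ 13 / n + (r * Y ^ 13 * n + 2 * (r * n * Y ^ 13)) * (1 / n ^ 2) := by
        gcongr
        exact hsq.trans (le_mul_of_one_le_left (by positivity)
          (one_le_mul_of_one_le_of_one_le hr hn))
    _ = 40003 * r * Y ^ 13 / n := by
        field_simp
        ring

theorem tendsto_matchingProb_hasNonconstantEigenvector {r : ℕ} (hr : 3 ≤ r) {b : ℝ}
    (hb : 2 * √((r : ℝ) - 1) < b) (hbr : b ≤ r) :
    Tendsto (fun n => matchingProb fun σ : Equiv.Perm (Fin n × Fin r) =>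
      HasNonconstantEigenvector (adjacency σ) b) atTop (𝓝 0) := by
  have hr1 : (1 : ℝ) ≤ r := by exact_mod_cast (by omega : 1 ≤ r)
  obtain ⟨θ, hθ, htest⟩ := exists_polynomial_approx_step
    (show -(r : ℝ) ≤ 2 * √((r : ℝ) - 1) by linarith [Real.sqrt_nonneg ((r : ℝ) - 1)]) hb hbr
  set c := 2 / -Real.log θ
  have hc0 : 0 < c := div_pos two_pos (neg_pos.mpr (Real.log_neg hθ.1 hθ.2))
  refine squeeze_zero' (.of_forall fun n => matchingProb_nonneg _) ?_
    (tendsto_const_mul_log_pow_div_atTop (80006 * r * (c + 2) ^ 13) 13)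
  filter_upwards [eventually_ge_atTop 2, (Real.tendsto_log_atTop.comp
      tendsto_natCast_atTop_atTop).eventually_ge_atTop 1, (tendsto_const_mul_log_pow_div_atTop
      (16 * (c + 2) ^ 3) 3).eventually_le_const one_pos] with n hn hlog hn3
  simp only [Function.comp_apply] at hlog
  have hn2 : (2 : ℝ) ≤ n := by exact_mod_cast hn
  set q := ⌈c * Real.log n⌉₊
  have hqlog : (q : ℝ) + 1 ≤ (c + 2) * Real.log n := by
    have := Nat.ceil_lt_add_one (show 0 ≤ c * Real.log n by positivity)
    linarith
  have hqn : 16 * (q + 1) ^ 3 ≤ n := by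
    rw [div_le_one (by linarith), mul_assoc, ← mul_pow] at hn3
    exact_mod_cast (by gcongr : 16 * ((q : ℝ) + 1) ^ 3 ≤ 16 * ((c + 2) * Real.log n) ^ 3).trans hn3
  obtain ⟨p, hpdeg, hp, hpb, hpK⟩ := htest q
  have hθq : θ ^ q ≤ 1 / (n : ℝ) ^ 2 := pow_ceil_two_mul_log_div_le hθ (by omega)
  have hhalf : θ ^ q ≤ 1 / 2 :=
    hθq.trans (one_div_le_one_div_of_le two_pos (by nlinarith))
  have hcount := card_hasNonconstantEigenvector_mul_le hr hpdeg (by linarith) hbr hp hpb hpK hqn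
  have herror := error_term_le hr1 (by linarith) (by linarith [q.cast_nonneg (α := ℝ)]) hqlog hθq
  rw [mul_pow] at herror
  refine matchingProb_le (by positivity) ?_
  calc (#{σ ∈ perfectMatchings (Fin n × Fin r) | HasNonconstantEigenvector (adjacency σ) b} : ℝ)
      ≤ 2 * (#{σ ∈ perfectMatchings (Fin n × Fin r) |
          HasNonconstantEigenvector (adjacency σ) b} * (1 - θ ^ q)) := by
        rw [mul_left_comm]
        exact le_mul_of_one_le_right (Nat.cast_nonneg _) (by linarith)
    _ ≤ 2 * (#(perfectMatchings (Fin n × Fin r)) *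
          (40003 * r * ((c + 2) ^ 13 * Real.log n ^ 13) / n)) :=
        mul_le_mul_of_nonneg_left (hcount.trans (by gcongr)) zero_le_two
    _ = _ := by ring

end SpectralGapAsymptotics

section Switching

open Finset

section

variable {H : Type*} {σ : Equiv.Perm H} {h c x : H}

lemma IsPerfectMatching.switch_apply_right (hσ : IsPerfectMatching σ) (hc : c ≠ h) :
    RandomRegular.switch σ h c c = h := by
  rw [(hσ.switch h c).apply_eq_iff, hσ.switch_apply_left hc]

lemma IsPerfectMatching.switch_apply_apply_left (hσ : IsPerfectMatching σ) (hc : c ≠ h) :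
    RandomRegular.switch σ h c (σ h) = σ c := by
  rw [switch_apply, Equiv.swap_apply_left,
    Equiv.swap_apply_of_ne_of_ne (σ.injective.ne hc) (hσ.apply_ne c)]

lemma IsPerfectMatching.switch_apply_apply_right (hσ : IsPerfectMatching σ) (hc : c ≠ h) :
    RandomRegular.switch σ h c (σ c) = σ h := by
  rw [(hσ.switch h c).apply_eq_iff, hσ.switch_apply_apply_left hc]

lemma IsPerfectMatching.switch_apply_of_ne (hσ : IsPerfectMatching σ) (hh : x ≠ h)
    (hc : x ≠ c) (hσh : x ≠ σ h) (hσc : x ≠ σ c) : RandomRegular.switch σ h c x = σ x := by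
  rw [switch_apply, Equiv.swap_apply_of_ne_of_ne hσh hc,
    Equiv.swap_apply_of_ne_of_ne (σ.injective.ne hh) (mt hσ.apply_eq_iff.mp hσc)]

lemma IsPerfectMatching.switch_left_injOn (hσ : IsPerfectMatching σ) (h : H) :
    Set.InjOn (RandomRegular.switch σ h) {h}ᶜ := by
  intro c hc c' hc' heq
  rw [← hσ.switch_apply_left (h := h) hc, ← hσ.switch_apply_left (h := h) hc', heq]

end

variable {V : Type*} {r : ℕ} {σ τ : Equiv.Perm (V × Fin r)} {h c : V × Fin r}

/-- The multigraph of the matching `σ` of the half-edges has an edge from `u` to `v`. -/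
def IsJoined (σ : Equiv.Perm (V × Fin r)) (u v : V) : Prop :=
  ∃ x, x.1 = u ∧ (σ x).1 = v

/-- The half-edge `h` belongs to a loop or to a multiple edge of the multigraph of `σ`. -/
def IsBadHalfEdge (σ : Equiv.Perm (V × Fin r)) (h : V × Fin r) : Prop :=
  (σ h).1 = h.1 ∨ ∃ x ≠ h, x.1 = h.1 ∧ (σ x).1 = (σ h).1

/-- Conditions on the position of the edge of `c` relative to that of `h` under which
`switch σ h c` creates no new bad half-edges. -/
structure IsSwitchable (σ : Equiv.Perm (V × Fin r)) (h c : V × Fin r) : Prop where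
  fst_ne : c.1 ≠ h.1
  fst_apply_ne : (σ c).1 ≠ (σ h).1
  not_loop : (σ c).1 ≠ c.1
  not_isJoined : ¬ IsJoined σ h.1 c.1
  not_isJoined_apply : ¬ IsJoined σ (σ h).1 (σ c).1

lemma IsPerfectMatching.isBadHalfEdge_of_apply (hσ : IsPerfectMatching σ)
    (hh : IsBadHalfEdge σ (σ h)) : IsBadHalfEdge σ h := by
  rcases hh with hloop | ⟨x, hne, hx, hσx⟩
  · exact .inl (by rw [← hloop, hσ.apply_apply])
  · refine .inr ⟨σ x, fun e => hne ?_, ?_, ?_⟩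
    · rw [← e, hσ.apply_apply]
    · rw [hσx, hσ.apply_apply]
    · rw [hσ.apply_apply, hx]

lemma IsSwitchable.apply (hc : IsSwitchable σ h c) (hσ : IsPerfectMatching σ) :
    IsSwitchable σ (σ h) (σ c) where
  fst_ne := hc.fst_apply_ne
  fst_apply_ne := by simpa only [hσ.apply_apply] using hc.fst_ne
  not_loop := by simpa only [hσ.apply_apply] using hc.not_loop.symm
  not_isJoined := hc.not_isJoined_apply
  not_isJoined_apply := by simpa only [hσ.apply_apply] using hc.not_isJoined

lemma IsSwitchable.ne (hc : IsSwitchable σ h c) : c ≠ h :=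
  fun e => hc.fst_ne (by rw [e])

lemma IsSwitchable.switch_apply_apply (hc : IsSwitchable σ h c) (hσ : IsPerfectMatching σ) :
    switch σ (σ h) (σ c) = switch σ h c := by
  have hne := (hc.apply hσ).ne
  ext1 x
  by_cases hxh : x = h
  · simpa only [hσ.apply_apply, hxh, hσ.switch_apply_left hc.ne]
      using hσ.switch_apply_apply_left hne
  by_cases hxc : x = c
  · simpa only [hσ.apply_apply, hxc, hσ.switch_apply_right hc.ne]
      using hσ.switch_apply_apply_right hne
  by_cases hxσh : x = σ h
  · rw [hxσh, hσ.switch_apply_left hne, hσ.switch_apply_apply_left hc.ne]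
  by_cases hxσc : x = σ c
  · rw [hxσc, hσ.switch_apply_right hne, hσ.switch_apply_apply_right hc.ne]
  · rw [hσ.switch_apply_of_ne hxh hxc hxσh hxσc, hσ.switch_apply_of_ne hxσh hxσc
      (by rwa [hσ.apply_apply]) (by rwa [hσ.apply_apply])]

lemma IsSwitchable.not_isBadHalfEdge (hc : IsSwitchable σ h c) (hσ : IsPerfectMatching σ) :
    ¬ IsBadHalfEdge (switch σ h c) h := by
  rw [IsBadHalfEdge, hσ.switch_apply_left hc.ne]
  rintro (hloop | ⟨x, hxh, hx, hjoin⟩)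
  · exact hc.fst_ne hloop
  by_cases hxc : x = c
  · exact hc.fst_ne (hxc ▸ hx)
  by_cases hxσh : x = σ h
  · rw [hxσh, hσ.switch_apply_apply_left hc.ne] at hjoin
    exact hc.not_loop hjoin
  by_cases hxσc : x = σ c
  · exact hc.not_isJoined ⟨σ c, hxσc ▸ hx, by rw [hσ.apply_apply]⟩
  · rw [hσ.switch_apply_of_ne hxh hxc hxσh hxσc] at hjoin
    exact hc.not_isJoined ⟨x, hx, hjoin⟩

lemma IsSwitchable.switch_apply_eq_of_isBadHalfEdge (hc : IsSwitchable σ h c)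
    (hσ : IsPerfectMatching σ) {x : V × Fin r} (hx : IsBadHalfEdge (switch σ h c) x) :
    switch σ h c x = σ x := by
  have hgood := hc.not_isBadHalfEdge hσ
  have hgoodσ := (hc.apply hσ).not_isBadHalfEdge hσ
  rw [hc.switch_apply_apply hσ] at hgoodσ
  have hτ := hσ.switch h c
  apply hσ.switch_apply_of_ne <;> rintro rfl
  · exact hgood hx
  · exact hgood (hτ.isBadHalfEdge_of_apply (by rwa [hσ.switch_apply_left hc.ne]))
  · exact hgoodσ hx
  · exact hgoodσ (hτ.isBadHalfEdge_of_apply (by rwa [hσ.switch_apply_apply_left hc.ne]))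

lemma IsSwitchable.isBadHalfEdge_of_switch (hc : IsSwitchable σ h c) (hσ : IsPerfectMatching σ)
    {x : V × Fin r} (hx : IsBadHalfEdge (switch σ h c) x) : IsBadHalfEdge σ x := by
  have hσx := hc.switch_apply_eq_of_isBadHalfEdge hσ hx
  rcases hx with hloop | ⟨y, hyx, hy, hjoin⟩
  · exact .inl (by rwa [hσx] at hloop)
  · have hσy := hc.switch_apply_eq_of_isBadHalfEdge hσ (.inr ⟨x, hyx.symm, hy.symm, hjoin.symm⟩)
    exact .inr ⟨y, hyx, hy, by rwa [hσx, hσy] at hjoin⟩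

-- The second half of a multiple edge survives the switch, which leaves few candidates for `σ h`
-- once `switch σ h c` and `h` are known.
lemma IsSwitchable.fst_eq_or_isJoined_switch (hc : IsSwitchable σ h c) (hσ : IsPerfectMatching σ)
    (hh : IsBadHalfEdge σ h) : (σ h).1 = h.1 ∨ IsJoined (switch σ h c) h.1 (σ h).1 := by
  rcases hh with hloop | ⟨x, hxh, hx, hjoin⟩
  · exact .inl hloop
  by_cases hxσh : x = σ h
  · exact .inl (hxσh ▸ hx)
  refine .inr ⟨x, hx, ?_⟩
  rw [hσ.switch_apply_of_ne hxh _ hxσh _, hjoin]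
  · exact fun e => hc.fst_ne (e ▸ hx)
  · exact fun e => hc.not_isJoined ⟨σ c, e ▸ hx, by rw [hσ.apply_apply]⟩

variable [Fintype V]

/-- The half-edges lying in loops or multiple edges of the multigraph of `σ`. -/
noncomputable def badHalfEdges (σ : Equiv.Perm (V × Fin r)) : Finset (V × Fin r) :=
  {h | IsBadHalfEdge σ h}

@[simp] lemma mem_badHalfEdges : h ∈ badHalfEdges σ ↔ IsBadHalfEdge σ h := by
  simp [badHalfEdges]

lemma IsSwitchable.card_badHalfEdges_switch_lt (hc : IsSwitchable σ h c)
    (hσ : IsPerfectMatching σ) (hh : IsBadHalfEdge σ h) :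
    #(badHalfEdges (switch σ h c)) < #(badHalfEdges σ) := by
  refine card_lt_card ((ssubset_iff_of_subset fun x hx => ?_).mpr
    ⟨h, mem_badHalfEdges.mpr hh, mt mem_badHalfEdges.mp (hc.not_isBadHalfEdge hσ)⟩)
  exact mem_badHalfEdges.mpr (hc.isBadHalfEdge_of_switch hσ (mem_badHalfEdges.mp hx))

lemma card_filter_fst_eq (u : V) : #{x : V × Fin r | x.1 = u} = r := by
  have : ({x : V × Fin r | x.1 = u} : Finset _) = {u} ×ˢ univ := by
    ext ⟨v, i⟩; simp [eq_comm]
  rw [this, card_product, card_singleton, card_fin, one_mul]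

lemma card_filter_isJoined_le (σ : Equiv.Perm (V × Fin r)) (u : V) :
    #{x : V × Fin r | IsJoined σ u x.1} ≤ r ^ 2 := by
  calc #{x : V × Fin r | IsJoined σ u x.1}
      ≤ #((univ : Finset (Fin r × Fin r)).image fun i => ((σ (u, i.1)).1, i.2)) := by
        refine card_le_card fun x hx => ?_
        obtain ⟨y, rfl, hy⟩ := (mem_filter.mp hx).2
        exact mem_image.mpr ⟨(y.2, x.2), mem_univ _, Prod.ext hy rfl⟩
    _ ≤ r ^ 2 := card_image_le.trans (by simp [sq])

lemma card_filter_apply {H : Type*} [Fintype H] (σ : Equiv.Perm H) (p : H → Prop) :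
    #{x | p (σ x)} = #{x | p x} :=
  card_equiv σ (by simp)

lemma card_le_card_isSwitchable_add (σ : Equiv.Perm (V × Fin r)) (h : V × Fin r) :
    Fintype.card (V × Fin r) ≤
      #{c | IsSwitchable σ h c} + (2 * r + 2 * r ^ 2 + #(badHalfEdges σ)) := by
  let same : Finset (V × Fin r) := {c | c.1 = h.1}
  let sameσ : Finset (V × Fin r) := {c | (σ c).1 = (σ h).1}
  let joined : Finset (V × Fin r) := {c | IsJoined σ h.1 c.1}
  let joinedσ : Finset (V × Fin r) := {c | IsJoined σ (σ h).1 (σ c).1}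
  have hcover : (univ : Finset (V × Fin r)) ⊆ ({c | IsSwitchable σ h c} : Finset _) ∪
      ((same ∪ sameσ) ∪ ((joined ∪ joinedσ) ∪ badHalfEdges σ)) := by
    intro c _
    simp only [same, sameσ, joined, joinedσ, mem_union, mem_filter_univ, mem_badHalfEdges]
    by_contra! hc
    exact hc.1 ⟨hc.2.1.1, hc.2.1.2, fun e => hc.2.2.2 (.inl e), hc.2.2.1.1, hc.2.2.1.2⟩
  have hsame : #same = r := card_filter_fst_eq h.1
  have hsameσ : #sameσ = r :=
    (card_filter_apply σ fun c => c.1 = (σ h).1).trans (card_filter_fst_eq (σ h).1)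
  have hjoined : #joined ≤ r ^ 2 := card_filter_isJoined_le σ h.1
  have hjoinedσ : #joinedσ ≤ r ^ 2 := (card_filter_apply σ fun c => IsJoined σ (σ h).1 c.1).trans_le
    (card_filter_isJoined_le σ (σ h).1)
  calc Fintype.card (V × Fin r) ≤ _ := card_le_card hcover
    _ ≤ _ := card_union_le _ _
    _ ≤ _ := Nat.add_le_add_left ((card_union_le _ _).trans (add_le_add (card_union_le _ _)
      ((card_union_le _ _).trans (Nat.add_le_add_right (card_union_le _ _) _)))) _
    _ ≤ _ := by omega

end Switching

section SimpleMatchings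

open Finset

variable {V : Type*} {r : ℕ} {σ τ : Equiv.Perm (V × Fin r)}

/-- `τ` arises from `σ` by switching away a bad half-edge. -/
def IsRepair (σ τ : Equiv.Perm (V × Fin r)) : Prop :=
  ∃ h c, IsBadHalfEdge σ h ∧ IsSwitchable σ h c ∧ switch σ h c = τ

variable [Fintype V]

lemma IsPerfectMatching.card_le_card_isRepair_add (hσ : IsPerfectMatching σ)
    (hbad : (badHalfEdges σ).Nonempty) :
    Fintype.card (V × Fin r) ≤ #{τ ∈ perfectMatchings (V × Fin r) |
        #(badHalfEdges τ) < #(badHalfEdges σ) ∧ IsRepair σ τ} +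
      (2 * r + 2 * r ^ 2 + #(badHalfEdges σ)) := by
  obtain ⟨h, hh⟩ := hbad
  rw [mem_badHalfEdges] at hh
  refine (card_le_card_isSwitchable_add σ h).trans (Nat.add_le_add_right ?_ _)
  refine card_le_card_of_injOn (RandomRegular.switch σ h) (fun c hc => ?_)
    ((hσ.switch_left_injOn h).mono fun c hc => (mem_filter_univ c |>.mp hc).ne)
  rw [mem_coe, mem_filter_univ] at hc
  rw [mem_coe, mem_filter, mem_perfectMatchings]
  exact ⟨hσ.switch h c, hc.card_badHalfEdges_switch_lt hσ hh, h, c, hh, hc, rfl⟩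

lemma card_isRepair_le (τ : Equiv.Perm (V × Fin r)) :
    #{σ ∈ perfectMatchings (V × Fin r) | IsRepair σ τ} ≤
      Fintype.card (V × Fin r) * (r + r ^ 2) := by
  let partners (h : V × Fin r) : Finset (V × Fin r) := {x | x.1 = h.1 ∨ IsJoined τ h.1 x.1}
  have hpartners (h : V × Fin r) : #(partners h) ≤ r + r ^ 2 := by
    simp only [partners, filter_or]
    exact (card_union_le _ _).trans
      (add_le_add (card_filter_fst_eq h.1).le (card_filter_isJoined_le τ h.1))
  have hcover : {σ ∈ perfectMatchings (V × Fin r) | IsRepair σ τ} ⊆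
      univ.biUnion fun h => (partners h).image fun g => switch τ h g := by
    intro σ hσ
    simp only [mem_filter, mem_perfectMatchings] at hσ
    obtain ⟨hσ, h, c, hbad, hc, rfl⟩ := hσ
    refine mem_biUnion.mpr ⟨h, mem_univ _, mem_image.mpr
      ⟨σ h, ?_, switch_switch (hσ.switch_apply_left hc.ne)⟩⟩
    simpa only [partners, mem_filter_univ] using hc.fst_eq_or_isJoined_switch hσ hbad
  calc _ ≤ _ := card_le_card hcover
    _ ≤ ∑ _ : V × Fin r, (r + r ^ 2) :=
        card_biUnion_le.trans (sum_le_sum fun h _ => card_image_le.trans (hpartners h))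
    _ = _ := by rw [sum_const, card_univ, smul_eq_mul]

lemma card_badHalfEdges_eq_mul_le (V : Type*) [Fintype V] (r j : ℕ) :
    #{σ ∈ perfectMatchings (V × Fin r) | #(badHalfEdges σ) = j + 1} *
        (Fintype.card (V × Fin r) - (2 * r + 2 * r ^ 2 + (j + 1))) ≤
      #{σ ∈ perfectMatchings (V × Fin r) | #(badHalfEdges σ) ≤ j} *
        (Fintype.card (V × Fin r) * (r + r ^ 2)) := by
  refine card_mul_le_card_mul IsRepair (fun σ hσ => ?_) fun τ _ => ?_
  · simp only [mem_filter, mem_perfectMatchings] at hσ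
    have hrepair := hσ.1.card_le_card_isRepair_add (card_pos.mp (by omega))
    simpa only [bipartiteAbove, filter_filter, hσ.2, Nat.lt_add_one_iff, tsub_le_iff_right]
      using hrepair
  · refine (card_le_card ?_).trans (card_isRepair_le τ)
    exact filter_subset_filter _ (filter_subset _ _)

lemma card_badHalfEdges_le_succ {j : ℕ}
    (hcard : 2 * (2 * r + 2 * r ^ 2 + (j + 1)) ≤ Fintype.card (V × Fin r)) :
    #{σ ∈ perfectMatchings (V × Fin r) | #(badHalfEdges σ) ≤ j + 1} ≤
      (1 + 2 * (r + r ^ 2)) * #{σ ∈ perfectMatchings (V × Fin r) | #(badHalfEdges σ) ≤ j} := by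
  set m := Fintype.card (V × Fin r)
  set atMost := #{σ ∈ perfectMatchings (V × Fin r) | #(badHalfEdges σ) ≤ j}
  set exactly := #{σ ∈ perfectMatchings (V × Fin r) | #(badHalfEdges σ) = j + 1}
  have hsplit : #{σ ∈ perfectMatchings (V × Fin r) | #(badHalfEdges σ) ≤ j + 1} ≤
      atMost + exactly := by
    simp only [Nat.le_add_one_iff, filter_or]
    exact card_union_le _ _
  have hexact : exactly * m ≤ (2 * (r + r ^ 2) * atMost) * m :=
    calc exactly * m ≤ exactly * (2 * (m - (2 * r + 2 * r ^ 2 + (j + 1)))) := by gcongr; omega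
      _ = 2 * (exactly * (m - (2 * r + 2 * r ^ 2 + (j + 1)))) := by ring
      _ ≤ 2 * (atMost * (m * (r + r ^ 2))) :=
          Nat.mul_le_mul_left 2 (card_badHalfEdges_eq_mul_le V r j)
      _ = _ := by ring
  linarith [Nat.le_of_mul_le_mul_right hexact (by omega)]

/-- The matchings of the half-edges whose multigraph has no loops and no multiple edges. -/
noncomputable def simpleMatchings (V : Type*) [Fintype V] (r : ℕ) :
    Finset (Equiv.Perm (V × Fin r)) :=
  {σ ∈ perfectMatchings (V × Fin r) | ∀ h, ¬ IsBadHalfEdge σ h}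

lemma mem_simpleMatchings :
    σ ∈ simpleMatchings V r ↔ IsPerfectMatching σ ∧ ∀ h, ¬ IsBadHalfEdge σ h := by
  simp [simpleMatchings]

lemma card_badHalfEdges_le_mul_card_simpleMatchings {j : ℕ}
    (hcard : 2 * (2 * r + 2 * r ^ 2 + j) ≤ Fintype.card (V × Fin r)) :
    #{σ ∈ perfectMatchings (V × Fin r) | #(badHalfEdges σ) ≤ j} ≤
      (1 + 2 * (r + r ^ 2)) ^ j * #(simpleMatchings V r) := by
  induction j with
  | zero => simp [simpleMatchings, badHalfEdges, filter_eq_empty_iff]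
  | succ j ih =>
    calc _ ≤ _ := card_badHalfEdges_le_succ hcard
      _ ≤ (1 + 2 * (r + r ^ 2)) * ((1 + 2 * (r + r ^ 2)) ^ j * #(simpleMatchings V r)) := by
        gcongr
        exact ih (by omega)
      _ = _ := by ring

end SimpleMatchings

section SimpleProbability

open Finset Filter

lemma card_filter_mul_le_of_forall_exists {α ι : Type*} {P : Finset α} {E : α → Prop}
    [DecidablePred E] {s : Finset ι} {F : ι → α → Prop} [∀ i, DecidablePred (F i)] {m K : ℝ}
    (hm : 0 ≤ m)
    (hcover : ∀ a ∈ P, E a → ∃ i ∈ s, F i a) (hF : ∀ i ∈ s, #{a ∈ P | F i a} * m ≤ K) :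
    #{a ∈ P | E a} * m ≤ #s * K := by
  have hsub : {a ∈ P | E a} ⊆ s.biUnion fun i => {a ∈ P | F i a} := fun a ha => by
    obtain ⟨haP, hE⟩ := mem_filter.mp ha
    obtain ⟨i, hi, hFi⟩ := hcover a haP hE
    exact mem_biUnion.mpr ⟨i, hi, mem_filter.mpr ⟨haP, hFi⟩⟩
  calc (#{a ∈ P | E a} : ℝ) * m ≤ (∑ i ∈ s, (#{a ∈ P | F i a} : ℝ)) * m := by
        refine mul_le_mul_of_nonneg_right ?_ hm
        exact_mod_cast (card_le_card hsub).trans card_biUnion_le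
    _ = ∑ i ∈ s, (#{a ∈ P | F i a} : ℝ) * m := sum_mul ..
    _ ≤ #s * K := (sum_le_sum hF).trans_eq (by rw [sum_const, nsmul_eq_mul])

section

variable {H : Type*} [Fintype H]

lemma card_filter_apply_eq_mul_card_le {h g : H} (hg : h ≠ g) (hcard : 4 ≤ Fintype.card H) :
    (#{σ ∈ perfectMatchings H | σ h = g} : ℝ) * Fintype.card H ≤ 2 * #(perfectMatchings H) := by
  have hbound := card_filter_apply_eq_mul_pow_le (f := fun _ : Unit => h) (g := fun _ => g)
    (Function.injective_of_subsingleton _) (Function.injective_of_subsingleton _)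
    (fun _ _ => hg) (by rw [Fintype.card_unit]; omega)
  simp only [Fintype.card_unit, forall_const, pow_one, Nat.cast_one, mul_one] at hbound
  have hcard' : (4 : ℝ) ≤ Fintype.card H := by exact_mod_cast hcard
  nlinarith [(#{σ ∈ perfectMatchings H | σ h = g}).cast_nonneg (α := ℝ)]

lemma card_filter_apply_eq_and_mul_card_sq_le {h h' g g' : H} (hh : h ≠ h') (hg : g ≠ g')
    (h₁ : h ≠ g) (h₂ : h ≠ g') (h₃ : h' ≠ g) (h₄ : h' ≠ g') (hcard : 8 ≤ Fintype.card H) :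
    (#{σ ∈ perfectMatchings H | σ h = g ∧ σ h' = g'} : ℝ) * (Fintype.card H : ℝ) ^ 2 ≤
      4 * #(perfectMatchings H) := by
  have hbound := card_filter_apply_eq_mul_pow_le (f := ![h, h']) (g := ![g, g'])
    (injective_pair_iff_ne.mpr hh) (injective_pair_iff_ne.mpr hg)
    (by simp [Fin.forall_fin_two, h₁, h₂, h₃, h₄]) (by rw [Fintype.card_fin]; omega)
  simp only [Fintype.card_fin, Fin.forall_fin_two, Matrix.cons_val_zero, Matrix.cons_val_one]
    at hbound
  have hcard' : (8 : ℝ) ≤ Fintype.card H := by exact_mod_cast hcard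
  have hhalf : (Fintype.card H : ℝ) ^ 2 ≤ 4 * ((Fintype.card H : ℝ) - 2 * (2 : ℕ)) ^ 2 := by
    push_cast
    nlinarith
  calc _ ≤ _ := mul_le_mul_of_nonneg_left hhalf (Nat.cast_nonneg _)
    _ ≤ _ := by linarith

end

variable {V : Type*} [Fintype V] {r : ℕ}

lemma card_loop_mul_card_le (h : V × Fin r) (hcard : 8 ≤ Fintype.card (V × Fin r)) :
    (#{σ ∈ perfectMatchings (V × Fin r) | (σ h).1 = h.1} : ℝ) * Fintype.card (V × Fin r) ≤
      r * (2 * #(perfectMatchings (V × Fin r))) := by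
  let partners : Finset (Fin r) := {i | h ≠ (h.1, i)}
  have hpartners : (#partners : ℝ) ≤ r := by exact_mod_cast card_finset_fin_le partners
  refine (card_filter_mul_le_of_forall_exists (s := partners) (F := fun i σ => σ h = (h.1, i))
    (Nat.cast_nonneg _) (fun σ hσ hloop => ?_) fun i hi => ?_).trans
    (mul_le_mul_of_nonneg_right hpartners (by positivity))
  · have heq : (h.1, (σ h).2) = σ h := Prod.ext hloop.symm rfl
    refine ⟨(σ h).2, (mem_filter_univ _).mpr ?_, heq.symm⟩
    rw [heq]
    exact ((mem_perfectMatchings.mp hσ).apply_ne h).symm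
  · have hne : h ≠ (h.1, i) := (mem_filter_univ i).mp hi
    convert card_filter_apply_eq_mul_card_le hne (by omega)

lemma card_multiple_mul_card_le (h : V × Fin r) (hcard : 8 ≤ Fintype.card (V × Fin r)) :
    (#{σ ∈ perfectMatchings (V × Fin r) |
        (σ h).1 ≠ h.1 ∧ ∃ x ≠ h, x.1 = h.1 ∧ (σ x).1 = (σ h).1} : ℝ) *
      Fintype.card (V × Fin r) ≤ r ^ 2 * (4 * #(perfectMatchings (V × Fin r))) := by
  set m := Fintype.card (V × Fin r) with hm
  let pairs : Finset ((V × Fin r) × Fin r × Fin r) :=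
    {p | p.1.1 ≠ h.1 ∧ h ≠ (h.1, p.2.1) ∧ p.1 ≠ (p.1.1, p.2.2)}
  have hpairs : (#pairs : ℝ) ≤ m * r ^ 2 := by
    have := card_le_univ pairs
    simp only [Fintype.card_prod, Fintype.card_fin, ← sq] at this hm
    rw [hm]
    exact_mod_cast this
  have hunion := card_filter_mul_le_of_forall_exists (P := perfectMatchings (V × Fin r))
    (E := fun σ => (σ h).1 ≠ h.1 ∧ ∃ x ≠ h, x.1 = h.1 ∧ (σ x).1 = (σ h).1) (s := pairs)
    (F := fun p σ => σ h = p.1 ∧ σ (h.1, p.2.1) = (p.1.1, p.2.2)) (m := (m : ℝ) ^ 2)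
    (K := 4 * #(perfectMatchings (V × Fin r))) (by positivity) ?_ ?_
  · refine le_of_mul_le_mul_right ?_ (show (0 : ℝ) < m by exact_mod_cast (by omega : 0 < m))
    calc _ = _ := by rw [mul_assoc, ← sq]
      _ ≤ _ := hunion
      _ ≤ _ := mul_le_mul_of_nonneg_right hpairs (by positivity)
      _ = _ := by ring
  · rintro σ - ⟨hloop, ⟨u, i⟩, hne, rfl : u = h.1, hjoin⟩
    have heq : ((σ h).1, (σ (h.1, i)).2) = σ (h.1, i) := Prod.ext hjoin.symm rfl
    refine ⟨(σ h, i, (σ (h.1, i)).2), (mem_filter_univ _).mpr ⟨hloop, hne.symm, ?_⟩, rfl, heq.symm⟩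
    rw [heq]
    exact σ.injective.ne hne.symm
  · intro p hp
    obtain ⟨hp₁, hp₂, hp₃⟩ := (mem_filter_univ p).mp hp
    convert card_filter_apply_eq_and_mul_card_sq_le hp₂ hp₃ ?_ ?_ ?_ ?_ hcard <;>
      exact fun e => hp₁ (congrArg Prod.fst e).symm

lemma card_isBadHalfEdge_mul_card_le (h : V × Fin r) (hcard : 8 ≤ Fintype.card (V × Fin r)) :
    (#{σ ∈ perfectMatchings (V × Fin r) | IsBadHalfEdge σ h} : ℝ) * Fintype.card (V × Fin r) ≤
      (2 * r + 4 * r ^ 2) * #(perfectMatchings (V × Fin r)) := by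
  have hsplit : #{σ ∈ perfectMatchings (V × Fin r) | IsBadHalfEdge σ h} ≤
      #{σ ∈ perfectMatchings (V × Fin r) | (σ h).1 = h.1} +
      #{σ ∈ perfectMatchings (V × Fin r) |
        (σ h).1 ≠ h.1 ∧ ∃ x ≠ h, x.1 = h.1 ∧ (σ x).1 = (σ h).1} := by
    refine (card_le_card fun σ hσ => ?_).trans (card_union_le _ _)
    rw [mem_filter, IsBadHalfEdge] at hσ
    simp only [mem_union, mem_filter]
    tauto
  have hsplit' : (#{σ ∈ perfectMatchings (V × Fin r) | IsBadHalfEdge σ h} : ℝ) ≤ _ :=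
    Nat.cast_le.mpr hsplit
  have hmul := mul_le_mul_of_nonneg_right hsplit' (Nat.cast_nonneg (Fintype.card (V × Fin r)))
  push_cast at hmul
  linarith [card_loop_mul_card_le h hcard, card_multiple_mul_card_le h hcard]

lemma sum_card_badHalfEdges_le (hcard : 8 ≤ Fintype.card (V × Fin r)) :
    ∑ σ ∈ perfectMatchings (V × Fin r), (#(badHalfEdges σ) : ℝ) ≤
      (2 * r + 4 * r ^ 2) * #(perfectMatchings (V × Fin r)) := by
  have hpos : (0 : ℝ) < Fintype.card (V × Fin r) := by
    exact_mod_cast (by omega : 0 < Fintype.card (V × Fin r))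
  calc ∑ σ ∈ perfectMatchings (V × Fin r), (#(badHalfEdges σ) : ℝ)
      = ∑ h : V × Fin r, (#{σ ∈ perfectMatchings (V × Fin r) | IsBadHalfEdge σ h} : ℝ) := by
        simp only [badHalfEdges, card_filter, Nat.cast_sum]
        rw [sum_comm]
    _ ≤ ∑ _ : V × Fin r, ((2 * r + 4 * r ^ 2) * #(perfectMatchings (V × Fin r)) /
          (Fintype.card (V × Fin r) : ℝ)) :=
        sum_le_sum fun h _ => (le_div_iff₀ hpos).mpr (card_isBadHalfEdge_mul_card_le h hcard)
    _ = _ := by rw [sum_const, card_univ, nsmul_eq_mul, mul_div_cancel₀ _ hpos.ne']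

lemma card_perfectMatchings_le_two_mul (hr : 1 ≤ r) (hcard : 8 ≤ Fintype.card (V × Fin r)) :
    #(perfectMatchings (V × Fin r)) ≤ 2 * #{σ ∈ perfectMatchings (V × Fin r) |
      #(badHalfEdges σ) ≤ 2 * (2 * r + 4 * r ^ 2)} := by
  set k := 2 * r + 4 * r ^ 2 with hk
  set P := perfectMatchings (V × Fin r)
  have hmarkov : 2 * k * #{σ ∈ P | ¬ #(badHalfEdges σ) ≤ 2 * k} ≤ k * #P :=
    calc 2 * k * #{σ ∈ P | ¬ #(badHalfEdges σ) ≤ 2 * k}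
        ≤ ∑ σ ∈ P with ¬ #(badHalfEdges σ) ≤ 2 * k, #(badHalfEdges σ) := by
          rw [mul_comm, ← smul_eq_mul]
          exact card_nsmul_le_sum _ _ _ fun σ hσ => (not_le.mp (mem_filter.mp hσ).2).le
      _ ≤ ∑ σ ∈ P, #(badHalfEdges σ) := sum_le_sum_of_subset (filter_subset _ _)
      _ ≤ k * #P := by exact_mod_cast sum_card_badHalfEdges_le hcard
  have hsum := card_filter_add_card_filter_not (s := P) fun σ => #(badHalfEdges σ) ≤ 2 * k
  have : 0 < k := by omega
  nlinarith

theorem exists_card_perfectMatchings_le_mul_card_simpleMatchings (hr : 1 ≤ r) :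
    ∃ C : ℕ, ∀ᶠ n : ℕ in atTop,
      #(perfectMatchings (Fin n × Fin r)) ≤ C * #(simpleMatchings (Fin n) r) := by
  set k := 2 * (2 * r + 4 * r ^ 2)
  refine ⟨2 * (1 + 2 * (r + r ^ 2)) ^ k, ?_⟩
  filter_upwards [eventually_ge_atTop (8 + 2 * (2 * r + 2 * r ^ 2 + k))] with n hn
  have hcard : n ≤ Fintype.card (Fin n × Fin r) := by
    simpa using Nat.le_mul_of_pos_right n hr
  calc #(perfectMatchings (Fin n × Fin r)) ≤ _ := card_perfectMatchings_le_two_mul hr (by omega)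
    _ ≤ _ := Nat.mul_le_mul_left 2 (card_badHalfEdges_le_mul_card_simpleMatchings (by omega))
    _ = _ := (mul_assoc ..).symm

end SimpleProbability

section OrientedMatching

open Finset

variable {H : Type*}

/-- A set of pairwise disjoint pairs, each listed in only one of its two orders; such pairs can be
prescribed simultaneously as edges of a perfect matching. -/
structure IsOrientedMatching (D : Finset (H × H)) : Prop where
  injOn_fst : Set.InjOn Prod.fst (D : Set (H × H))
  injOn_snd : Set.InjOn Prod.snd (D : Set (H × H))
  fst_ne_snd : ∀ d ∈ D, ∀ d' ∈ D, d.1 ≠ d'.2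

lemma IsOrientedMatching.card_filter_mul_pow_le [Fintype H] {D : Finset (H × H)}
    (hD : IsOrientedMatching D) (hcard : 2 * #D ≤ Fintype.card H) :
    (#{σ ∈ perfectMatchings H | ∀ d ∈ D, σ d.1 = d.2} : ℝ) *
      ((Fintype.card H : ℝ) - 2 * #D) ^ #D ≤ #(perfectMatchings H) := by
  have hbound := card_filter_apply_eq_mul_pow_le (f := fun d : D => d.1.1) (g := fun d => d.1.2)
    hD.injOn_fst.injective hD.injOn_snd.injective
    (fun d d' => hD.fst_ne_snd d.1 d.2 d'.1 d'.2) (by rwa [Fintype.card_coe])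
  simpa only [Fintype.card_coe, Subtype.forall] using hbound

lemma isOrientedMatching_map {σ : Equiv.Perm H} {X : Finset H} (hX : ∀ x ∈ X, σ x ∉ X) :
    IsOrientedMatching (X.map ⟨fun x => (x, σ x), fun _ _ heq => congrArg Prod.fst heq⟩) where
  injOn_fst := by
    simp only [Set.InjOn, mem_coe, mem_map]
    rintro _ ⟨x, -, rfl⟩ _ ⟨y, -, rfl⟩ (rfl : x = y)
    rfl
  injOn_snd := by
    simp only [Set.InjOn, mem_coe, mem_map]
    rintro _ ⟨x, -, rfl⟩ _ ⟨y, -, rfl⟩ heq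
    rw [σ.injective heq]
  fst_ne_snd := by
    simp only [mem_map]
    rintro _ ⟨x, hx, rfl⟩ _ ⟨y, hy, rfl⟩ (rfl : x = σ y)
    exact hX y hy hx

end OrientedMatching

section DenseSubgraphs

open Finset Filter Topology

variable {V : Type*} {r : ℕ}

/-- The simple graph obtained from the multigraph of a matching of half-edges by dropping loops
and multiplicities. -/
def underlyingGraph (σ : Equiv.Perm (V × Fin r)) : SimpleGraph V :=
  SimpleGraph.fromRel (IsJoined σ)

lemma IsPerfectMatching.underlyingGraph_adj {σ : Equiv.Perm (V × Fin r)}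
    (hσ : IsPerfectMatching σ) {u v : V} :
    (underlyingGraph σ).Adj u v ↔ u ≠ v ∧ IsJoined σ u v := by
  have hsymm : IsJoined σ v u → IsJoined σ u v := by
    rintro ⟨x, hx, hσx⟩
    exact ⟨σ x, hσx, by rwa [hσ.apply_apply]⟩
  rw [underlyingGraph, SimpleGraph.fromRel_adj]
  tauto

/-- The edges of `G` with both ends in `U`. -/
def edgesWithin (G : SimpleGraph V) (U : Finset V) : Set (Sym2 V) :=
  {e | e ∈ G.edgeSet ∧ ∀ x ∈ e, x ∈ U}

lemma exists_halfEdge_of_mem_edgesWithin {σ : Equiv.Perm (V × Fin r)} (hσ : IsPerfectMatching σ)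
    {U : Finset V} {e : Sym2 V} (he : e ∈ edgesWithin (underlyingGraph σ) U) :
    ∃ h : V × Fin r, s(h.1, (σ h).1) = e ∧ h.1 ∈ U ∧ (σ h).1 ∈ U := by
  obtain ⟨hadj, hU⟩ := he
  induction e using Sym2.ind with
  | _ u v =>
    obtain ⟨-, h, rfl, rfl⟩ := hσ.underlyingGraph_adj.mp ((SimpleGraph.mem_edgeSet _).mp hadj)
    exact ⟨h, rfl, hU _ (Sym2.mem_mk_left _ _), hU _ (Sym2.mem_mk_right _ _)⟩

lemma exists_isOrientedMatching_of_le_ncard_edgesWithin [Finite V] {σ : Equiv.Perm (V × Fin r)}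
    (hσ : IsPerfectMatching σ) {U : Finset V} {t : ℕ}
    (ht : t ≤ (edgesWithin (underlyingGraph σ) U).ncard) :
    ∃ D ∈ powersetCard t ((U ×ˢ (univ : Finset (Fin r))) ×ˢ (U ×ˢ (univ : Finset (Fin r)))),
      IsOrientedMatching D ∧ ∀ d ∈ D, σ d.1 = d.2 := by
  have := Fintype.ofFinite V
  rw [Set.ncard_eq_toFinset_card'] at ht
  obtain ⟨T, hT, rfl⟩ := exists_subset_card_eq ht
  choose φ hφ hφU hσφU using fun e : T =>
    exists_halfEdge_of_mem_edgesWithin hσ (Set.mem_toFinset.mp (hT e.2))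
  have hφinj : Function.Injective φ := fun e e' heq => Subtype.ext (by rw [← hφ, ← hφ, heq])
  have hpartner : ∀ x ∈ univ.map ⟨φ, hφinj⟩, σ x ∉ univ.map ⟨φ, hφinj⟩ := by
    simp only [Finset.mem_map, mem_univ, true_and, Function.Embedding.coeFn_mk, not_exists]
    rintro _ ⟨e, rfl⟩ e' heq
    obtain rfl : e' = e := Subtype.ext (by rw [← hφ, ← hφ, heq, hσ.apply_apply, Sym2.eq_swap])
    exact hσ.apply_ne _ heq.symm
  refine ⟨_, mem_powersetCard.mpr ⟨?_, ?_⟩, isOrientedMatching_map hpartner, ?_⟩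
  · intro d hd
    simp only [Finset.mem_map, mem_univ, true_and, Function.Embedding.coeFn_mk] at hd
    obtain ⟨_, ⟨e, rfl⟩, rfl⟩ := hd
    simp only [mem_product, mem_univ, and_true]
    exact ⟨hφU e, hσφU e⟩
  · rw [card_map, card_map, card_univ, Fintype.card_coe]
  · simp only [Finset.mem_map, Function.Embedding.coeFn_mk]
    rintro _ ⟨x, -, rfl⟩
    rfl

lemma card_exists_dense_mul_pow_le [Fintype V] {s t : ℕ}
    (hcard : 2 * t ≤ Fintype.card (V × Fin r)) :
    (#{σ ∈ perfectMatchings (V × Fin r) |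
        ∃ U : Finset V, #U = s ∧ t ≤ (edgesWithin (underlyingGraph σ) U).ncard} : ℝ) *
      ((Fintype.card (V × Fin r) : ℝ) - 2 * t) ^ t ≤
      (Fintype.card V).choose s *
        (((s * r) * (s * r)).choose t * #(perfectMatchings (V × Fin r))) := by
  have hm : (0 : ℝ) ≤ ((Fintype.card (V × Fin r) : ℝ) - 2 * t) ^ t :=
    pow_nonneg (sub_nonneg.mpr (by exact_mod_cast hcard)) t
  rw [← card_univ (α := V), ← card_powersetCard]
  refine card_filter_mul_le_of_forall_exists (s := powersetCard s univ)
    (F := fun U σ => t ≤ (edgesWithin (underlyingGraph σ) U).ncard) hm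
    (fun σ _ ⟨U, hU, ht⟩ => ⟨U, mem_powersetCard.mpr ⟨subset_univ U, hU⟩, ht⟩) fun U hU => ?_
  let D : Finset (Finset ((V × Fin r) × (V × Fin r))) :=
    {D ∈ powersetCard t ((U ×ˢ (univ : Finset (Fin r))) ×ˢ (U ×ˢ (univ : Finset (Fin r)))) |
      IsOrientedMatching D}
  have hD : (#D : ℝ) ≤ ((s * r) * (s * r)).choose t := by
    have hle : #D ≤ _ := card_filter_le _ _
    rw [card_powersetCard, card_product, card_product, (mem_powersetCard.mp hU).2, card_univ,
      Fintype.card_fin] at hle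
    exact_mod_cast hle
  refine (card_filter_mul_le_of_forall_exists (s := D) (F := fun D σ => ∀ d ∈ D, σ d.1 = d.2) hm
    (fun σ hσ ht => ?_) fun D' hD' => ?_).trans
    (mul_le_mul_of_nonneg_right hD (Nat.cast_nonneg _))
  · obtain ⟨D', hD', horiented, hσD'⟩ :=
      exists_isOrientedMatching_of_le_ncard_edgesWithin (mem_perfectMatchings.mp hσ) ht
    exact ⟨D', mem_filter.mpr ⟨hD', horiented⟩, hσD'⟩
  · obtain ⟨hmem, horiented⟩ := mem_filter.mp hD'
    obtain ⟨-, rfl⟩ := mem_powersetCard.mp hmem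
    convert horiented.card_filter_mul_pow_le hcard

lemma choose_mul_pow_self_le (n s : ℕ) :
    (n.choose s : ℝ) * (s : ℝ) ^ s ≤ (n : ℝ) ^ s * Real.exp s :=
  calc (n.choose s : ℝ) * (s : ℝ) ^ s ≤ (n : ℝ) ^ s / s.factorial * (s : ℝ) ^ s :=
        mul_le_mul_of_nonneg_right (Nat.choose_le_pow_div s n) (by positivity)
    _ = (n : ℝ) ^ s * ((s : ℝ) ^ s / s.factorial) := by ring
    _ ≤ _ := mul_le_mul_of_nonneg_left
        (Real.pow_div_factorial_le_exp _ (Nat.cast_nonneg s) s) (by positivity)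

lemma choose_mul_self_le (s r t : ℕ) :
    (((s * r) * (s * r)).choose t : ℝ) ≤ (r : ℝ) ^ (2 * t) * (s : ℝ) ^ t * Real.exp s :=
  calc (((s * r) * (s * r)).choose t : ℝ)
      ≤ (((s * r) * (s * r) : ℕ) : ℝ) ^ t / t.factorial := Nat.choose_le_pow_div t _
    _ = (r : ℝ) ^ (2 * t) * (s : ℝ) ^ t * ((s : ℝ) ^ t / t.factorial) := by
        push_cast
        ring
    _ ≤ _ := mul_le_mul_of_nonneg_left
        (Real.pow_div_factorial_le_exp _ (Nat.cast_nonneg s) t) (by positivity)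

lemma pow_div_two_le_sub_two_mul_pow {x : ℝ} (hx : 0 < x) {t : ℕ} (ht : 4 * (t : ℝ) ^ 2 ≤ x) :
    x ^ t / 2 ≤ (x - 2 * t) ^ t := by
  have hsq : (t : ℝ) ≤ (t : ℝ) ^ 2 := by exact_mod_cast Nat.le_self_pow two_ne_zero t
  have hle : 2 * t / x ≤ 2 := by
    rw [div_le_iff₀ hx]
    linarith
  have hhalf : t * (2 * t / x) ≤ 1 / 2 := by
    rw [mul_div_assoc', div_le_iff₀ hx]
    linarith
  calc x ^ t / 2 ≤ x ^ t * (1 + t * -(2 * t / x)) := by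
        rw [div_eq_mul_inv]
        exact mul_le_mul_of_nonneg_left (by linarith) (by positivity)
    _ ≤ x ^ t * (1 + -(2 * t / x)) ^ t :=
        mul_le_mul_of_nonneg_left (one_add_mul_le_pow (by linarith) t) (by positivity)
    _ = (x - 2 * t) ^ t := by
        rw [← mul_pow]
        congr 1
        field_simp
        ring

lemma choose_mul_choose_mul_self_le (n s k : ℕ) (hr : 1 ≤ r) :
    (n.choose s * ((s * r) * (s * r)).choose (s + k) : ℝ) ≤
      (n : ℝ) ^ s * (r : ℝ) ^ (s + k) * ((r * Real.exp 1) ^ (2 * s) * (r * s) ^ k) := by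
  have hexp : Real.exp s = Real.exp 1 ^ s := by rw [← Real.exp_nat_mul, mul_one]
  calc (n.choose s * ((s * r) * (s * r)).choose (s + k) : ℝ)
      ≤ n.choose s * ((r : ℝ) ^ (2 * (s + k)) * (s : ℝ) ^ (s + k) * Real.exp s) :=
        mul_le_mul_of_nonneg_left (choose_mul_self_le s r (s + k)) (Nat.cast_nonneg _)
    _ = (n.choose s * (s : ℝ) ^ s) * ((r : ℝ) ^ (2 * (s + k)) * (s : ℝ) ^ k * Real.exp s) := by
        ring
    _ ≤ ((n : ℝ) ^ s * Real.exp s) * ((r : ℝ) ^ (2 * (s + k)) * (s : ℝ) ^ k * Real.exp s) :=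
        mul_le_mul_of_nonneg_right (choose_mul_pow_self_le n s) (by positivity)
    _ = (n : ℝ) ^ s * (r : ℝ) ^ (s + k) * (Real.exp 1 ^ (2 * s) * (r * s) ^ k) * r ^ s := by
        rw [hexp]
        ring
    _ ≤ (n : ℝ) ^ s * (r : ℝ) ^ (s + k) * (Real.exp 1 ^ (2 * s) * (r * s) ^ k) * r ^ (2 * s) :=
        mul_le_mul_of_nonneg_left
          (pow_le_pow_right₀ (by exact_mod_cast hr) (by omega)) (by positivity)
    _ = _ := by ring

lemma card_exists_dense_mul_card_pow_le [Fintype V] [Nonempty V] {s k : ℕ} (hr : 1 ≤ r)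
    (hcard : 4 * (s + k) ^ 2 ≤ Fintype.card V) :
    (#{σ ∈ perfectMatchings (V × Fin r) |
        ∃ U : Finset V, #U = s ∧ s + k ≤ (edgesWithin (underlyingGraph σ) U).ncard} : ℝ) *
      (Fintype.card V : ℝ) ^ k ≤
      2 * (r * Real.exp 1) ^ (2 * s) * (r * s) ^ k * #(perfectMatchings (V × Fin r)) := by
  have hcardH : Fintype.card (V × Fin r) = Fintype.card V * r := by simp
  have hle : 4 * (s + k) ^ 2 ≤ Fintype.card V * r := hcard.trans (Nat.le_mul_of_pos_right _ hr)
  have hcount := card_exists_dense_mul_pow_le (V := V) (r := r) (s := s) (t := s + k) (by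
    have := Nat.le_self_pow two_ne_zero (s + k)
    omega)
  rw [hcardH] at hcount
  set n := Fintype.card V
  set N := #{σ ∈ perfectMatchings (V × Fin r) |
    ∃ U : Finset V, #U = s ∧ s + k ≤ (edgesWithin (underlyingGraph σ) U).ncard}
  have : (0 : ℝ) < n := by exact_mod_cast Fintype.card_pos
  have : (0 : ℝ) < r := by exact_mod_cast hr
  have hpow : ((n * r : ℕ) : ℝ) ^ (s + k) / 2 ≤ (((n * r : ℕ) : ℝ) - 2 * (s + k : ℕ)) ^ (s + k) :=
    pow_div_two_le_sub_two_mul_pow (by push_cast; positivity) (by exact_mod_cast hle)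
  have hpos : (0 : ℝ) < (n : ℝ) ^ s * (r : ℝ) ^ (s + k) / 2 := by positivity
  refine le_of_mul_le_mul_left ?_ hpos
  calc (n : ℝ) ^ s * (r : ℝ) ^ (s + k) / 2 * (N * (n : ℝ) ^ k)
      = N * (((n * r : ℕ) : ℝ) ^ (s + k) / 2) := by
        push_cast
        ring
    _ ≤ n.choose s * (((s * r) * (s * r)).choose (s + k) * #(perfectMatchings (V × Fin r))) :=
        (mul_le_mul_of_nonneg_left hpow (Nat.cast_nonneg _)).trans hcount
    _ ≤ (n : ℝ) ^ s * (r : ℝ) ^ (s + k) * ((r * Real.exp 1) ^ (2 * s) * (r * s) ^ k) *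
          #(perfectMatchings (V × Fin r)) := by
        rw [← mul_assoc]
        exact mul_le_mul_of_nonneg_right (choose_mul_choose_mul_self_le n s k hr)
          (Nat.cast_nonneg _)
    _ = _ := by ring

lemma pow_mul_self_le_pow_ceil {a x : ℝ} (ha : 0 < a) (hx : 1 < x) (m : ℕ) :
    a ^ m * x ≤ x ^ (⌈m * Real.log a / Real.log x⌉₊ + 1) := by
  have hlog : 0 < Real.log x := Real.log_pos hx
  have hceil : m * Real.log a ≤ ⌈m * Real.log a / Real.log x⌉₊ * Real.log x :=
    (div_le_iff₀ hlog).mp (Nat.le_ceil _)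
  rw [pow_succ]
  refine mul_le_mul_of_nonneg_right ?_ (by linarith)
  rw [← Real.log_le_log_iff (by positivity) (by positivity), Real.log_pow, Real.log_pow]
  exact hceil

lemma natCast_ceil_two_mul_div_add_one_le {s x y : ℝ} (hs : 0 ≤ s) (hsx : s ≤ x) (hy : 0 ≤ y) :
    ((⌈2 * s * y / x⌉₊ + 1 : ℕ) : ℝ) ≤ 2 * y + 2 := by
  have hratio : 2 * s * y / x ≤ 2 * y := div_le_of_le_mul₀ (hs.trans hsx) (by positivity) (by
    linarith [mul_le_mul_of_nonneg_left hsx hy])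
  have hceil := Nat.ceil_lt_add_one (show 0 ≤ 2 * s * y / x from
    div_nonneg (by positivity) (hs.trans hsx))
  push_cast
  linarith

lemma card_exists_dense_mul_le {n s c : ℕ} (hr : 1 ≤ r) (hs : (s : ℝ) ≤ Real.log n)
    (hc : 2 * Real.log (r * Real.exp 1) + 2 ≤ c) (hcn : (c : ℝ) ≤ Real.log n)
    (hn : 16 * Real.log n ^ 2 ≤ n) :
    (#{σ ∈ perfectMatchings (Fin n × Fin r) | ∃ U : Finset (Fin n), #U = s ∧
        s + (⌈2 * (s : ℝ) * Real.log (r * Real.exp 1) / Real.log n⌉₊ + 1) ≤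
          (edgesWithin (underlyingGraph σ) U).ncard} : ℝ) * n ≤
      2 * (r * Real.log n) ^ c * #(perfectMatchings (Fin n × Fin r)) := by
  have hr' : (1 : ℝ) ≤ r := by exact_mod_cast hr
  have hre : 0 ≤ Real.log (r * Real.exp 1) :=
    Real.log_nonneg (one_le_mul_of_one_le_of_one_le hr' (Real.one_le_exp zero_le_one))
  have hlog : 1 ≤ Real.log n := by linarith
  have hn1 : (1 : ℝ) < n := by nlinarith
  have : NeZero n := ⟨by rintro rfl; norm_num at hn1⟩
  set k := ⌈2 * (s : ℝ) * Real.log (r * Real.exp 1) / Real.log n⌉₊ + 1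
  have hkc : (k : ℝ) ≤ c :=
    (natCast_ceil_two_mul_div_add_one_le (Nat.cast_nonneg s) hs hre).trans hc
  have hsq : 4 * (s + k) ^ 2 ≤ Fintype.card (Fin n) := by
    have : (s : ℝ) + k ≤ 2 * Real.log n := by linarith
    have hsq : 4 * ((s : ℝ) + k) ^ 2 ≤ n := by nlinarith [show (0 : ℝ) ≤ s + k by positivity]
    rw [Fintype.card_fin]
    exact_mod_cast hsq
  have hcount := card_exists_dense_mul_card_pow_le (V := Fin n) hr hsq
  rw [Fintype.card_fin] at hcount
  have hpos : (0 : ℝ) < (r * Real.exp 1) ^ (2 * s) := by positivity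
  have hpow : (r * Real.exp 1) ^ (2 * s) * n ≤ (n : ℝ) ^ k := by
    simpa only [Nat.cast_mul, Nat.cast_ofNat] using
      pow_mul_self_le_pow_ceil (by positivity : 0 < (r : ℝ) * Real.exp 1) hn1 (2 * s)
  have hmono : ((r : ℝ) * s) ^ k ≤ (r * Real.log n) ^ c :=
    calc ((r : ℝ) * s) ^ k ≤ (r * Real.log n) ^ k := by gcongr
      _ ≤ _ := pow_le_pow_right₀ (one_le_mul_of_one_le_of_one_le hr' hlog) (by exact_mod_cast hkc)
  refine le_of_mul_le_mul_left ?_ hpos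
  rw [mul_left_comm]
  calc _ ≤ _ := mul_le_mul_of_nonneg_left hpow (Nat.cast_nonneg _)
    _ ≤ _ := hcount
    _ ≤ 2 * (r * Real.exp 1) ^ (2 * s) * (r * Real.log n) ^ c *
          #(perfectMatchings (Fin n × Fin r)) := by gcongr
    _ = _ := by ring

theorem tendsto_matchingProb_not_propP2 (hr : 1 ≤ r) :
    Tendsto (fun n : ℕ => matchingProb fun σ : Equiv.Perm (Fin n × Fin r) =>
      ¬ PropP2 r (underlyingGraph σ)) atTop (𝓝 0) := by
  obtain ⟨c, hc⟩ := exists_nat_ge (2 * Real.log (r * Real.exp 1) + 2)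
  have hsmall : ∀ᶠ n : ℕ in atTop, 16 * Real.log n ^ 2 / n < 1 :=
    (tendsto_const_mul_log_pow_div_atTop 16 2).eventually_lt_const one_pos
  have hlog : ∀ x : ℝ, ∀ᶠ n : ℕ in atTop, x ≤ Real.log n := fun x =>
    (Real.tendsto_log_atTop.comp tendsto_natCast_atTop_atTop).eventually_ge_atTop x
  refine squeeze_zero' (.of_forall fun n => matchingProb_nonneg _) ?_
    (tendsto_const_mul_log_pow_div_atTop (4 * r ^ c) (c + 1))
  filter_upwards [hsmall, hlog c, hlog 1, eventually_gt_atTop 0] with n hn hcn h1n hn0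
  have hn' : (0 : ℝ) < n := by exact_mod_cast hn0
  refine matchingProb_le (by positivity) ?_
  have hunion := card_filter_mul_le_of_forall_exists (P := perfectMatchings (Fin n × Fin r))
    (E := fun σ => ¬ PropP2 r (underlyingGraph σ)) (s := range (⌊Real.log n⌋₊ + 1))
    (F := fun s σ => ∃ U : Finset (Fin n), #U = s ∧
        s + (⌈2 * (s : ℝ) * Real.log (r * Real.exp 1) / Real.log n⌉₊ + 1) ≤
          (edgesWithin (underlyingGraph σ) U).ncard) hn'.le (fun σ _ hσ => ?_)
    fun s hs => card_exists_dense_mul_le hr ?_ hc hcn ((div_lt_one hn').mp hn).le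
  · have hfloor : (#(range (⌊Real.log n⌋₊ + 1)) : ℝ) ≤ 2 * Real.log n := by
      have := Nat.floor_le (show 0 ≤ Real.log n by linarith)
      rw [card_range]
      push_cast
      linarith
    rw [mul_div_assoc', le_div_iff₀ hn']
    convert hunion.trans (mul_le_mul_of_nonneg_right hfloor (by positivity)) using 1
    · congr!
    · ring
  · simp only [PropP2, not_forall, not_le] at hσ
    obtain ⟨s, hs, U, hU, hlt⟩ := hσ
    exact ⟨s, mem_range_succ_iff.mpr (Nat.le_floor hs), U, hU, hlt⟩
  · exact (Nat.le_floor_iff (by linarith)).mp (mem_range_succ_iff.mp hs)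

end DenseSubgraphs

section SimpleMatchings

open Finset Matrix

variable {V : Type*} [Fintype V] {r : ℕ} {σ : Equiv.Perm (V × Fin r)}

lemma underlyingGraph_adj_iff_of_mem_simpleMatchings (hσ : σ ∈ simpleMatchings V r) {u v : V} :
    (underlyingGraph σ).Adj u v ↔ ∃ i, (σ (u, i)).1 = v := by
  obtain ⟨hσ, hgood⟩ := mem_simpleMatchings.mp hσ
  rw [hσ.underlyingGraph_adj]
  constructor
  · rintro ⟨-, ⟨_, i⟩, rfl, hi⟩
    exact ⟨i, hi⟩
  · rintro ⟨i, hi⟩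
    exact ⟨fun huv => hgood (u, i) (.inl (hi.trans huv.symm)), (u, i), rfl, hi⟩

lemma injective_fst_apply_of_mem_simpleMatchings (hσ : σ ∈ simpleMatchings V r) (u : V) :
    Function.Injective fun i => (σ (u, i)).1 := fun i j heq => by
  by_contra hne
  exact (mem_simpleMatchings.mp hσ).2 (u, j)
    (.inr ⟨(u, i), fun h => hne (congrArg Prod.snd h), rfl, heq⟩)

lemma adjacency_eq_adjMatrix [DecidableEq V] (hσ : σ ∈ simpleMatchings V r) :
    adjacency σ = (underlyingGraph σ).adjMatrix ℝ := by
  ext u v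
  rw [adjacency_apply, SimpleGraph.adjMatrix_apply]
  split_ifs with hadj
  · obtain ⟨i, rfl⟩ := (underlyingGraph_adj_iff_of_mem_simpleMatchings hσ).mp hadj
    have hunique : ({j | (σ (u, j)).1 = (σ (u, i)).1} : Finset (Fin r)) = {i} := by
      ext j
      simp [(injective_fst_apply_of_mem_simpleMatchings hσ u).eq_iff]
    rw [hunique, card_singleton, Nat.cast_one]
  · rw [underlyingGraph_adj_iff_of_mem_simpleMatchings hσ, not_exists] at hadj
    rw [filter_eq_empty_iff.mpr fun i _ => hadj i, card_empty, Nat.cast_zero]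

lemma hasNonconstantEigenvector_of_mem_spectrum [DecidableEq V] {A : Matrix V V ℝ} {d μ : ℝ}
    (hrow : ∀ u, ∑ v, A u v = d) (hμ : μ ∈ spectrum ℝ A) (hμd : μ ≠ d) :
    HasNonconstantEigenvector A μ := by
  obtain ⟨f, hf0, hf⟩ := mem_spectrum_iff_exists_mulVec_eq_smul.mp hμ
  refine ⟨μ, le_rfl, f, hf, ?_⟩
  by_contra! hconst
  obtain ⟨u, hu⟩ := Function.ne_iff.mp hf0
  refine hμd (mul_right_cancel₀ hu ?_)
  calc μ * f u = ∑ v, A u v * f v := (congrFun hf u).symm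
    _ = (∑ v, A u v) * f u := by simp only [hconst _ u, sum_mul]
    _ = d * f u := by rw [hrow]

lemma hasNonconstantEigenvector_of_not_preconnected {G : SimpleGraph V} {d : ℝ}
    (hrow : ∀ u, ∑ v, G.adjMatrix ℝ u v = d) (hG : ¬ G.Preconnected) :
    HasNonconstantEigenvector (G.adjMatrix ℝ) d := by
  simp only [SimpleGraph.Preconnected, not_forall] at hG
  obtain ⟨u, v, huv⟩ := hG
  refine ⟨d, le_rfl, fun w => if G.Reachable u w then 1 else 0, ?_, u, v, ?_⟩
  · ext w
    rw [mulVec, dotProduct, Pi.smul_apply, smul_eq_mul, ← hrow w, sum_mul]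
    refine sum_congr rfl fun x _ => ?_
    by_cases hadj : G.Adj w x
    · have hreach : G.Reachable u w ↔ G.Reachable u x :=
        ⟨fun h => h.trans hadj.reachable, fun h => h.trans hadj.symm.reachable⟩
      simp only [hreach]
    · rw [SimpleGraph.adjMatrix_apply, if_neg hadj, zero_mul, zero_mul]
  · simp [huv]

lemma HasNonconstantEigenvector.mono {A : Matrix V V ℝ} {b b' : ℝ}
    (h : HasNonconstantEigenvector A b') (hb : b ≤ b') : HasNonconstantEigenvector A b := by
  obtain ⟨μ, hμ, hex⟩ := h
  exact ⟨μ, hb.trans hμ, hex⟩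

lemma hasNonconstantEigenvector_of_not_propP1 {n : ℕ} [NeZero n] {ε : ℝ} (hε : 0 ≤ ε)
    {σ : Equiv.Perm (Fin n × Fin r)} (hσ : σ ∈ simpleMatchings (Fin n) r)
    (hP1 : ¬ PropP1 r ε (underlyingGraph σ)) :
    HasNonconstantEigenvector (adjacency σ) (min (2 * √((r : ℝ) - 1) + ε) r) := by
  have hrow := sum_adjacency σ
  rw [adjacency_eq_adjMatrix hσ] at hrow ⊢
  by_cases hconn : (underlyingGraph σ).Preconnected
  · have hsup := fun hle => hP1 ⟨⟨hconn⟩, hle⟩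
    have hex : ∃ μ ∈ spectrum ℝ ((underlyingGraph σ).adjMatrix ℝ), μ ≠ r ∧
        2 * √((r : ℝ) - 1) + ε < μ := by
      by_contra! hle
      exact hsup (Real.sSup_le (fun μ hμ => hle μ hμ.1 hμ.2) (by positivity))
    obtain ⟨μ, hμ, hμr, hlt⟩ := hex
    exact (hasNonconstantEigenvector_of_mem_spectrum hrow hμ hμr).mono
      ((min_le_left _ _).trans hlt.le)
  · exact (hasNonconstantEigenvector_of_not_preconnected hrow hconn).mono (min_le_right _ _)

end SimpleMatchings

section Labelings

open Finset

variable {V : Type*} {r : ℕ} {G : SimpleGraph V}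

/-- The matching of half-edges given by labelling the neighbours of every vertex of an `r`-regular
graph `G`: the half-edge `(v, i)` is the end at `v` of the edge joining `v` to its `i`-th
neighbour. -/
noncomputable def matchingOfLabeling (e : ∀ v, Fin r ≃ G.neighborSet v) :
    Equiv.Perm (V × Fin r) :=
  Function.Involutive.toPerm
    (fun h => ((e h.1 h.2).1, (e (e h.1 h.2).1).symm ⟨h.1, (e h.1 h.2).2.symm⟩)) (by
      rintro ⟨v, i⟩
      have hlabel (u : V) (hu : u = v) (hadj : G.Adj u (e v i).1) :
          (e u).symm ⟨(e v i).1, hadj⟩ = i := by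
        subst hu
        exact (e u).symm_apply_apply i
      exact Prod.ext (by simp) (hlabel _ (by simp) _))

lemma matchingOfLabeling_apply (e : ∀ v, Fin r ≃ G.neighborSet v) (v : V) (i : Fin r) :
    matchingOfLabeling e (v, i) = ((e v i).1, (e (e v i).1).symm ⟨v, (e v i).2.symm⟩) :=
  rfl

lemma matchingOfLabeling_injective :
    Function.Injective (matchingOfLabeling (r := r) (G := G)) := fun e e' heq => by
  ext v i
  exact congrArg (fun σ : Equiv.Perm (V × Fin r) => (σ (v, i)).1) heq

lemma fst_matchingOfLabeling_ne (e : ∀ v, Fin r ≃ G.neighborSet v) (h : V × Fin r) :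
    (matchingOfLabeling e h).1 ≠ h.1 :=
  (e h.1 h.2).2.ne'

lemma isPerfectMatching_matchingOfLabeling (e : ∀ v, Fin r ≃ G.neighborSet v) :
    IsPerfectMatching (matchingOfLabeling e) :=
  ⟨fun h heq => fst_matchingOfLabeling_ne e h (congrArg Prod.fst heq),
    Function.Involutive.toPerm_involutive _⟩

lemma underlyingGraph_matchingOfLabeling (e : ∀ v, Fin r ≃ G.neighborSet v) :
    underlyingGraph (matchingOfLabeling e) = G := by
  ext u v
  rw [(isPerfectMatching_matchingOfLabeling e).underlyingGraph_adj]
  constructor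
  · rintro ⟨-, ⟨_, i⟩, rfl, rfl⟩
    exact (e _ i).2
  · intro hadj
    exact ⟨hadj.ne, (u, (e u).symm ⟨v, hadj⟩), rfl, by simp [matchingOfLabeling_apply]⟩

variable [Fintype V]

lemma matchingOfLabeling_mem_simpleMatchings (e : ∀ v, Fin r ≃ G.neighborSet v) :
    matchingOfLabeling e ∈ simpleMatchings V r := by
  refine mem_simpleMatchings.mpr ⟨isPerfectMatching_matchingOfLabeling e, ?_⟩
  rintro ⟨v, i⟩ (hloop | ⟨⟨_, j⟩, hji, rfl, hjoin⟩)
  · exact fst_matchingOfLabeling_ne e _ hloop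
  · exact hji (Prod.ext rfl ((e _).injective (Subtype.ext hjoin)))

lemma exists_matchingOfLabeling_eq {σ : Equiv.Perm (V × Fin r)} (hσ : σ ∈ simpleMatchings V r) :
    ∃ e : ∀ v, Fin r ≃ (underlyingGraph σ).neighborSet v, matchingOfLabeling e = σ := by
  have hadj {u v : V} := underlyingGraph_adj_iff_of_mem_simpleMatchings hσ (u := u) (v := v)
  refine ⟨fun v => Equiv.ofBijective (fun i => ⟨(σ (v, i)).1, hadj.mpr ⟨i, rfl⟩⟩) ⟨?_, ?_⟩, ?_⟩
  · exact fun i j heq =>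
      injective_fst_apply_of_mem_simpleMatchings hσ v (congrArg Subtype.val heq)
  · rintro ⟨w, hw⟩
    obtain ⟨i, rfl⟩ := hadj.mp hw
    exact ⟨i, rfl⟩
  · ext1 ⟨v, i⟩
    refine Prod.ext rfl ((Equiv.symm_apply_eq _).mpr (Subtype.ext ?_))
    change v = (σ (σ (v, i))).1
    rw [(mem_simpleMatchings.mp hσ).1.apply_apply]

lemma ncard_neighborSet_underlyingGraph {σ : Equiv.Perm (V × Fin r)}
    (hσ : σ ∈ simpleMatchings V r) (v : V) : ((underlyingGraph σ).neighborSet v).ncard = r := by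
  obtain ⟨e, -⟩ := exists_matchingOfLabeling_eq hσ
  rw [← Nat.card_coe_set_eq, ← Nat.card_congr (e v), Nat.card_fin]

lemma card_filter_underlyingGraph_eq (hG : ∀ v, (G.neighborSet v).ncard = r) :
    #{σ ∈ simpleMatchings V r | underlyingGraph σ = G} = r.factorial ^ Fintype.card V := by
  have hcard (v : V) : Fintype.card (G.neighborSet v) = r := by
    rw [← hG v, ← Nat.card_eq_fintype_card, Nat.card_coe_set_eq]
  have hequiv (v : V) : Fintype.card (Fin r ≃ G.neighborSet v) = r.factorial := by
    rw [Fintype.card_equiv (Fintype.equivFinOfCardEq (hcard v)).symm, Fintype.card_fin]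
  have himage : {σ ∈ simpleMatchings V r | underlyingGraph σ = G} =
      univ.map ⟨matchingOfLabeling (r := r) (G := G), matchingOfLabeling_injective⟩ := by
    ext σ
    simp only [mem_filter, mem_map, mem_univ, true_and, Function.Embedding.coeFn_mk]
    constructor
    · rintro ⟨hσ, rfl⟩
      exact exists_matchingOfLabeling_eq hσ
    · rintro ⟨e, rfl⟩
      exact ⟨matchingOfLabeling_mem_simpleMatchings e, underlyingGraph_matchingOfLabeling e⟩
  rw [himage, card_map, card_univ, Fintype.card_pi, prod_congr rfl fun v _ => hequiv v, prod_const,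
    card_univ]

lemma card_filter_simpleMatchings_eq (Q : SimpleGraph V → Prop) :
    #{σ ∈ simpleMatchings V r | Q (underlyingGraph σ)} = r.factorial ^ Fintype.card V *
      {G : SimpleGraph V | (∀ v, (G.neighborSet v).ncard = r) ∧ Q G}.ncard := by
  let regular : Finset (SimpleGraph V) := {G | (∀ v, (G.neighborSet v).ncard = r) ∧ Q G}
  have hmaps : ∀ σ ∈ ({σ ∈ simpleMatchings V r | Q (underlyingGraph σ)} : Finset _),
      underlyingGraph σ ∈ regular := fun σ hσ => by
    obtain ⟨hσ, hQ⟩ := mem_filter.mp hσ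
    exact (mem_filter_univ _).mpr ⟨ncard_neighborSet_underlyingGraph hσ, hQ⟩
  have hncard : {G : SimpleGraph V | (∀ v, (G.neighborSet v).ncard = r) ∧ Q G}.ncard =
      #regular := by
    rw [← Set.ncard_coe_finset, coe_filter_univ]
  rw [card_eq_sum_card_fiberwise hmaps, hncard, mul_comm]
  refine sum_const_nat fun G hG => ?_
  obtain ⟨hreg, hQ⟩ := (mem_filter_univ G).mp hG
  rw [← card_filter_underlyingGraph_eq hreg, filter_filter]
  congr! 2 with σ
  exact and_iff_right_of_imp fun h => h ▸ hQ

end Labelings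

section Contiguity

open Finset Filter Topology

lemma matchingProb_mem_simpleMatchings_and {V : Type*} [Fintype V] {r : ℕ}
    (E : Equiv.Perm (V × Fin r) → Prop) [DecidablePred E] :
    matchingProb (fun σ => σ ∈ simpleMatchings V r ∧ E σ) =
      #{σ ∈ simpleMatchings V r | E σ} / #(perfectMatchings (V × Fin r)) := by
  rw [matchingProb]
  congr 3
  ext σ
  simp only [mem_filter, mem_perfectMatchings, mem_simpleMatchings]
  tauto

lemma ncard_div_ncard_eq_card_filter_div_card {V : Type*} [Fintype V] {r : ℕ}
    (Q : SimpleGraph V → Prop) :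
    ({G : SimpleGraph V | (∀ v, (G.neighborSet v).ncard = r) ∧ Q G}.ncard : ℝ) /
        {G : SimpleGraph V | ∀ v, (G.neighborSet v).ncard = r}.ncard =
      #{σ ∈ simpleMatchings V r | Q (underlyingGraph σ)} / #(simpleMatchings V r) := by
  have hall := card_filter_simpleMatchings_eq (V := V) (r := r) fun _ => True
  simp only [filter_true, and_true] at hall
  rw [card_filter_simpleMatchings_eq, hall, Nat.cast_mul, Nat.cast_mul,
    mul_div_mul_left _ _ (by positivity)]

lemma one_sub_mul_matchingProb_le_ncard_div_ncard {V : Type*} [Fintype V] {r C : ℕ}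
    (heven : Even (Fintype.card V * r))
    (hC : #(perfectMatchings (V × Fin r)) ≤ C * #(simpleMatchings V r))
    (Q : SimpleGraph V → Prop) :
    1 - C * matchingProb (fun σ => σ ∈ simpleMatchings V r ∧ ¬ Q (underlyingGraph σ)) ≤
      ({G : SimpleGraph V | (∀ v, (G.neighborSet v).ncard = r) ∧ Q G}.ncard : ℝ) /
        {G : SimpleGraph V | ∀ v, (G.neighborSet v).ncard = r}.ncard := by
  have hperfect : 0 < #(perfectMatchings (V × Fin r)) :=
    card_pos.mpr (perfectMatchings_nonempty (by simpa using heven))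
  have hsimple : 0 < #(simpleMatchings V r) := Nat.pos_of_mul_pos_left (hperfect.trans_le hC)
  have hsplit : (#{σ ∈ simpleMatchings V r | Q (underlyingGraph σ)} : ℝ) +
      #{σ ∈ simpleMatchings V r | ¬ Q (underlyingGraph σ)} = #(simpleMatchings V r) := by
    exact_mod_cast card_filter_add_card_filter_not _
  rw [ncard_div_ncard_eq_card_filter_div_card, matchingProb_mem_simpleMatchings_and,
    sub_le_iff_le_add]
  calc (1 : ℝ)
    _ = #{σ ∈ simpleMatchings V r | Q (underlyingGraph σ)} / #(simpleMatchings V r) +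
        #{σ ∈ simpleMatchings V r | ¬ Q (underlyingGraph σ)} / #(simpleMatchings V r) := by
      rw [← add_div, hsplit, div_self (by positivity)]
    _ ≤ #{σ ∈ simpleMatchings V r | Q (underlyingGraph σ)} / #(simpleMatchings V r) +
        C * (#{σ ∈ simpleMatchings V r | ¬ Q (underlyingGraph σ)} /
          #(perfectMatchings (V × Fin r))) := by
      gcongr
      rw [← mul_div_assoc, div_le_div_iff₀ (by positivity) (by positivity), mul_right_comm,
        mul_comm]
      gcongr
      exact_mod_cast hC

theorem tendsto_ncard_div_ncard_of_tendsto_matchingProb {r : ℕ} (hr : 1 ≤ r)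
    {Q : ∀ n, SimpleGraph (Fin n) → Prop}
    (hQ : Tendsto (fun n => matchingProb fun σ : Equiv.Perm (Fin n × Fin r) =>
      σ ∈ simpleMatchings (Fin n) r ∧ ¬ Q n (underlyingGraph σ)) atTop (𝓝 0)) :
    Tendsto (fun n : ℕ =>
        ({G : SimpleGraph (Fin n) | (∀ v, (G.neighborSet v).ncard = r) ∧ Q n G}.ncard : ℝ) /
          {G : SimpleGraph (Fin n) | ∀ v, (G.neighborSet v).ncard = r}.ncard)
      (atTop ⊓ 𝓟 {n : ℕ | Even (r * n)}) (𝓝 1) := by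
  obtain ⟨C, hC⟩ := exists_card_perfectMatchings_le_mul_card_simpleMatchings hr
  have hlower := (hQ.const_mul (C : ℝ)).const_sub 1
  rw [mul_zero, sub_zero] at hlower
  refine tendsto_of_tendsto_of_tendsto_of_le_of_le' (hlower.mono_left inf_le_left)
    tendsto_const_nhds ?_ (.of_forall fun n => ?_)
  · rw [eventually_inf_principal]
    filter_upwards [hC] with n hC heven
    exact one_sub_mul_matchingProb_le_ncard_div_ncard
      (by simpa [mul_comm] using heven) hC (Q n)
  · refine div_le_one_of_le₀ ?_ (Nat.cast_nonneg _)
    exact_mod_cast Set.ncard_le_ncard (Set.ofPred_subset_ofPred.mpr fun _ => And.left)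

theorem tendsto_matchingProb_not_propP1_or_not_propP2 {r : ℕ} (hr : 3 ≤ r) {ε : ℝ} (hε : 0 < ε) :
    Tendsto (fun n => matchingProb fun σ : Equiv.Perm (Fin n × Fin r) =>
      σ ∈ simpleMatchings (Fin n) r ∧
        ¬ (PropP1 r ε (underlyingGraph σ) ∧ PropP2 r (underlyingGraph σ))) atTop (𝓝 0) := by
  have hgap : 2 * √((r : ℝ) - 1) < min (2 * √((r : ℝ) - 1) + ε) r :=
    lt_min (lt_add_of_pos_right _ hε) (two_mul_sqrt_sub_one_lt (by exact_mod_cast hr))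
  have hspectral := tendsto_matchingProb_hasNonconstantEigenvector hr hgap (min_le_right _ _)
  have hdense := tendsto_matchingProb_not_propP2 (r := r) (by lia)
  refine squeeze_zero' (.of_forall fun n => matchingProb_nonneg _) ?_
    (by simpa using hspectral.add hdense)
  filter_upwards [eventually_ne_atTop 0] with n hn
  have : NeZero n := ⟨hn⟩
  refine matchingProb_le_add fun σ ⟨hσ, hbad⟩ => (not_and_or.mp hbad).imp_left fun hP1 => ?_
  exact hasNonconstantEigenvector_of_not_propP1 hε.le hσ hP1

end Contiguity

end RandomRegular

theorem stmt8_general (r : ℕ) (hr : 3 ≤ r) (ε : ℝ) (hε : 0 < ε) :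
    Filter.Tendsto (fun n : ℕ =>
        (Set.ncard {G : SimpleGraph (Fin n) |
            (∀ x, (G.neighborSet x).ncard = r) ∧ PropP1 r ε G ∧ PropP2 r G} : ℝ) /
          (Set.ncard {G : SimpleGraph (Fin n) | ∀ x, (G.neighborSet x).ncard = r} : ℝ))
      (Filter.atTop ⊓ Filter.principal {n : ℕ | Even (r * n)}) (nhds 1) :=
  RandomRegular.tendsto_ncard_div_ncard_of_tendsto_matchingProb (by lia)
    (RandomRegular.tendsto_matchingProb_not_propP1_or_not_propP2 hr hε)

/-- Fix an integer `r ≥ 4` and `ε > 0`.  Among the simple `r`-regular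
graphs on vertex set `{1,…,n}` (for `rn` even), the proportion of graphs satisfying both
(P1) and (P2) tends to `1` as `n → ∞`. -/
theorem stmt8 (r : ℕ) (hr : 4 ≤ r) (ε : ℝ) (hε : 0 < ε) :
    Filter.Tendsto (fun n : ℕ =>
        (Set.ncard {G : SimpleGraph (Fin n) |
            (∀ x, (G.neighborSet x).ncard = r) ∧ PropP1 r ε G ∧ PropP2 r G} : ℝ) /
          (Set.ncard {G : SimpleGraph (Fin n) | ∀ x, (G.neighborSet x).ncard = r} : ℝ))
      (Filter.atTop ⊓ Filter.principal {n : ℕ | Even (r * n)}) (nhds 1) :=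
  stmt8_general r (by lia) ε hε
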